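/- arXiv:2004.03542 — 7 statements merged into one kernel-verified Lean document; each statement's English description precedes it below -/
import Mathlib

section
/- For every s ∈ (0,1), the function t ↦ G(t,s) is differentiable (one-sidedly) at t = 0 and at t = 1, and its derivative vanishes at both points: ∂G/∂t(0,s) = 0 and ∂G/∂t(1,s) = 0. -/
/-!
Both derivatives come from differentiating the kernel term by term. The powers `t ^ (α + 1)` and
`t ^ (α + 2)` have exponents above `1`, so they are differentiable everywhere, in particular
at `0`, where their derivatives vanish. The truncated power `(t - s) ^ (α + β - 1) · 1_{s ≤ t}`
is zero near `t = 0` because `0 < s`, and is the plain power near `t = 1` because `s < 1`. At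
`t = 1` the `(1 - s) ^ (α + β - 1)` terms cancel since `(α + 1)(α + 2) = (α + 2)(α + 1)`, and the
derivative `(α + β - 1)(1 - s) ^ (α + β - 2)` of the truncated power cancels the last term.
-/

open Set intervalIntegral

noncomputable def GreenG (α β : ℝ) (t s : ℝ) : ℝ :=
  (1 / Real.Gamma (α + β)) *
    ((if s ≤ t then (t - s) ^ (α + β - 1) else 0)
      + ((α + 1) * t ^ (α + 2) - (α + 2) * t ^ (α + 1)) * (1 - s) ^ (α + β - 1)
      + (α + β - 1) * (t ^ (α + 1) - t ^ (α + 2)) * (1 - s) ^ (α + β - 2))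

noncomputable def GreenH (α γ : ℝ) (t s : ℝ) : ℝ :=
  (γ / Real.Gamma α) *
    (-(if s ≤ t then (t - s) ^ (α - 1) else 0)
      + ((α + 2) * t ^ (α + 1) - (α + 1) * t ^ (α + 2)) * (1 - s) ^ (α - 1)
      + (α - 1) * (t ^ (α + 2) - t ^ (α + 1)) * (1 - s) ^ (α - 2))

/-- Term-by-term derivative of the kernel in `t`, given the derivative `d` of its truncated
power. -/
lemma hasDerivAt_GreenG {α β s t d : ℝ} (hα0 : 0 < α)
    (hd : HasDerivAt (fun t : ℝ => if s ≤ t then (t - s) ^ (α + β - 1) else 0) d t) :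
    HasDerivAt (fun t => GreenG α β t s)
      ((1 / Real.Gamma (α + β)) *
        (d + ((α + 1) * ((α + 2) * t ^ (α + 1)) - (α + 2) * ((α + 1) * t ^ α))
              * (1 - s) ^ (α + β - 1)
          + (α + β - 1) * ((α + 1) * t ^ α - (α + 2) * t ^ (α + 1)) * (1 - s) ^ (α + β - 2))) t := by
  have h1 : HasDerivAt (fun t : ℝ => t ^ (α + 1)) ((α + 1) * t ^ α) t := by
    simpa using Real.hasDerivAt_rpow_const (x := t) (p := α + 1) (Or.inr (by linarith))
  have h2 : HasDerivAt (fun t : ℝ => t ^ (α + 2)) ((α + 2) * t ^ (α + 1)) t := by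
    have h := Real.hasDerivAt_rpow_const (x := t) (p := α + 2) (Or.inr (by linarith))
    rwa [show α + 2 - 1 = α + 1 by ring] at h
  exact ((hd.add (((h2.const_mul (α + 1)).sub (h1.const_mul (α + 2))).mul_const _)).add
    (((h1.sub h2).const_mul (α + β - 1)).mul_const _)).const_mul _

theorem green_G_deriv_vanishes_at_endpoints (α β : ℝ) (hα0 : 0 < α) (hα1 : α ≤ 1)
    (hβ2 : 2 < β) (hβ3 : β ≤ 3) :
    ∀ s ∈ Set.Ioo (0:ℝ) 1,
      HasDerivWithinAt (fun t => GreenG α β t s) 0 (Set.Icc (0:ℝ) 1) 0 ∧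
      HasDerivWithinAt (fun t => GreenG α β t s) 0 (Set.Icc (0:ℝ) 1) 1 := by
  rintro s ⟨hs0, hs1⟩
  constructor
  · have hd : HasDerivAt (fun t : ℝ => if s ≤ t then (t - s) ^ (α + β - 1) else 0) 0 0 := by
      refine (hasDerivAt_const (0 : ℝ) (0 : ℝ)).congr_of_eventuallyEq ?_
      filter_upwards [Iio_mem_nhds hs0] with t ht
      exact if_neg (not_le.mpr ht)
    refine ((hasDerivAt_GreenG hα0 hd).congr_deriv ?_).hasDerivWithinAt
    rw [Real.zero_rpow hα0.ne', Real.zero_rpow (by linarith)]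
    ring
  · have hd : HasDerivAt (fun t : ℝ => if s ≤ t then (t - s) ^ (α + β - 1) else 0)
        ((α + β - 1) * (1 - s) ^ (α + β - 2)) 1 := by
      have h := ((hasDerivAt_id (1 : ℝ)).sub_const s).rpow_const (p := α + β - 1)
        (Or.inr (by linarith))
      rw [one_mul, show α + β - 1 - 1 = α + β - 2 by ring] at h
      refine h.congr_of_eventuallyEq ?_
      filter_upwards [Ioi_mem_nhds hs1] with t ht
      exact if_pos (le_of_lt ht)
    refine ((hasDerivAt_GreenG hα0 hd).congr_deriv ?_).hasDerivWithinAt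
    rw [Real.one_rpow, Real.one_rpow]
    ring
end

section
/- For every s ∈ (0,1), the function t ↦ H(t,s) is differentiable (one-sidedly) at t = 0 and at t = 1, and its derivative vanishes at both points: ∂H/∂t(0,s) = 0 and ∂H/∂t(1,s) = 0. -/
/-!
Near `t = 0` the singular term `(t - s) ^ (α - 1)` is switched off, and `t ^ (α + 1)`, `t ^ (α + 2)`
have derivative `0` at `0` because their exponents exceed `1`. At `t = 1` the derivatives of the
two powers are `α + 1` and `α + 2`, so the coefficient of `(1 - s) ^ (α - 1)` is
`(α + 2) (α + 1) - (α + 1) (α + 2) = 0`, while the coefficient of `(1 - s) ^ (α - 2)` is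
`-(α - 1) + (α - 1) = 0`.
-/

open Set intervalIntegral

theorem green_H_deriv_vanishes_at_endpoints (α γ : ℝ) (hα0 : 0 < α) (hα1 : α ≤ 1) :
    ∀ s ∈ Set.Ioo (0:ℝ) 1,
      HasDerivWithinAt (fun t => GreenH α γ t s) 0 (Set.Icc (0:ℝ) 1) 0 ∧
      HasDerivWithinAt (fun t => GreenH α γ t s) 0 (Set.Icc (0:ℝ) 1) 1 := by
  rintro s ⟨hs0, hs1⟩
  have h1s : 0 < 1 - s := sub_pos.mpr hs1
  constructor
  · have hp : HasDerivAt (fun t : ℝ => t ^ (α + 1)) 0 0 := by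
      have h := Real.hasDerivAt_rpow_const (x := 0) (p := α + 1) (Or.inr (by linarith))
      rwa [add_sub_cancel_right, Real.zero_rpow hα0.ne', mul_zero] at h
    have hq : HasDerivAt (fun t : ℝ => t ^ (α + 2)) 0 0 := by
      have h := Real.hasDerivAt_rpow_const (x := 0) (p := α + 2) (Or.inr (by linarith))
      rwa [Real.zero_rpow (by linarith : 0 < α + 2 - 1).ne', mul_zero] at h
    -- The singular term vanishes for `t < s`, a neighbourhood of `0`.
    have hk : HasDerivAt (fun t : ℝ => if s ≤ t then (t - s) ^ (α - 1) else 0) 0 0 := by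
      refine (hasDerivAt_const (0 : ℝ) (0 : ℝ)).congr_of_eventuallyEq ?_
      filter_upwards [Iio_mem_nhds hs0] with t ht
      exact if_neg (not_le.mpr ht)
    have h := (((hk.neg.add (((hp.const_mul (α + 2)).sub (hq.const_mul (α + 1))).mul_const
      ((1 - s) ^ (α - 1)))).add (((hq.sub hp).const_mul (α - 1)).mul_const
      ((1 - s) ^ (α - 2)))).const_mul (γ / Real.Gamma α))
    refine (h.congr_deriv ?_).hasDerivWithinAt
    ring
  · have hp : HasDerivAt (fun t : ℝ => t ^ (α + 1)) (α + 1) 1 := by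
      simpa using Real.hasDerivAt_rpow_const (x := 1) (p := α + 1) (Or.inl one_ne_zero)
    have hq : HasDerivAt (fun t : ℝ => t ^ (α + 2)) (α + 2) 1 := by
      simpa using Real.hasDerivAt_rpow_const (x := 1) (p := α + 2) (Or.inl one_ne_zero)
    -- Near `t = 1` the indicator is `1` and the base `t - s` is positive.
    have hk : HasDerivAt (fun t : ℝ => if s ≤ t then (t - s) ^ (α - 1) else 0)
        ((α - 1) * (1 - s) ^ (α - 2)) 1 := by
      have h := ((hasDerivAt_id (1 : ℝ)).sub_const s).rpow_const (p := α - 1) (Or.inl h1s.ne')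
      have h' : HasDerivAt (fun t : ℝ => (t - s) ^ (α - 1)) ((α - 1) * (1 - s) ^ (α - 2)) 1 := by
        refine h.congr_deriv ?_
        rw [show α - 1 - 1 = α - 2 by ring, id, one_mul]
      refine h'.congr_of_eventuallyEq ?_
      filter_upwards [Ioi_mem_nhds hs1] with t ht
      exact if_pos (le_of_lt ht)
    have h := (((hk.neg.add (((hp.const_mul (α + 2)).sub (hq.const_mul (α + 1))).mul_const
      ((1 - s) ^ (α - 1)))).add (((hq.sub hp).const_mul (α - 1)).mul_const
      ((1 - s) ^ (α - 2)))).const_mul (γ / Real.Gamma α))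
    refine (h.congr_deriv ?_).hasDerivWithinAt
    ring
end

section
/- Let y : [0,1] → ℝ be continuous and x : [0,1] → ℝ be continuously differentiable with x(1) = 0. Set A = (1/Γ(α+β))∫₀¹(1−s)^{α+β−1}y(s)ds, B = (1/Γ(α))∫₀¹(1−s)^{α−1}x(s)ds, C = (1/Γ(α+β−1))∫₀¹(1−s)^{α+β−2}y(s)ds, D = ((α−1)/Γ(α))∫₀¹(1−s)^{α−2}x(s)ds, and c₁ = Γ(α+2)·C − Γ(α+3)·A + γ·Γ(α+3)·B − γ·Γ(α+2)·D, c₂ = (Γ(α+3)/2)·((α+1)·A − C + γ·D − γ·(α+1)·B). Then for every t ∈ [0,1]: (1/Γ(α+β))∫₀ᵗ(t−s)^{α+β−1}y(s)ds − (γ/Γ(α))∫₀ᵗ(t−s)^{α−1}x(s)ds + c₁·t^{α+1}/Γ(α+2) + 2c₂·t^{α+2}/Γ(α+3) = ∫₀¹ G(t,s)·y(s) ds + ∫₀¹ H(t,s)·x(s) ds. -/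
/-!
The identity is linearity of the integral once every term of the kernels is known to be integrable
against `y` or `x`. The terms `(t - s) ^ p` with `p > -1` are integrable singularities multiplied by
a continuous function (`intervalIntegrable_sub_rpow_mul`), and the truncated term integrates over
`[0, 1]` to the integral over `[0, t]` (`truncated_rpow_mul`). The only delicate term is
`(1 - s) ^ (α - 2) * x s`: since `x 1 = 0` and `x` is Lipschitz, it is dominated by a multiple of
`(1 - s) ^ (α - 1)` (`intervalIntegrable_one_sub_rpow_mul`). The coefficients then agree by the
functional equation `Γ (z + 1) = z Γ z` at `z = α + 2` and `z = α + β - 1`.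
-/

lemma intervalIntegrable_sub_rpow_mul {p t : ℝ} (hp : -1 < p) (ht : 0 ≤ t) {f : ℝ → ℝ}
    (hf : ContinuousOn f (Set.Icc 0 t)) :
    IntervalIntegrable (fun s => (t - s) ^ p * f s) MeasureTheory.volume 0 t := by
  have h := (intervalIntegral.intervalIntegrable_rpow' (a := t) (b := 0) hp).comp_sub_left t
  simp only [sub_self, sub_zero] at h
  exact h.mul_continuousOn (by rwa [Set.uIcc_of_le ht])

lemma truncated_rpow_mul {p t : ℝ} (hp : -1 < p) (ht : t ∈ Set.Icc (0:ℝ) 1) {f : ℝ → ℝ}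
    (hf : ContinuousOn f (Set.Icc 0 1)) :
    IntervalIntegrable (fun s => (if s ≤ t then (t - s) ^ p else 0) * f s)
        MeasureTheory.volume 0 1 ∧
      ∫ s in (0:ℝ)..1, (if s ≤ t then (t - s) ^ p else 0) * f s
        = ∫ s in (0:ℝ)..t, (t - s) ^ p * f s := by
  have h1 : Set.EqOn (fun s => (t - s) ^ p * f s)
      (fun s => (if s ≤ t then (t - s) ^ p else 0) * f s) (Set.uIoc 0 t) := by
    intro s hs
    rw [Set.uIoc_of_le ht.1] at hs
    simp [hs.2]
  have h2 : Set.EqOn (fun _ => (0:ℝ))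
      (fun s => (if s ≤ t then (t - s) ^ p else 0) * f s) (Set.uIoc t 1) := by
    intro s hs
    rw [Set.uIoc_of_le ht.2] at hs
    simp [not_le.mpr hs.1]
  have i1 := (intervalIntegrable_sub_rpow_mul hp ht.1
    (hf.mono (Set.Icc_subset_Icc_right ht.2))).congr h1
  have i2 := (intervalIntegrable_const (μ := MeasureTheory.volume) (a := t) (b := 1)
    (c := (0:ℝ))).congr h2
  refine ⟨i1.trans i2, ?_⟩
  rw [← intervalIntegral.integral_add_adjacent_intervals i1 i2,
    ← intervalIntegral.integral_congr_ae (.of_forall fun s hs => h1 hs),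
    ← intervalIntegral.integral_congr_ae (.of_forall fun s hs => h2 hs)]
  simp

/-- The vanishing of `x` at `1` gains one power of `1 - s`, which makes the exponent `α - 2`
integrable for every `α > 0`. -/
lemma intervalIntegrable_one_sub_rpow_mul {α : ℝ} (hα0 : 0 < α) {x x' : ℝ → ℝ}
    (hx : ∀ t ∈ Set.Icc (0:ℝ) 1, HasDerivWithinAt x (x' t) (Set.Icc (0:ℝ) 1) t)
    (hx'c : ContinuousOn x' (Set.Icc 0 1)) (hx1 : x 1 = 0) :
    IntervalIntegrable (fun s => (1 - s) ^ (α - 2) * x s) MeasureTheory.volume 0 1 := by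
  obtain ⟨M, hM⟩ := isCompact_Icc.exists_bound_of_continuousOn hx'c
  have hbound : ∀ s ∈ Set.Icc (0:ℝ) 1, |x s| ≤ M * (1 - s) := by
    intro s hs
    have h := (convex_Icc (0:ℝ) 1).norm_image_sub_le_of_norm_hasDerivWithin_le hx hM hs
      (Set.right_mem_Icc.mpr zero_le_one)
    rwa [hx1, zero_sub, norm_neg, Real.norm_eq_abs, Real.norm_eq_abs,
      abs_of_nonneg (sub_nonneg.mpr hs.2)] at h
  have hxc : ContinuousOn x (Set.Icc 0 1) := fun t ht => (hx t ht).continuousWithinAt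
  have hg := intervalIntegrable_sub_rpow_mul (p := α - 1) (t := 1) (by linarith) zero_le_one
    (continuousOn_const (c := M))
  refine hg.mono_fun' ?_ ?_
  · rw [Set.uIoc_of_le zero_le_one]
    refine MeasureTheory.AEStronglyMeasurable.mul ?_ ?_
    · exact (by fun_prop : Measurable fun s : ℝ => (1 - s) ^ (α - 2)).aestronglyMeasurable
    · exact (hxc.mono Set.Ioc_subset_Icc_self).aestronglyMeasurable measurableSet_Ioc
  · rw [Set.uIoc_of_le zero_le_one]
    filter_upwards [MeasureTheory.ae_restrict_mem measurableSet_Ioc] with s hs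
    have hb := hbound s (Set.Ioc_subset_Icc_self hs)
    have hM0 : 0 ≤ M := (norm_nonneg _).trans (hM 0 (by simp))
    rcases hs.2.eq_or_lt with rfl | h1
    · simpa [hx1] using mul_nonneg (Real.rpow_nonneg le_rfl (α - 1)) hM0
    · have hpos : 0 < 1 - s := sub_pos.mpr h1
      have hpow : (1 - s) ^ (α - 1) = (1 - s) ^ (α - 2) * (1 - s) := by
        rw [← Real.rpow_add_one hpos.ne']
        ring_nf
      rw [norm_mul, Real.norm_eq_abs, Real.norm_eq_abs,
        abs_of_nonneg (Real.rpow_nonneg hpos.le _), hpow, mul_assoc, mul_comm (1 - s) M]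
      exact mul_le_mul_of_nonneg_left hb (Real.rpow_nonneg hpos.le _)

lemma integral_const_mul_three {k a b : ℝ} {f g h : ℝ → ℝ}
    (hf : IntervalIntegrable f MeasureTheory.volume 0 1)
    (hg : IntervalIntegrable g MeasureTheory.volume 0 1)
    (hh : IntervalIntegrable h MeasureTheory.volume 0 1) :
    ∫ s in (0:ℝ)..1, k * (f s + a * g s + b * h s)
      = k * ((∫ s in (0:ℝ)..1, f s) + a * (∫ s in (0:ℝ)..1, g s)
          + b * ∫ s in (0:ℝ)..1, h s) := by
  rw [intervalIntegral.integral_const_mul,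
    intervalIntegral.integral_add (hf.add (hg.const_mul a)) (hh.const_mul b),
    intervalIntegral.integral_add hf (hg.const_mul a),
    intervalIntegral.integral_const_mul, intervalIntegral.integral_const_mul]


open Set intervalIntegral

theorem green_representation_identity (α β γ : ℝ) (hα0 : 0 < α) (hα1 : α ≤ 1)
    (hβ2 : 2 < β) (hβ3 : β ≤ 3) (y x x' : ℝ → ℝ)
    (hy : ContinuousOn y (Set.Icc 0 1))
    (hx : ∀ t ∈ Set.Icc (0:ℝ) 1, HasDerivWithinAt x (x' t) (Set.Icc (0:ℝ) 1) t)
    (hx'c : ContinuousOn x' (Set.Icc 0 1)) (hx1 : x 1 = 0)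
    (A B C D c₁ c₂ : ℝ)
    (hA : A = (1 / Real.Gamma (α + β)) * ∫ s in (0:ℝ)..1, (1 - s) ^ (α + β - 1) * y s)
    (hB : B = (1 / Real.Gamma α) * ∫ s in (0:ℝ)..1, (1 - s) ^ (α - 1) * x s)
    (hC : C = (1 / Real.Gamma (α + β - 1)) * ∫ s in (0:ℝ)..1, (1 - s) ^ (α + β - 2) * y s)
    (hD : D = ((α - 1) / Real.Gamma α) * ∫ s in (0:ℝ)..1, (1 - s) ^ (α - 2) * x s)
    (hc₁ : c₁ = Real.Gamma (α + 2) * C - Real.Gamma (α + 3) * A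
          + γ * Real.Gamma (α + 3) * B - γ * Real.Gamma (α + 2) * D)
    (hc₂ : c₂ = (Real.Gamma (α + 3) / 2) * ((α + 1) * A - C + γ * D - γ * (α + 1) * B)) :
    ∀ t ∈ Set.Icc (0:ℝ) 1,
      (1 / Real.Gamma (α + β)) * (∫ s in (0:ℝ)..t, (t - s) ^ (α + β - 1) * y s)
        - (γ / Real.Gamma α) * (∫ s in (0:ℝ)..t, (t - s) ^ (α - 1) * x s)
        + c₁ * t ^ (α + 1) / Real.Gamma (α + 2)
        + 2 * c₂ * t ^ (α + 2) / Real.Gamma (α + 3)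
      = (∫ s in (0:ℝ)..1, GreenG α β t s * y s)
        + ∫ s in (0:ℝ)..1, GreenH α γ t s * x s := by
  intro t ht
  have hxc : ContinuousOn x (Set.Icc 0 1) := fun t ht => (hx t ht).continuousWithinAt
  obtain ⟨iy, ey⟩ := truncated_rpow_mul (p := α + β - 1) (by linarith) ht hy
  obtain ⟨ix, ex⟩ := truncated_rpow_mul (p := α - 1) (by linarith) ht hxc
  have iA := intervalIntegrable_sub_rpow_mul (p := α + β - 1) (by linarith) zero_le_one hy
  have iC := intervalIntegrable_sub_rpow_mul (p := α + β - 2) (by linarith) zero_le_one hy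
  have iB := intervalIntegrable_sub_rpow_mul (p := α - 1) (by linarith) zero_le_one hxc
  have iD := intervalIntegrable_one_sub_rpow_mul hα0 hx hx'c hx1
  have hG : ∫ s in (0:ℝ)..1, GreenG α β t s * y s = _ :=
    (intervalIntegral.integral_congr fun s _ => by simp only [GreenG]; ring).trans
      (integral_const_mul_three (k := 1 / Real.Gamma (α + β))
        (a := (α + 1) * t ^ (α + 2) - (α + 2) * t ^ (α + 1))
        (b := (α + β - 1) * (t ^ (α + 1) - t ^ (α + 2))) iy iA iC)
  have hH : ∫ s in (0:ℝ)..1, GreenH α γ t s * x s = _ :=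
    (intervalIntegral.integral_congr fun s _ => by simp only [GreenH]; ring).trans
      (integral_const_mul_three (k := -(γ / Real.Gamma α))
        (a := -((α + 2) * t ^ (α + 1) - (α + 1) * t ^ (α + 2)))
        (b := -((α - 1) * (t ^ (α + 2) - t ^ (α + 1)))) ix iB iD)
  rw [hG, hH, ey, ex]
  have hΓ3 : Real.Gamma (α + 3) = (α + 2) * Real.Gamma (α + 2) := by
    rw [← Real.Gamma_add_one (by linarith)]
    ring_nf
  have hΓβ : Real.Gamma (α + β) = (α + β - 1) * Real.Gamma (α + β - 1) := by
    rw [← Real.Gamma_add_one (by linarith)]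
    ring_nf
  have n2 : Real.Gamma (α + 2) ≠ 0 := (Real.Gamma_pos_of_pos (by linarith)).ne'
  have nα : Real.Gamma α ≠ 0 := (Real.Gamma_pos_of_pos hα0).ne'
  have nβ : Real.Gamma (α + β - 1) ≠ 0 := (Real.Gamma_pos_of_pos (by linarith)).ne'
  have m2 : α + 2 ≠ 0 := by linarith
  have mβ : α + β - 1 ≠ 0 := by linarith
  rw [hc₁, hc₂, hA, hB, hC, hD, hΓ3, hΓβ]
  -- Abstracting the integrals and powers leaves a rational identity.
  generalize (∫ s in (0:ℝ)..t, (t - s) ^ (α + β - 1) * y s) = I₁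
  generalize (∫ s in (0:ℝ)..t, (t - s) ^ (α - 1) * x s) = I₂
  generalize (∫ s in (0:ℝ)..1, (1 - s) ^ (α + β - 1) * y s) = I₃
  generalize (∫ s in (0:ℝ)..1, (1 - s) ^ (α + β - 2) * y s) = I₄
  generalize (∫ s in (0:ℝ)..1, (1 - s) ^ (α - 1) * x s) = I₅
  generalize (∫ s in (0:ℝ)..1, (1 - s) ^ (α - 2) * x s) = I₆
  generalize t ^ (α + 1) = u
  generalize t ^ (α + 2) = v
  generalize Real.Gamma (α + β - 1) = g₁ at *
  generalize Real.Gamma (α + 2) = g₂ at *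
  generalize Real.Gamma α = g₃ at *
  field_simp
  ring
end

section
/- Let y : [0,1] → ℝ be continuous and x : [0,1] → ℝ be continuously differentiable with x(0) = 0 and x(1) = 0. Define u(t) = ∫₀¹ G(t,s)·y(s) ds + ∫₀¹ H(t,s)·x(s) ds for t ∈ [0,1]. Then u(0) = 0, u(1) = 0, u is differentiable on [0,1] (one-sidedly at the endpoints), and u'(0) = 0 and u'(1) = 0. -/
/-!
Write `A t = ∫₀ᵗ (t - s)^(α+β-1) y s ds` and `B t = ∫₀ᵗ (t - s)^(α-1) x s ds`. On `[0, 1]` the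
function `u` is a combination of `A`, `B` and the powers `t^(α+1)`, `t^(α+2)`, with coefficients
`A 1`, `b = ∫₀¹ (1 - s)^(α+β-2) y`, `B 1` and `d = ∫₀¹ (1 - s)^(α-2) x`; the last integral converges
because `x` is Lipschitz and vanishes at `1`. Everything follows once `A` and `B` are
differentiated: `A' 1 = (α+β-1) b` and `B' t = ∫₀ᵗ τ^(α-1) x' (t - τ) dτ`, and an integration by
parts gives `B' 1 = (α-1) d`.

Both derivatives are instances of `hasDerivWithinAt_conv`: if `f` is `C¹` on `[0, 1]` with
`f 0 = 0` and `w` is integrable, then `f ⋆ w` is differentiable with derivative `f' ⋆ w`. It is applied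
with `f = v^(α+β-1)`, `w = y` and with `f = x`, `w = τ^(α-1)`. It holds because the constant
extension of `f` outside `[0, 1]` is Lipschitz and differentiable off `{0, 1}`, so that
differentiation under the integral sign with a Lipschitz bound applies.
-/

open Set intervalIntegral

open MeasureTheory Filter Topology Interval

namespace GreenAux

/-- The nearest-point retraction of `ℝ` onto `[0, 1]`. -/
noncomputable def clamp (v : ℝ) : ℝ := max 0 (min v 1)

lemma clamp_mem (v : ℝ) : clamp v ∈ Icc (0:ℝ) 1 :=
  ⟨le_max_left _ _, max_le zero_le_one (min_le_right _ _)⟩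

lemma clamp_of_mem {v : ℝ} (hv : v ∈ Icc (0:ℝ) 1) : clamp v = v := by
  simp [clamp, hv.1, hv.2]

lemma clamp_of_nonpos {v : ℝ} (hv : v ≤ 0) : clamp v = 0 := by
  unfold clamp
  exact max_eq_left ((min_le_left _ _).trans hv)

lemma continuous_clamp : Continuous clamp := by
  unfold clamp; fun_prop

lemma abs_clamp_sub_le (v w : ℝ) : |clamp v - clamp w| ≤ |v - w| := by
  unfold clamp
  calc |max 0 (min v 1) - max 0 (min w 1)| ≤ |min v 1 - min w 1| := by
        simpa using abs_max_sub_max_le_max 0 (min v 1) 0 (min w 1)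
    _ ≤ |v - w| := by
        simpa using abs_min_sub_min_le_max v 1 w 1

/-- The constant extension of a `C¹` function on `[0, 1]` is Lipschitz. -/
lemma exists_lipschitz {f g : ℝ → ℝ}
    (hf : ∀ t ∈ Icc (0:ℝ) 1, HasDerivWithinAt f (g t) (Icc (0:ℝ) 1) t)
    (hg : ContinuousOn g (Icc 0 1)) :
    ∃ K : ℝ, 0 ≤ K ∧ ∀ v w, |f (clamp v) - f (clamp w)| ≤ K * |v - w| := by
  obtain ⟨C, hC⟩ := isCompact_Icc.exists_bound_of_continuousOn hg
  have hC0 : 0 ≤ C := (norm_nonneg _).trans (hC 0 (by simp))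
  refine ⟨C, hC0, fun v w => ?_⟩
  have h := (convex_Icc (0:ℝ) 1).norm_image_sub_le_of_norm_hasDerivWithin_le hf hC
    (clamp_mem w) (clamp_mem v)
  exact h.trans (mul_le_mul_of_nonneg_left (abs_clamp_sub_le v w) hC0)

lemma conv_eq_clamp {f : ℝ → ℝ} (f0 : f 0 = 0) {t s : ℝ} (ht : t ∈ Icc (0:ℝ) 1)
    (hs : 0 ≤ s) : (if s ≤ t then f (t - s) else 0) = f (clamp (t - s)) := by
  split_ifs with h
  · rw [clamp_of_mem ⟨by linarith, by linarith [ht.2]⟩]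
  · rw [clamp_of_nonpos (by linarith), f0]

lemma hasDerivWithinAt_conv {f g w : ℝ → ℝ}
    (hf : ∀ t ∈ Icc (0:ℝ) 1, HasDerivWithinAt f (g t) (Icc (0:ℝ) 1) t)
    (hg : ContinuousOn g (Icc 0 1)) (f0 : f 0 = 0)
    (hw : IntervalIntegrable w volume 0 1) {t : ℝ} (ht : t ∈ Icc (0:ℝ) 1) :
    HasDerivWithinAt (fun t => ∫ s in (0:ℝ)..1, (if s ≤ t then f (t - s) else 0) * w s)
      (∫ s in (0:ℝ)..1, (if s ≤ t then g (t - s) else 0) * w s) (Icc 0 1) t := by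
  obtain ⟨K, hK0, hK⟩ := exists_lipschitz hf hg
  have hfc : Continuous fun v => f (clamp v) :=
    (show ContinuousOn f (Icc 0 1) from fun t ht => (hf t ht).continuousWithinAt).comp_continuous
      continuous_clamp clamp_mem
  have hgc : Continuous fun v => g (clamp v) := hg.comp_continuous continuous_clamp clamp_mem
  have hint : ∀ t, IntervalIntegrable (fun s => f (clamp (t - s)) * w s) volume 0 1 := fun t =>
    hw.continuousOn_mul (hfc.comp (by fun_prop : Continuous fun s : ℝ => t - s)).continuousOn
  have hmeas : AEStronglyMeasurable (fun s => (if s ≤ t then g (t - s) else 0) * w s)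
      (volume.restrict (Ι (0:ℝ) 1)) := by
    have h1 : AEStronglyMeasurable
        (fun s => (Iic t).indicator (fun s => g (clamp (t - s))) s * w s)
        (volume.restrict (Ι (0:ℝ) 1)) := by
      refine AEStronglyMeasurable.mul ?_ hw.def'.aestronglyMeasurable
      exact ((hgc.comp (by fun_prop : Continuous fun s : ℝ => t - s)).aestronglyMeasurable).indicator
        measurableSet_Iic
    refine h1.congr ?_
    filter_upwards [ae_restrict_mem measurableSet_uIoc] with s hs
    rw [uIoc_of_le zero_le_one] at hs
    by_cases h : s ≤ t
    · simp [h, clamp_of_mem (v := t - s) ⟨by linarith, by linarith [ht.2, hs.1]⟩]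
    · simp [h]
  have key := (intervalIntegral.hasDerivAt_integral_of_dominated_loc_of_lip
    (F := fun t s => f (clamp (t - s)) * w s)
    (F' := fun s => (if s ≤ t then g (t - s) else 0) * w s) (x₀ := t) (a := 0) (b := 1)
    (μ := volume) (s := univ) (bound := fun s => K * |w s|) univ_mem
    (Eventually.of_forall fun t => (hint t).def'.aestronglyMeasurable) (hint t) hmeas
    (by
      refine Eventually.of_forall fun s _ => LipschitzOnWith.of_dist_le_mul fun a _ b _ => ?_
      rw [Real.dist_eq, Real.dist_eq, ← sub_mul, abs_mul, Real.coe_nnabs,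
        abs_of_nonneg (mul_nonneg hK0 (abs_nonneg (w s)))]
      have := mul_le_mul_of_nonneg_right (hK (a - s) (b - s)) (abs_nonneg (w s))
      rw [sub_sub_sub_cancel_right] at this
      linarith)
    (hw.abs.const_mul K)
    (by
      -- the kinks `t - s ∈ {0, 1}` only occur at `s = t` and at the endpoint `s = 0`
      have hne : ∀ᵐ s : ℝ, s ≠ t := by simp [ae_iff]
      filter_upwards [hne] with s hst hs
      rw [uIoc_of_le zero_le_one] at hs
      refine HasDerivAt.mul_const ?_ _
      rcases lt_or_gt_of_ne hst with h | h
      · rw [if_pos h.le]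
        have hm : t - s ∈ Ioo (0:ℝ) 1 := ⟨by linarith, by linarith [ht.2, hs.1]⟩
        have h1 : HasDerivAt f (g (t - s)) (t - s) :=
          (hf _ (Ioo_subset_Icc_self hm)).hasDerivAt (Icc_mem_nhds hm.1 hm.2)
        have h2 : HasDerivAt (fun v => f (clamp v)) (g (t - s)) (t - s) := by
          refine h1.congr_of_eventuallyEq ?_
          filter_upwards [Icc_mem_nhds hm.1 hm.2] with v hv
          rw [clamp_of_mem hv]
        exact h2.comp_sub_const t s
      · rw [if_neg (not_le.2 h)]
        refine (hasDerivAt_const t (f 0)).congr_of_eventuallyEq ?_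
        filter_upwards [Iio_mem_nhds h] with v hv
        rw [clamp_of_nonpos (by linarith [mem_Iio.1 hv])])).2
  refine key.hasDerivWithinAt.congr_of_mem (fun r hr => ?_) ht
  refine intervalIntegral.integral_congr fun s hs => ?_
  rw [uIcc_of_le zero_le_one] at hs
  simp only [conv_eq_clamp f0 hr hs.1]

lemma integral_ite_mul {t : ℝ} (ht : t ∈ Icc (0:ℝ) 1) (f w : ℝ → ℝ) :
    ∫ s in (0:ℝ)..1, (if s ≤ t then f s else 0) * w s = ∫ s in (0:ℝ)..t, f s * w s := by
  rw [← intervalIntegral.integral_indicator ht]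
  refine intervalIntegral.integral_congr fun s _ => ?_
  by_cases h : s ≤ t <;> simp [indicator, h]

/-- Commutativity of convolution on `[0, t]`. -/
lemma conv_comm {t : ℝ} (ht : t ∈ Icc (0:ℝ) 1) (k x : ℝ → ℝ) :
    ∫ s in (0:ℝ)..1, (if s ≤ t then k (t - s) else 0) * x s
      = ∫ s in (0:ℝ)..1, (if s ≤ t then x (t - s) else 0) * k s := by
  rw [integral_ite_mul ht (fun s => k (t - s)), integral_ite_mul ht (fun s => x (t - s))]
  have h := intervalIntegral.integral_comp_sub_left (a := 0) (b := t)
    (fun s => x (t - s) * k s) t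
  simp only [sub_sub_cancel, sub_self, sub_zero] at h
  rw [← h]
  simp only [mul_comm]

lemma conv_zero (f w : ℝ → ℝ) :
    ∫ s in (0:ℝ)..1, (if s ≤ 0 then f (0 - s) else 0) * w s = 0 := by
  rw [integral_ite_mul (by simp) (fun s => f (0 - s))]
  simp

lemma intervalIntegrable_one_sub_rpow {r : ℝ} (hr : -1 < r) :
    IntervalIntegrable (fun s : ℝ => (1 - s) ^ r) volume 0 1 := by
  simpa using ((intervalIntegral.intervalIntegrable_rpow' (a := 0) (b := 1) hr).comp_sub_left 1).symm

lemma intervalIntegrable_conv_rpow {r : ℝ} (hr : -1 < r) {x : ℝ → ℝ}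
    (hx : ContinuousOn x (Icc 0 1)) (t : ℝ) :
    IntervalIntegrable (fun s => (if s ≤ t then (t - s) ^ r else 0) * x s) volume 0 1 := by
  refine IntervalIntegrable.mul_continuousOn ?_ (by rwa [uIcc_of_le zero_le_one])
  have h1 : IntervalIntegrable (fun s : ℝ => (t - s) ^ r) volume 0 1 := by
    simpa using (intervalIntegral.intervalIntegrable_rpow' (a := t) (b := t - 1) hr).comp_sub_left t
  rw [intervalIntegrable_iff] at h1 ⊢
  refine (h1.indicator (measurableSet_Iic (a := t))).congr (Eventually.of_forall fun s => ?_)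
  by_cases h : s ≤ t <;> simp [h]

/-- A `C¹` function vanishing at `1` compensates one power of the singularity of
`(1 - s)^(α - 2)`. -/
lemma intervalIntegrable_singular {α : ℝ} (hα0 : 0 < α) {x x' : ℝ → ℝ}
    (hx : ∀ t ∈ Icc (0:ℝ) 1, HasDerivWithinAt x (x' t) (Icc (0:ℝ) 1) t)
    (hx' : ContinuousOn x' (Icc 0 1)) (hx1 : x 1 = 0) :
    IntervalIntegrable (fun s => (1 - s) ^ (α - 2) * x s) volume 0 1 := by
  obtain ⟨K, hK0, hK⟩ := exists_lipschitz hx hx'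
  have hxc : ContinuousOn x (Icc 0 1) := fun t ht => (hx t ht).continuousWithinAt
  refine ((intervalIntegrable_one_sub_rpow (r := α - 1) (by linarith)).const_mul K).mono_fun ?_ ?_
  · rw [uIoc_of_le zero_le_one]
    refine AEStronglyMeasurable.mul ?_
      ((hxc.mono Ioc_subset_Icc_self).aestronglyMeasurable measurableSet_Ioc)
    exact ((measurable_const.sub measurable_id).pow_const _).aestronglyMeasurable
  · have hne : ∀ᵐ s : ℝ ∂(volume.restrict (Ι (0:ℝ) 1)), s ≠ 1 := ae_restrict_of_ae (by simp [ae_iff])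
    filter_upwards [ae_restrict_mem measurableSet_uIoc, hne] with s hs hs1
    rw [uIoc_of_le zero_le_one] at hs
    have h1 : 0 < 1 - s := sub_pos.2 (lt_of_le_of_ne hs.2 hs1)
    have h2 := hK s 1
    rw [clamp_of_mem ⟨hs.1.le, hs.2⟩, clamp_of_mem (by simp), hx1, sub_zero, abs_sub_comm,
      abs_of_pos h1] at h2
    have h3 : (1 - s) ^ (α - 1) = (1 - s) ^ (α - 2) * (1 - s) := by
      rw [← Real.rpow_add_one h1.ne']; ring_nf
    have h4 : 0 < (1 - s) ^ (α - 2) := Real.rpow_pos_of_pos h1 _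
    rw [Real.norm_eq_abs, Real.norm_eq_abs, h3, abs_mul, abs_of_pos h4,
      abs_of_nonneg (mul_nonneg hK0 (mul_nonneg h4.le h1.le))]
    nlinarith [mul_le_mul_of_nonneg_left h2 h4.le]

/-- Integration by parts: `∫₀¹ (1 - s)^(α-1) x' = (α-1) ∫₀¹ (1 - s)^(α-2) x`. -/
lemma integral_parts {α : ℝ} (hα0 : 0 < α) {x x' : ℝ → ℝ}
    (hx : ∀ t ∈ Icc (0:ℝ) 1, HasDerivWithinAt x (x' t) (Icc (0:ℝ) 1) t)
    (hx' : ContinuousOn x' (Icc 0 1)) (hx0 : x 0 = 0) (hx1 : x 1 = 0) :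
    ∫ s in (0:ℝ)..1, (1 - s) ^ (α - 1) * x' s
      = (α - 1) * ∫ s in (0:ℝ)..1, (1 - s) ^ (α - 2) * x s := by
  have hxc : ContinuousOn x (Icc 0 1) := fun t ht => (hx t ht).continuousWithinAt
  have hd := intervalIntegrable_singular hα0 hx hx' hx1
  have he : IntervalIntegrable (fun s => (1 - s) ^ (α - 1) * x' s) volume 0 1 :=
    (intervalIntegrable_one_sub_rpow (by linarith)).mul_continuousOn
      (by rwa [uIcc_of_le zero_le_one])
  have hcont : ContinuousOn (fun s => (1 - s) ^ (α - 1) * x s) (Icc 0 1) := by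
    intro s hs
    rcases eq_or_lt_of_le hs.2 with rfl | hs1
    · -- at the endpoint the function is `O((1 - s)^α)`
      obtain ⟨K, hK0, hK⟩ := exists_lipschitz hx hx'
      have hlim : Tendsto (fun s : ℝ => K * (1 - s) ^ α) (𝓝[Icc 0 1] 1) (𝓝 0) := by
        have : ContinuousAt (fun s : ℝ => K * (1 - s) ^ α) 1 := by
          refine continuousAt_const.mul (ContinuousAt.rpow_const (by fun_prop) (Or.inr hα0.le))
        have h := this.tendsto
        simp only [sub_self, Real.zero_rpow hα0.ne', mul_zero] at h
        exact h.mono_left nhdsWithin_le_nhds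
      unfold ContinuousWithinAt
      simp only [hx1, mul_zero]
      refine squeeze_zero_norm' ?_ hlim
      filter_upwards [self_mem_nhdsWithin] with s hs
      rcases eq_or_lt_of_le hs.2 with rfl | hs1
      · simp [hx1, Real.zero_rpow hα0.ne']
      have h1 : 0 < 1 - s := sub_pos.2 hs1
      have h2 := hK s 1
      rw [clamp_of_mem hs, clamp_of_mem (by simp), hx1, sub_zero, abs_sub_comm,
        abs_of_pos h1] at h2
      have h3 : (1 - s) ^ α = (1 - s) ^ (α - 1) * (1 - s) := by
        rw [← Real.rpow_add_one h1.ne']; ring_nf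
      have h4 : 0 < (1 - s) ^ (α - 1) := Real.rpow_pos_of_pos h1 _
      rw [Real.norm_eq_abs, h3, abs_mul, abs_of_pos h4]
      nlinarith [mul_le_mul_of_nonneg_left h2 h4.le]
    · refine ContinuousWithinAt.mul (ContinuousAt.continuousWithinAt ?_) (hxc s hs)
      exact ContinuousAt.rpow_const (by fun_prop) (Or.inl (sub_pos.2 hs1).ne')
  have h := intervalIntegral.integral_eq_sub_of_hasDerivAt_of_le zero_le_one hcont
    (f' := fun s => (1 - s) ^ (α - 1) * x' s - (α - 1) * ((1 - s) ^ (α - 2) * x s))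
    (by
      intro s hs
      have h1 : HasDerivAt x (x' s) s :=
        (hx s (Ioo_subset_Icc_self hs)).hasDerivAt (Icc_mem_nhds hs.1 hs.2)
      have h2 : HasDerivAt (fun s : ℝ => 1 - s) (-1) s := by
        simpa using (hasDerivAt_id s).const_sub 1
      have h3 := (h2.rpow_const (p := α - 1) (Or.inl (sub_pos.2 hs.2).ne')).mul h1
      rw [show α - 1 - 1 = α - 2 by ring] at h3
      exact h3.congr_deriv (by ring))
    (he.sub (hd.const_mul _))
  rw [intervalIntegral.integral_sub he (hd.const_mul _), intervalIntegral.integral_const_mul,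
    hx0, hx1] at h
  linarith

end GreenAux

open GreenAux in
theorem green_representation_boundary_conditions (α β γ : ℝ) (hα0 : 0 < α) (hα1 : α ≤ 1)
    (hβ2 : 2 < β) (hβ3 : β ≤ 3) (y x x' : ℝ → ℝ)
    (hy : ContinuousOn y (Set.Icc 0 1))
    (hx : ∀ t ∈ Set.Icc (0:ℝ) 1, HasDerivWithinAt x (x' t) (Set.Icc (0:ℝ) 1) t)
    (hx'c : ContinuousOn x' (Set.Icc 0 1)) (hx0 : x 0 = 0) (hx1 : x 1 = 0)
    (u : ℝ → ℝ)
    (hu : ∀ t, u t = (∫ s in (0:ℝ)..1, GreenG α β t s * y s)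
        + ∫ s in (0:ℝ)..1, GreenH α γ t s * x s) :
    u 0 = 0 ∧ u 1 = 0 ∧
    (∀ t ∈ Set.Icc (0:ℝ) 1, DifferentiableWithinAt ℝ u (Set.Icc (0:ℝ) 1) t) ∧
    HasDerivWithinAt u 0 (Set.Icc (0:ℝ) 1) 0 ∧
    HasDerivWithinAt u 0 (Set.Icc (0:ℝ) 1) 1 := by
  have hxc : ContinuousOn x (Icc 0 1) := fun t ht => (hx t ht).continuousWithinAt
  have hp : 1 < α + β - 1 := by linarith
  set A : ℝ → ℝ := fun t =>
    ∫ s in (0:ℝ)..1, (if s ≤ t then (t - s) ^ (α + β - 1) else 0) * y s with hA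
  set B : ℝ → ℝ := fun t =>
    ∫ s in (0:ℝ)..1, (if s ≤ t then (t - s) ^ (α - 1) else 0) * x s with hB
  set b : ℝ := ∫ s in (0:ℝ)..1, (1 - s) ^ (α + β - 2) * y s with hb
  set d : ℝ := ∫ s in (0:ℝ)..1, (1 - s) ^ (α - 2) * x s with hd
  have hA1 : ∫ s in (0:ℝ)..1, (1 - s) ^ (α + β - 1) * y s = A 1 :=
    (integral_ite_mul (by simp) (fun s : ℝ => (1 - s) ^ (α + β - 1)) y).symm
  have hB1 : ∫ s in (0:ℝ)..1, (1 - s) ^ (α - 1) * x s = B 1 :=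
    (integral_ite_mul (by simp) (fun s : ℝ => (1 - s) ^ (α - 1)) x).symm
  have hA0 : A 0 = 0 := conv_zero (fun v => v ^ (α + β - 1)) y
  have hB0 : B 0 = 0 := conv_zero (fun v => v ^ (α - 1)) x
  set U : ℝ → ℝ := fun t =>
    (1 / Real.Gamma (α + β)) * (A t + ((α + 1) * t ^ (α + 2) - (α + 2) * t ^ (α + 1)) * A 1
      + (α + β - 1) * (t ^ (α + 1) - t ^ (α + 2)) * b)
    + (γ / Real.Gamma α) * (-B t + ((α + 2) * t ^ (α + 1) - (α + 1) * t ^ (α + 2)) * B 1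
      + (α - 1) * (t ^ (α + 2) - t ^ (α + 1)) * d) with hU
  have huU : ∀ t ∈ Icc (0:ℝ) 1, u t = U t := by
    intro t ht
    have hc : ∀ r : ℝ, -1 < r → ∀ z : ℝ → ℝ, ContinuousOn z (Icc 0 1) →
        IntervalIntegrable (fun s => (1 - s) ^ r * z s) volume 0 1 := fun r hr z hz =>
      (intervalIntegrable_one_sub_rpow hr).mul_continuousOn (by rwa [uIcc_of_le zero_le_one])
    have i1 := intervalIntegrable_conv_rpow (r := α + β - 1) (by linarith) hy t
    have i2 := hc (α + β - 1) (by linarith) y hy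
    have i3 := hc (α + β - 2) (by linarith) y hy
    have j1 := intervalIntegrable_conv_rpow (r := α - 1) (by linarith) hxc t
    have j2 := hc (α - 1) (by linarith) x hxc
    have j3 := intervalIntegrable_singular hα0 hx hx'c hx1
    have comb : ∀ (c e p q : ℝ) (f1 f2 f3 : ℝ → ℝ), IntervalIntegrable f1 volume 0 1 →
        IntervalIntegrable f2 volume 0 1 → IntervalIntegrable f3 volume 0 1 →
        ∫ s in (0:ℝ)..1, c * (e * f1 s + p * f2 s + q * f3 s)
          = c * (e * (∫ s in (0:ℝ)..1, f1 s) + p * (∫ s in (0:ℝ)..1, f2 s)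
            + q * ∫ s in (0:ℝ)..1, f3 s) := by
      intro c e p q f1 f2 f3 h1 h2 h3
      rw [intervalIntegral.integral_const_mul,
        intervalIntegral.integral_add ((h1.const_mul e).add (h2.const_mul p)) (h3.const_mul q),
        intervalIntegral.integral_add (h1.const_mul e) (h2.const_mul p)]
      simp only [intervalIntegral.integral_const_mul]
    have hG := comb (1 / Real.Gamma (α + β)) 1
      ((α + 1) * t ^ (α + 2) - (α + 2) * t ^ (α + 1))
      ((α + β - 1) * (t ^ (α + 1) - t ^ (α + 2))) _ _ _ i1 i2 i3
    have hH := comb (γ / Real.Gamma α) (-1)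
      ((α + 2) * t ^ (α + 1) - (α + 1) * t ^ (α + 2))
      ((α - 1) * (t ^ (α + 2) - t ^ (α + 1))) _ _ _ j1 j2 j3
    rw [hA1, one_mul] at hG
    rw [hB1, neg_one_mul] at hH
    rw [hu t, hU]
    refine congrArg₂ (· + ·) ?_ ?_
    · refine Eq.trans ?_ hG
      congr 1; ext s; unfold GreenG; ring
    · refine Eq.trans ?_ hH
      congr 1; ext s; unfold GreenH; ring
  set A' : ℝ → ℝ := fun t =>
    ∫ s in (0:ℝ)..1, (if s ≤ t then (α + β - 1) * (t - s) ^ (α + β - 1 - 1) else 0) * y s with hA'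
  set B' : ℝ → ℝ := fun t =>
    ∫ s in (0:ℝ)..1, (if s ≤ t then x' (t - s) else 0) * s ^ (α - 1) with hB'
  have hAd : ∀ t ∈ Icc (0:ℝ) 1, HasDerivWithinAt A (A' t) (Icc 0 1) t := by
    intro t ht
    refine hasDerivWithinAt_conv (f := fun v => v ^ (α + β - 1))
      (g := fun v => (α + β - 1) * v ^ (α + β - 1 - 1)) (fun v _ => ?_) ?_ ?_ ?_ ht
    · exact (Real.hasDerivAt_rpow_const (Or.inr hp.le)).hasDerivWithinAt
    · exact (continuous_const.mul (Real.continuous_rpow_const (by linarith))).continuousOn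
    · exact Real.zero_rpow (by linarith)
    · exact ContinuousOn.intervalIntegrable (by rwa [uIcc_of_le zero_le_one])
  have hBd : ∀ t ∈ Icc (0:ℝ) 1, HasDerivWithinAt B (B' t) (Icc 0 1) t := by
    intro t ht
    have h := hasDerivWithinAt_conv hx hx'c hx0
      (intervalIntegral.intervalIntegrable_rpow' (a := 0) (b := 1) (r := α - 1) (by linarith)) ht
    exact h.congr_of_mem (fun r hr => conv_comm hr (fun v => v ^ (α - 1)) x) ht
  have hA'0 : A' 0 = 0 := conv_zero (fun v => (α + β - 1) * v ^ (α + β - 1 - 1)) y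
  have hB'0 : B' 0 = 0 := conv_zero x' (fun v => v ^ (α - 1))
  have hA'1 : A' 1 = (α + β - 1) * b := by
    refine (integral_ite_mul (by simp)
      (fun s : ℝ => (α + β - 1) * (1 - s) ^ (α + β - 1 - 1)) y).trans ?_
    rw [hb, ← intervalIntegral.integral_const_mul]
    congr 1; ext s
    rw [show α + β - 1 - 1 = α + β - 2 by ring]; ring
  have hB'1 : B' 1 = (α - 1) * d := by
    rw [hd, ← integral_parts hα0 hx hx'c hx0 hx1]
    refine (conv_comm (t := 1) (by simp) (fun v => v ^ (α - 1)) x').symm.trans ?_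
    exact integral_ite_mul (by simp) (fun s : ℝ => (1 - s) ^ (α - 1)) x'
  have hUd : ∀ t ∈ Icc (0:ℝ) 1, HasDerivWithinAt u
      ((1 / Real.Gamma (α + β)) * (A' t
        + ((α + 1) * ((α + 2) * t ^ (α + 2 - 1)) - (α + 2) * ((α + 1) * t ^ (α + 1 - 1))) * A 1
        + (α + β - 1) * ((α + 1) * t ^ (α + 1 - 1) - (α + 2) * t ^ (α + 2 - 1)) * b)
      + (γ / Real.Gamma α) * (-B' t
        + ((α + 2) * ((α + 1) * t ^ (α + 1 - 1)) - (α + 1) * ((α + 2) * t ^ (α + 2 - 1))) * B 1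
        + (α - 1) * ((α + 2) * t ^ (α + 2 - 1) - (α + 1) * t ^ (α + 1 - 1)) * d))
      (Icc 0 1) t := by
    intro t ht
    have q1 : HasDerivWithinAt (fun t : ℝ => t ^ (α + 1)) ((α + 1) * t ^ (α + 1 - 1))
        (Icc 0 1) t := (Real.hasDerivAt_rpow_const (Or.inr (by linarith))).hasDerivWithinAt
    have q2 : HasDerivWithinAt (fun t : ℝ => t ^ (α + 2)) ((α + 2) * t ^ (α + 2 - 1))
        (Icc 0 1) t := (Real.hasDerivAt_rpow_const (Or.inr (by linarith))).hasDerivWithinAt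
    have hG := ((((hAd t ht).add
      (((q2.const_mul (α + 1)).sub (q1.const_mul (α + 2))).mul_const (A 1))).add
      (((q1.sub q2).const_mul (α + β - 1)).mul_const b)).const_mul (1 / Real.Gamma (α + β)))
    have hH := ((((hBd t ht).neg.add
      (((q1.const_mul (α + 2)).sub (q2.const_mul (α + 1))).mul_const (B 1))).add
      (((q2.sub q1).const_mul (α - 1)).mul_const d)).const_mul (γ / Real.Gamma α))
    exact (hG.add hH).congr_of_mem huU ht
  refine ⟨?_, ?_, fun t ht => (hUd t ht).differentiableWithinAt, ?_, ?_⟩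
  · rw [huU 0 (by simp)]
    simp only [hU, hA0, hB0, Real.zero_rpow (by linarith : α + 1 ≠ 0),
      Real.zero_rpow (by linarith : α + 2 ≠ 0)]
    ring
  · rw [huU 1 (by simp)]
    simp only [hU, Real.one_rpow]
    ring
  · have h := hUd 0 (by simp)
    rw [hA'0, hB'0, Real.zero_rpow (by linarith : α + 1 - 1 ≠ 0),
      Real.zero_rpow (by linarith : α + 2 - 1 ≠ 0)] at h
    convert h using 1
    ring
  · have h := hUd 1 (by simp)
    rw [hA'1, hB'1, Real.one_rpow, Real.one_rpow] at h
    convert h using 1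
    ring
end

section
/- Assume f satisfies the growth condition (A₃) and suppose there exists r > 0 such that 4K‖σ‖ ≤ r, (4a₁K)^{1/(1−τ₁)} ≤ r, (4a₂K)^{1/(1−τ₂)} ≤ r, and 4L ≤ 1. Then there exists a continuously differentiable function x : [0,1] → ℝ with x(0) = x(1) = 0 and x'(0) = x'(1) = 0 such that for every t ∈ [0,1], x(t) = ∫₀¹ G(t,s)·f(s, x(s), x'(s)) ds + ∫₀¹ H(t,s)·x(s) ds. -/
/-!
The unknown is taken to be the derivative `y = x'`, so that `x` is the primitive of `y` and
`x 0 = 0`. Differentiating the integral equation, and integrating by parts where `x` occurs, turns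
it into `y = T y` with `T y` a combination (`langevinMap`) of Riemann–Liouville integrals of
`f (s, x, y)` and of `y`, of positive orders `α + β - 1`, `α + β`, `α`, `α + 1`, and of their values
at `1`. In this form the kernel `(1 - s) ^ (α - 2)`, which is not integrable, is absent.

Fractional integrals of positive order are continuous on `C([0,1])` and map bounded sets into
compact ones (`isCompact_rlCompact`, from an explicit modulus of continuity). With `y` truncated to
`[-r, r]`, Schauder's theorem gives a fixed point. The conditions on `r` bound it by
`K (‖σ‖ + a₁ r ^ τ₁ + a₂ r ^ τ₂) + L r ≤ r`, so the truncation does nothing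
(`exists_langevinMap_fixed_point`).

The form of `T` gives `y 0 = y 1 = 0`, and integrating `y = T y` (`rlInt_one_fixed_point`) gives
`x 1 = 0`. Because of the latter, the singular term `(α - 1) ∫ (1 - s) ^ (α - 2) x(s) ds` converges
and equals the fractional integral of order `α` of `y` at `1` (`integral_singular_kernel`), which
brings back the original kernels.

Schauder's theorem is deduced from Brouwer's, and Brouwer's from the no-retraction theorem by the
analytic argument of Milnor and Rogers.
-/

open Set intervalIntegral

/-! ### Brouwer's and Schauder's fixed point theorems -/

/-- `det (1 + t A)` is a polynomial in `t` of degree at most `dim E`, so Lagrange interpolation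
writes its value at `t = 1` as an affine combination, with weights independent of `A`, of its
values at the nodes `v i`. -/
theorem det_one_add_smul_interpolation {E : Type*} [NormedAddCommGroup E] [NormedSpace ℝ E]
    [FiniteDimensional ℝ E] (v : ℕ → ℝ) (hv : Function.Injective v) :
    ∃ w : ℕ → ℝ, ∑ i ∈ Finset.range (Module.finrank ℝ E + 1), w i = 1 ∧
      ∀ A : E →L[ℝ] E, (1 + A).det =
        ∑ i ∈ Finset.range (Module.finrank ℝ E + 1), w i * (1 + v i • A).det := by
  classical
  set s := Finset.range (Module.finrank ℝ E + 1) with hs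
  refine ⟨fun i => (Lagrange.basis s v i).eval 1, ?_, fun A => ?_⟩
  · have h := Lagrange.sum_basis (s := s) (v := v) hv.injOn ⟨0, by simp [hs]⟩
    rw [← Polynomial.eval_finsetSum, h, Polynomial.eval_one]
  · let b := Module.finBasis ℝ E
    let M := LinearMap.toMatrix b b (A : E →ₗ[ℝ] E)
    let p : Polynomial ℝ := Matrix.det ((Polynomial.X : Polynomial ℝ) • M.map Polynomial.C
      + (1 : Matrix _ _ ℝ).map Polynomial.C)
    have hp : ∀ t : ℝ, p.eval t = (1 + t • A).det := by
      intro t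
      have h1 : (1 + t • A).det = ((1 : Matrix _ _ ℝ) + t • M).det := by
        change LinearMap.det ((1 + t • A : E →L[ℝ] E) : E →ₗ[ℝ] E) = _
        rw [← LinearMap.det_toMatrix b]
        congr 1
        have : ((1 + t • A : E →L[ℝ] E) : E →ₗ[ℝ] E) = LinearMap.id + t • (A : E →ₗ[ℝ] E) := by
          ext x; simp
        rw [this, map_add, map_smul, LinearMap.toMatrix_id]
      rw [h1]
      change Polynomial.evalRingHom t (Matrix.det _) = _
      rw [RingHom.map_det]
      congr 1
      ext i j
      by_cases hij : i = j
      · simp [hij]; ring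
      · simp [hij]; ring
    have hdeg : p.degree < s.card := by
      have h := Polynomial.natDegree_det_X_add_C_le M 1
      have h2 : p.natDegree ≤ Module.finrank ℝ E := h.trans (by simp)
      refine lt_of_le_of_lt Polynomial.degree_le_natDegree ?_
      rw [hs, Finset.card_range]
      exact_mod_cast Nat.lt_succ_of_le h2
    have h := Lagrange.eq_interpolate (s := s) (v := v) hv.injOn hdeg
    have h3 := congrArg (Polynomial.eval 1) h
    rw [hp, one_smul, Lagrange.interpolate_apply, Polynomial.eval_finsetSum] at h3
    rw [h3]
    refine Finset.sum_congr rfl fun i _ => ?_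
    simp only [Polynomial.eval_mul, Polynomial.eval_C, hp]
    ring

/-- A `C¹` map on the closed unit ball vanishing on the sphere stays Lipschitz when extended
by zero. -/
theorem lipschitz_extension_by_zero {E : Type*} [NormedAddCommGroup E] [NormedSpace ℝ E]
    [FiniteDimensional ℝ E] (h : E → E)
    (hC : ∀ x, ‖x‖ ≤ 1 → ContDiffAt ℝ 1 h x) (h0 : ∀ x, ‖x‖ = 1 → h x = 0) :
    ∃ C : ℝ, 0 ≤ C ∧ ∀ x y, ‖(if ‖x‖ ≤ 1 then h x else 0) - (if ‖y‖ ≤ 1 then h y else 0)‖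
      ≤ C * ‖x - y‖ := by
  have hon : ContDiffOn ℝ 1 h (Metric.closedBall 0 1) := fun x hx =>
    (hC x (by simpa using hx)).contDiffWithinAt
  obtain ⟨K, hK⟩ := hon.exists_lipschitzOnWith one_ne_zero (convex_closedBall _ _)
    (isCompact_closedBall _ _)
  have hK' : ∀ x y, ‖x‖ ≤ 1 → ‖y‖ ≤ 1 → ‖h x - h y‖ ≤ K * ‖x - y‖ := fun x y hx hy => by
    have := hK.norm_sub_le (x := x) (y := y) (by simpa using hx) (by simpa using hy)
    exact this
  have key : ∀ x y, ‖x‖ ≤ 1 → 1 < ‖y‖ → ‖h x‖ ≤ 2 * K * ‖x - y‖ := by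
    intro x y hx hy
    -- compare with the radial projection of `y` to the sphere, where `h` vanishes
    have hy0 : ‖y‖ ≠ 0 := by positivity
    have hz : ‖(‖y‖⁻¹ • y)‖ = 1 := by
      rw [norm_smul, norm_inv, norm_norm, inv_mul_cancel₀ hy0]
    have h1 := hK' x (‖y‖⁻¹ • y) hx hz.le
    rw [h0 _ hz, sub_zero] at h1
    have h2 : ‖y - ‖y‖⁻¹ • y‖ = ‖y‖ - 1 := by
      have : y - ‖y‖⁻¹ • y = (1 - ‖y‖⁻¹) • y := by rw [sub_smul, one_smul]
      rw [this, norm_smul, Real.norm_of_nonneg (by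
        rw [sub_nonneg]; exact inv_le_one_of_one_le₀ hy.le), sub_mul, inv_mul_cancel₀ hy0, one_mul]
    have h3 : ‖x - ‖y‖⁻¹ • y‖ ≤ ‖x - y‖ + ‖y - ‖y‖⁻¹ • y‖ := norm_sub_le_norm_sub_add_norm_sub _ _ _
    have h4 : ‖y‖ - ‖x‖ ≤ ‖x - y‖ := by rw [norm_sub_rev]; exact norm_sub_norm_le _ _
    have hK0 : (0 : ℝ) ≤ K := K.2
    nlinarith
  refine ⟨2 * K, by positivity, fun x y => ?_⟩
  have hK0 : (0 : ℝ) ≤ K := K.2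
  by_cases hx : ‖x‖ ≤ 1 <;> by_cases hy : ‖y‖ ≤ 1
  · simp only [hx, hy, if_true]
    have := hK' x y hx hy
    nlinarith [norm_nonneg (x - y)]
  · simp only [hx, hy, if_true, if_false, sub_zero]
    exact key x y hx (not_le.mp hy)
  · simp only [hx, hy, if_true, if_false, zero_sub, norm_neg]
    rw [norm_sub_rev]
    exact key y x hy (not_le.mp hx)
  · simp only [hx, hy, if_false, sub_self, norm_zero]
    positivity

/-- A perturbation of the identity by a `1/2`-Lipschitz map is a bijection of `E`. If the
perturbation vanishes off the open unit ball, it therefore maps that ball onto itself. -/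
theorem image_ball_perturbation {E : Type*} [NormedAddCommGroup E] [NormedSpace ℝ E]
    [FiniteDimensional ℝ E] (k : E → E) (hk1 : ∀ x, 1 ≤ ‖x‖ → k x = 0)
    (hk : ∀ x y, ‖k x - k y‖ ≤ (1 / 2) * ‖x - y‖) :
    Function.Injective (fun x => x + k x) ∧
      (fun x => x + k x) '' Metric.ball 0 1 = Metric.ball 0 1 := by
  have hinj : Function.Injective (fun x => x + k x) := by
    intro x y hxy
    have h1 := hk x y
    have h2 : k x - k y = -(x - y) := by
      have : x + k x = y + k y := hxy
      rw [neg_sub, sub_eq_sub_iff_add_eq_add, add_comm, this, add_comm]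
    rw [h2, norm_neg] at h1
    have : ‖x - y‖ = 0 := by linarith [norm_nonneg (x - y)]
    exact sub_eq_zero.mp (norm_eq_zero.mp this)
  have hsurj : Function.Surjective (fun x => x + k x) := by
    have happ : ApproximatesLinearOn (fun x => x + k x)
        ((ContinuousLinearEquiv.refl ℝ E : E ≃L[ℝ] E) : E →L[ℝ] E) univ (1 / 2) := by
      intro x _ y _
      have : x + k x - (y + k y) - (x - y) = k x - k y := by abel
      simpa [this] using hk x y
    refine happ.surjective ?_
    rcases subsingleton_or_nontrivial E with hE | hE
    · exact Or.inl hE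
    · right
      have : ‖(((ContinuousLinearEquiv.refl ℝ E).symm : E ≃L[ℝ] E) : E →L[ℝ] E)‖₊ = 1 := by
        ext; simp
      rw [this, inv_one]
      exact NNReal.half_lt_self one_ne_zero
  refine ⟨hinj, ?_⟩
  have hid : ∀ x, 1 ≤ ‖x‖ → x + k x = x := fun x hx => by rw [hk1 x hx, add_zero]
  ext y
  constructor
  · rintro ⟨x, hx, rfl⟩
    by_contra hy
    have hy' : 1 ≤ ‖x + k x‖ := by simpa using hy
    have := hinj (a₁ := x + k x) (a₂ := x) (hid _ hy')
    rw [this] at hy'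
    simp at hx
    linarith
  · intro hy
    obtain ⟨x, rfl⟩ := hsurj y
    refine ⟨x, ?_, rfl⟩
    by_contra hx
    have hx' : 1 ≤ ‖x‖ := by simpa using hx
    simp only [hid x hx'] at hy
    exact hx hy

/-- The no-retraction theorem, for a retraction `x ↦ x + h x` of the closed unit ball onto the
sphere. The integral over the ball of `det (1 + t • h')` is a polynomial in `t`. For small `t ≥ 0`
it is the volume of the ball, which `x ↦ x + t • h x` maps bijectively onto itself; at `t = 1`
it vanishes, the image lying in the sphere. -/
theorem no_smooth_retraction {E : Type*} [NormedAddCommGroup E] [InnerProductSpace ℝ E]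
    [FiniteDimensional ℝ E] (h : E → E)
    (hC : ∀ x, ‖x‖ ≤ 1 → ContDiffAt ℝ 1 h x) (h0 : ∀ x, ‖x‖ = 1 → h x = 0)
    (h1 : ∀ x, ‖x‖ ≤ 1 → ‖x + h x‖ = 1) : False := by
  let _ : MeasurableSpace E := borel E
  have _ : BorelSpace E := ⟨rfl⟩
  let μ : MeasureTheory.Measure E := MeasureTheory.volume
  let B : Set E := Metric.ball 0 1
  have hBm : MeasurableSet B := Metric.isOpen_ball.measurableSet
  have hBle : ∀ x ∈ B, ‖x‖ ≤ 1 := fun x hx => (mem_ball_zero_iff.mp hx).le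
  have hder : ∀ x, ‖x‖ ≤ 1 → HasFDerivAt h (fderiv ℝ h x) x := fun x hx =>
    ((hC x hx).differentiableAt one_ne_zero).hasFDerivAt
  have hcontD : ∀ x, ‖x‖ ≤ 1 → ContinuousAt (fderiv ℝ h) x := fun x hx =>
    ((hC x hx).fderiv_right (m := 0) (by simp)).continuousAt
  have hint : ∀ t : ℝ, MeasureTheory.IntegrableOn (fun x => (1 + t • fderiv ℝ h x).det) B μ := by
    intro t
    have hc : ContinuousOn (fun x => (1 + t • fderiv ℝ h x).det) (Metric.closedBall 0 1) := by
      intro x hx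
      have hx' : ‖x‖ ≤ 1 := by simpa using hx
      refine ContinuousAt.continuousWithinAt ?_
      exact (ContinuousLinearMap.continuous_det (𝕜 := ℝ) (E := E)).continuousAt.comp
        (continuousAt_const.add ((hcontD x hx').const_smul t))
    exact (hc.integrableOn_compact (isCompact_closedBall _ _)).mono_set Metric.ball_subset_closedBall
  obtain ⟨C, hC0, hlip⟩ := lipschitz_extension_by_zero h hC h0
  have hpos : ∀ᶠ t : ℝ in nhds 0, ∀ x ∈ Metric.closedBall (0 : E) 1,
      0 < (1 + t • fderiv ℝ h x).det := by
    refine (isCompact_closedBall (0 : E) 1).eventually_forall_of_forall_eventually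
      (P := fun (t : ℝ) x => 0 < (1 + t • fderiv ℝ h x).det) fun x hx => ?_
    have hx' : ‖x‖ ≤ 1 := by simpa using hx
    have hc : ContinuousAt (fun z : ℝ × E => (1 + z.1 • fderiv ℝ h z.2).det) (0, x) := by
      refine (ContinuousLinearMap.continuous_det (𝕜 := ℝ) (E := E)).continuousAt.comp
        (continuousAt_const.add (continuousAt_fst.smul ?_))
      exact ContinuousAt.comp (f := Prod.snd) (x := ((0 : ℝ), x)) (hcontD x hx') continuousAt_snd
    refine hc.eventually_const_lt ?_
    simp [ContinuousLinearMap.det]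
  obtain ⟨δ, hδ, hδpos⟩ := Metric.eventually_nhds_iff.mp hpos
  -- for small `t`, the map `x ↦ x + t • h x` permutes the ball, so its Jacobian integrates to `μ B`
  have hvol : ∀ t : ℝ, 0 ≤ t → t < δ → t * C ≤ 1 / 2 →
      ∫ x in B, (1 + t • fderiv ℝ h x).det ∂μ = μ.real B := by
    intro t ht0 htδ htC
    let k : E → E := fun x => t • (if ‖x‖ ≤ 1 then h x else 0)
    obtain ⟨hinj, himg⟩ := image_ball_perturbation k
      (fun x hx => by
        by_cases hx' : ‖x‖ ≤ 1
        · simp [k, h0 x (le_antisymm hx' hx)]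
        · simp [k, hx'])
      (fun x y => by
        change ‖t • _ - t • _‖ ≤ _
        rw [← smul_sub, norm_smul, Real.norm_of_nonneg ht0]
        calc t * _ ≤ t * (C * ‖x - y‖) := mul_le_mul_of_nonneg_left (hlip x y) ht0
          _ = (t * C) * ‖x - y‖ := by ring
          _ ≤ _ := mul_le_mul_of_nonneg_right htC (norm_nonneg _))
    have hkB : ∀ x ∈ B, x + k x = x + t • h x := fun x hx => by simp [k, hBle x hx]
    have hd : ∀ x ∈ B, HasFDerivWithinAt (fun x => x + k x) (1 + t • fderiv ℝ h x) B x := by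
      intro x hx
      have h2 : HasFDerivWithinAt (fun x => x + t • h x) (1 + t • fderiv ℝ h x) B x :=
        ((hasFDerivAt_id x).add ((hder x (hBle x hx)).const_smul t)).hasFDerivWithinAt
      exact h2.congr hkB (hkB x hx)
    have h3 := MeasureTheory.integral_image_eq_integral_abs_det_fderiv_smul μ hBm hd
      hinj.injOn (fun _ => (1 : ℝ))
    rw [himg] at h3
    have h4 : ∫ x in B, |(1 + t • fderiv ℝ h x).det| • (1 : ℝ) ∂μ
        = ∫ x in B, (1 + t • fderiv ℝ h x).det ∂μ := by
      refine MeasureTheory.setIntegral_congr_fun hBm fun x hx => ?_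
      have := hδpos (y := t) (by simpa [abs_of_nonneg ht0] using htδ) x
        (Metric.ball_subset_closedBall hx)
      simp [abs_of_pos this]
    rw [← h4, ← h3]
    simp [B]
  -- `x ↦ x + h x` has constant norm on the ball, so its Jacobian vanishes
  have hzero : ∀ x ∈ B, (1 + fderiv ℝ h x).det = 0 := by
    intro x hx
    by_contra hne
    have hF : HasFDerivAt (fun x => x + h x) (1 + fderiv ℝ h x) x :=
      (hasFDerivAt_id x).add (hder x (hBle x hx))
    have hsq := hF.norm_sq
    have hconst : HasFDerivAt (fun x => ‖x + h x‖ ^ 2) (0 : E →L[ℝ] ℝ) x := by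
      refine (hasFDerivAt_const (1 : ℝ) x).congr_of_eventuallyEq ?_
      filter_upwards [Metric.isOpen_ball.mem_nhds hx] with z hz
      rw [h1 z (hBle z hz), one_pow]
    have heq := hsq.unique hconst
    have hsurj : Function.Surjective (1 + fderiv ℝ h x : E →L[ℝ] E) :=
      (LinearMap.equivOfDetNeZero ((1 + fderiv ℝ h x : E →L[ℝ] E) : E →ₗ[ℝ] E) hne).surjective
    obtain ⟨v, hv⟩ := hsurj (x + h x)
    have h5 : (2 : ℕ) • inner ℝ (x + h x) ((1 + fderiv ℝ h x : E →L[ℝ] E) v) = (0 : ℝ) :=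
      congrArg (fun A : E →L[ℝ] ℝ => A v) heq
    rw [hv, real_inner_self_eq_norm_sq] at h5
    have h6 : ‖x + h x‖ ^ 2 = 0 := by
      simpa using h5
    rw [h1 x (hBle x hx)] at h6
    norm_num at h6
  -- interpolation at distinct nodes in `(0, ε]`, small enough for `hvol`, carries the value `μ B`
  -- of the integral from the nodes to `t = 1`
  let ε : ℝ := min (δ / 2) (1 / (2 * (C + 1)))
  have hε : 0 < ε := by positivity
  let v : ℕ → ℝ := fun i => ε / (i + 1)
  have hvle : ∀ i, v i ≤ ε := fun i => div_le_self hε.le (by linarith [Nat.cast_nonneg (α := ℝ) i])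
  have hvinj : Function.Injective v := by
    intro i j hij
    have hi : (i : ℝ) + 1 ≠ 0 := by positivity
    have hj : (j : ℝ) + 1 ≠ 0 := by positivity
    simp only [v] at hij
    field_simp at hij
    exact_mod_cast (by linarith : (i : ℝ) = j)
  obtain ⟨w, hw1, hw⟩ := det_one_add_smul_interpolation (E := E) v hvinj
  have hsum : ∫ x in B, (1 + fderiv ℝ h x).det ∂μ = μ.real B := by
    rw [show (fun x => (1 + fderiv ℝ h x).det) = _ from funext fun x => hw _]
    rw [MeasureTheory.integral_finsetSum _ (fun i _ => (hint (v i)).const_mul (w i))]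
    have : ∀ i ∈ Finset.range (Module.finrank ℝ E + 1),
        ∫ x in B, w i * (1 + v i • fderiv ℝ h x).det ∂μ = w i * μ.real B := by
      intro i _
      have hεδ : ε ≤ δ / 2 := min_le_left _ _
      have hεC : ε ≤ 1 / (2 * (C + 1)) := min_le_right _ _
      rw [MeasureTheory.integral_const_mul, hvol (v i) (by positivity) (by linarith [hvle i]) ?_]
      calc v i * C ≤ 1 / (2 * (C + 1)) * C :=
            mul_le_mul_of_nonneg_right ((hvle i).trans hεC) hC0
        _ ≤ 1 / 2 := by rw [div_mul_eq_mul_div, div_le_div_iff₀ (by positivity) (by norm_num)]; linarith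
    rw [Finset.sum_congr rfl this, ← Finset.sum_mul, hw1, one_mul]
  rw [MeasureTheory.setIntegral_congr_fun hBm (g := fun _ => (0 : ℝ)) hzero] at hsum
  have hBpos : 0 < μ.real B :=
    ENNReal.toReal_pos (Metric.measure_ball_pos μ 0 one_pos).ne' MeasureTheory.measure_ball_lt_top.ne
  simp at hsum
  linarith

/-- Brouwer's theorem for the closed unit ball. A map of the ball into itself without a fixed
point can be replaced by a `C¹` one, and sending `x` to the exit point of the ray from `g x`
through `x` is then a `C¹` retraction onto the sphere. -/
theorem brouwer_fixed_point {E : Type*} [NormedAddCommGroup E] [InnerProductSpace ℝ E]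
    [FiniteDimensional ℝ E] (φ : E → E) (hφ : Continuous φ) (hb : ∀ x, ‖φ x‖ ≤ 1) :
    ∃ x, φ x = x := by
  by_contra! hne
  -- a smooth fixed-point-free map into the ball, from a partition of unity
  obtain ⟨g, hg⟩ := exists_contMDiffMap_forall_mem_convex_of_local_const
    (modelWithCornersSelf ℝ E) (n := (1 : ℕ))
    (t := fun x => Metric.ball (φ x) ‖x - φ x‖ ∩ Metric.closedBall 0 1)
    (fun x => (convex_ball _ _).inter (convex_closedBall _ _)) (fun x => by
      refine ⟨φ x, ?_⟩
      have h1 : ContinuousAt (fun y => dist (φ x) (φ y)) x := by fun_prop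
      have h2 : ContinuousAt (fun y => ‖y - φ y‖) x := by fun_prop
      have h3 : dist (φ x) (φ x) < ‖x - φ x‖ := by
        rw [dist_self, norm_pos_iff, sub_ne_zero]
        exact (hne x).symm
      filter_upwards [h1.eventually_lt h2 h3] with y hy
      exact ⟨hy, by simpa using hb x⟩)
  have hgs : ContDiff ℝ 1 g := by
    have := g.contMDiff.contDiff
    exact_mod_cast this
  have hgb : ∀ x, ‖g x‖ ≤ 1 := fun x => by simpa using (hg x).2
  have hgne : ∀ x, x - g x ≠ 0 := fun x h => by
    have h1 := (hg x).1
    rw [sub_eq_zero] at h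
    rw [← h, Metric.mem_ball, dist_eq_norm] at h1
    exact lt_irrefl _ h1
  have hN : ∀ x, 0 < ‖x - g x‖ ^ 2 := fun x => by
    have := norm_pos_iff.mpr (hgne x)
    positivity
  -- the exit point is `x + λ (x - g x)`, with `λ` the larger root of a quadratic equation whose
  -- discriminant is positive by `hD`, so that its square root is smooth
  have hb0 : ∀ x, ‖x‖ = 1 → 0 < inner ℝ x (x - g x) := by
    intro x hx
    have h1 := norm_sub_sq_real x (g x)
    have h2 := hN x
    have h3 := hgb x
    rw [inner_sub_right, real_inner_self_eq_norm_sq]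
    have h4 : ‖g x‖ ^ 2 ≤ 1 := by nlinarith [norm_nonneg (g x)]
    rw [hx] at h1 ⊢
    linarith
  have hD : ∀ x, ‖x‖ ≤ 1 → 0 < inner ℝ x (x - g x) ^ 2 + ‖x - g x‖ ^ 2 * (1 - ‖x‖ ^ 2) := by
    intro x hx
    rcases hx.lt_or_eq with hx | hx
    · have : 0 < 1 - ‖x‖ ^ 2 := by nlinarith [norm_nonneg x]
      have := mul_pos (hN x) this
      positivity
    · have := hb0 x hx
      rw [hx]
      simp only [one_pow, sub_self, mul_zero, add_zero]
      positivity
  refine no_smooth_retraction (fun x => ((-inner ℝ x (x - g x) +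
    √(inner ℝ x (x - g x) ^ 2 + ‖x - g x‖ ^ 2 * (1 - ‖x‖ ^ 2))) / ‖x - g x‖ ^ 2) • (x - g x))
    ?_ ?_ ?_
  · intro x hx
    have hu : ContDiffAt ℝ 1 (fun x => x - g x) x := (contDiff_id.sub hgs).contDiffAt
    have hi : ContDiffAt ℝ 1 (fun x => inner ℝ x (x - g x)) x := contDiffAt_id.inner ℝ hu
    refine ContDiffAt.smul (ContDiffAt.div (hi.neg.add (ContDiffAt.sqrt ?_ (hD x hx).ne'))
      (hu.norm_sq ℝ) (hN x).ne') hu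
    exact (hi.pow 2).add ((hu.norm_sq ℝ).mul (contDiffAt_const.sub (contDiffAt_id.norm_sq ℝ)))
  · intro x hx
    have h1 : √(inner ℝ x (x - g x) ^ 2 + ‖x - g x‖ ^ 2 * (1 - ‖x‖ ^ 2)) = inner ℝ x (x - g x) := by
      rw [hx]
      simp only [one_pow, sub_self, mul_zero, add_zero]
      exact Real.sqrt_sq (hb0 x hx).le
    simp only [h1, neg_add_cancel, zero_div, zero_smul]
  · intro x hx
    have hs := Real.sq_sqrt (hD x hx).le
    set s := √(inner ℝ x (x - g x) ^ 2 + ‖x - g x‖ ^ 2 * (1 - ‖x‖ ^ 2))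
    have hN' := (hN x).ne'
    have h1 : ‖x + ((-inner ℝ x (x - g x) + s) / ‖x - g x‖ ^ 2) • (x - g x)‖ ^ 2 = 1 := by
      rw [norm_add_sq_real, inner_smul_right, norm_smul, mul_pow, Real.norm_eq_abs, sq_abs]
      generalize inner ℝ x (x - g x) = b at *
      generalize ‖x - g x‖ ^ 2 = N at *
      field_simp
      linear_combination hs
    exact (pow_eq_one_iff_of_nonneg (norm_nonneg _) two_ne_zero).mp h1

/-- Schauder's theorem for a continuous map of a normed space into a compact set. -/
theorem schauder_fixed_point {V : Type*} [NormedAddCommGroup V] [NormedSpace ℝ V] (T : V → V)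
    (hT : Continuous T) (K : Set V) (hK : IsCompact K) (hTK : ∀ v, T v ∈ K) : ∃ v, T v = v := by
  -- the weights `w v i / W v` attached to a finite `ε`-net `S` of `K` displace points of `K` by at
  -- most `ε`, and reduce the problem to Brouwer's theorem in the space of weights
  have happrox : ∀ ε : ℝ, 0 < ε → ∃ v, ‖T v - v‖ ≤ ε := by
    intro ε hε
    obtain ⟨S, -, hSfin, hS⟩ := hK.finite_cover_balls hε
    have := hSfin.fintype
    let E := EuclideanSpace ℝ S
    let w : V → S → ℝ := fun v i => max 0 (ε - ‖v - i‖)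
    have hw0 : ∀ v i, 0 ≤ w v i := fun v i => le_max_left _ _
    have hwc : ∀ i, Continuous fun v => w v i := fun i => by fun_prop
    let W : V → ℝ := fun v => ∑ i, w v i
    have hWc : Continuous W := by fun_prop
    have hWpos : ∀ v ∈ K, 0 < W v := by
      intro v hv
      obtain ⟨i, hi, hvi⟩ := mem_iUnion₂.mp (hS hv)
      refine Finset.sum_pos' (fun i _ => hw0 v i) ⟨⟨i, hi⟩, Finset.mem_univ _, ?_⟩
      rw [Metric.mem_ball, dist_eq_norm] at hvi
      exact lt_max_of_lt_right (by simpa using hvi)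
    let c : E → V := fun a => ∑ i : S, a i • (i : V)
    have hc : Continuous c := continuous_finsetSum _ fun i _ =>
      (EuclideanSpace.proj (𝕜 := ℝ) i).continuous.smul continuous_const
    let φ : E → E := fun a => WithLp.toLp 2 fun i => w (T (c a)) i / W (T (c a))
    have hφ : Continuous φ := by
      refine (PiLp.continuous_toLp 2 _).comp (continuous_pi fun i => ?_)
      exact ((hwc i).comp (hT.comp hc)).div (hWc.comp (hT.comp hc))
        fun a => (hWpos _ (hTK _)).ne'
    have hsum : ∀ v ∈ K, ∑ i, w v i / W v = 1 := fun v hv => by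
      rw [← Finset.sum_div]; exact div_self (hWpos v hv).ne'
    have hφb : ∀ a, ‖φ a‖ ≤ 1 := by
      intro a
      have hv := hTK (c a)
      rw [EuclideanSpace.norm_eq]
      refine Real.sqrt_le_iff.mpr ⟨zero_le_one, ?_⟩
      rw [one_pow, ← hsum _ hv]
      refine Finset.sum_le_sum fun i _ => ?_
      have h0 : 0 ≤ w (T (c a)) i / W (T (c a)) := div_nonneg (hw0 _ _) (hWpos _ hv).le
      have h1 : w (T (c a)) i / W (T (c a)) ≤ 1 := by
        rw [← hsum _ hv]
        exact Finset.single_le_sum (f := fun i => w (T (c a)) i / W (T (c a)))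
          (fun j _ => div_nonneg (hw0 _ _) (hWpos _ hv).le) (Finset.mem_univ i)
      change ‖w (T (c a)) i / W (T (c a))‖ ^ 2 ≤ _
      rw [Real.norm_of_nonneg h0]
      nlinarith
    obtain ⟨a, ha⟩ := brouwer_fixed_point φ hφ hφb
    refine ⟨c a, ?_⟩
    have hv := hTK (c a)
    have hca : c a = ∑ i, (w (T (c a)) i / W (T (c a))) • (i : V) := by
      conv_lhs => rw [← ha]
    have hdiff : T (c a) - c a
        = ∑ i, (w (T (c a)) i / W (T (c a))) • (T (c a) - (i : V)) := by
      simp_rw [smul_sub]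
      rw [Finset.sum_sub_distrib, ← Finset.sum_smul, hsum _ hv, one_smul, ← hca]
    rw [hdiff]
    refine (norm_sum_le _ _).trans ?_
    calc ∑ i, ‖(w (T (c a)) i / W (T (c a))) • (T (c a) - (i : V))‖
        ≤ ∑ i, (w (T (c a)) i / W (T (c a))) * ε := by
          refine Finset.sum_le_sum fun i _ => ?_
          have h0 : 0 ≤ w (T (c a)) i / W (T (c a)) := div_nonneg (hw0 _ _) (hWpos _ hv).le
          rw [norm_smul, Real.norm_of_nonneg h0]
          by_cases hle : ‖T (c a) - (i : V)‖ ≤ ε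
          · exact mul_le_mul_of_nonneg_left hle h0
          · have : w (T (c a)) i = 0 := max_eq_left (by linarith)
            simp [this]
      _ = ε := by rw [← Finset.sum_mul, hsum _ hv, one_mul]
  choose v hv using fun n : ℕ => happrox (1 / ((n : ℝ) + 1)) (by positivity)
  obtain ⟨y, -, θ, hθ, hlim⟩ := hK.tendsto_subseq fun n => hTK (v n)
  have hd : Filter.Tendsto (fun n => T (v (θ n)) - v (θ n)) Filter.atTop (nhds 0) :=
    (squeeze_zero_norm hv tendsto_one_div_add_atTop_nhds_zero_nat).comp hθ.tendsto_atTop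
  have hvlim : Filter.Tendsto (fun n => v (θ n)) Filter.atTop (nhds y) := by
    simpa using hlim.sub hd
  exact ⟨y, tendsto_nhds_unique ((hT.tendsto y).comp hvlim) hlim⟩

/-! ### Riemann–Liouville integrals -/

/-- The Riemann–Liouville integral of order `p`, without its factor `1 / Γ(p)`. -/
noncomputable def rlInt (p : ℝ) (g : ℝ → ℝ) (t : ℝ) : ℝ :=
  ∫ s in (0:ℝ)..t, (t - s) ^ (p - 1) * g s

theorem intervalIntegrable_rlKernel {p : ℝ} (hp : 0 < p) (t a b : ℝ) :
    IntervalIntegrable (fun s => (t - s) ^ (p - 1)) MeasureTheory.volume a b := by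
  have h := (intervalIntegrable_rpow' (a := t - a) (b := t - b) (r := p - 1) (by linarith)).comp_sub_left t
  simpa using h

theorem intervalIntegrable_rlKernel_mul {p : ℝ} (hp : 0 < p) {g : ℝ → ℝ} (hg : Continuous g)
    (t a b : ℝ) :
    IntervalIntegrable (fun s => (t - s) ^ (p - 1) * g s) MeasureTheory.volume a b :=
  (intervalIntegrable_rlKernel hp t a b).mul_continuousOn hg.continuousOn

theorem integral_rlKernel {p : ℝ} (hp : 0 < p) (t a b : ℝ) :
    ∫ s in a..b, (t - s) ^ (p - 1) = ((t - a) ^ p - (t - b) ^ p) / p := by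
  rw [intervalIntegral.integral_comp_sub_left (fun u => u ^ (p - 1)) t,
    integral_rpow (Or.inl (by linarith))]
  simp

theorem abs_integral_rlKernel_mul_le {p : ℝ} (hp : 0 < p) {g : ℝ → ℝ} {a t M : ℝ} (ha : a ≤ t)
    (hM : ∀ s ∈ Icc a t, |g s| ≤ M) :
    |∫ s in a..t, (t - s) ^ (p - 1) * g s| ≤ M * ((t - a) ^ p / p) := by
  have h := intervalIntegral.norm_integral_le_of_norm_le (f := fun s => (t - s) ^ (p - 1) * g s)
    (g := fun s => M * (t - s) ^ (p - 1)) (a := a) (b := t) (μ := MeasureTheory.volume) ha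
    (MeasureTheory.ae_of_all _ fun s hs => by
      have h0 : 0 ≤ (t - s) ^ (p - 1) := Real.rpow_nonneg (by linarith [hs.2]) _
      rw [Real.norm_eq_abs, abs_mul, abs_of_nonneg h0, mul_comm]
      exact mul_le_mul_of_nonneg_right (hM s ⟨hs.1.le, hs.2⟩) h0)
    ((intervalIntegrable_rlKernel hp t a t).const_mul M)
  rw [intervalIntegral.integral_const_mul, integral_rlKernel hp, sub_self,
    Real.zero_rpow hp.ne', sub_zero] at h
  exact h

theorem abs_rlInt_le {p : ℝ} (hp : 0 < p) {g : ℝ → ℝ} {t M : ℝ} (ht : t ∈ Icc (0:ℝ) 1)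
    (hM : ∀ s ∈ Icc (0:ℝ) 1, |g s| ≤ M) : |rlInt p g t| ≤ M / p := by
  have h := abs_integral_rlKernel_mul_le hp (g := g) (M := M) ht.1
    (fun s hs => hM s ⟨hs.1, hs.2.trans ht.2⟩)
  have hM0 : 0 ≤ M := (abs_nonneg _).trans (hM 0 ⟨le_rfl, zero_le_one⟩)
  refine h.trans ?_
  rw [sub_zero, div_eq_mul_inv M, div_eq_mul_inv (t ^ p)]
  refine mul_le_mul_of_nonneg_left ?_ hM0
  exact mul_le_of_le_one_left (inv_nonneg.mpr hp.le) (Real.rpow_le_one ht.1 ht.2 hp.le)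

/-- Modulus of continuity of Riemann–Liouville integrals of order `p`, up to a constant. -/
noncomputable def rlMod (p t t' : ℝ) : ℝ := |t' ^ p - t ^ p| + 2 * |t' - t| ^ p

/-- The difference of two kernels has constant sign, so its `L¹` norm is computed exactly. -/
theorem integral_abs_rlKernel_sub_le {p t t' : ℝ} (hp : 0 < p) (ht : 0 ≤ t) (htt : t ≤ t') :
    ∫ s in (0:ℝ)..t, |(t' - s) ^ (p - 1) - (t - s) ^ (p - 1)|
      ≤ (|t' ^ p - t ^ p| + (t' - t) ^ p) / p := by
  have hint : ∫ s in (0:ℝ)..t, ((t' - s) ^ (p - 1) - (t - s) ^ (p - 1))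
      = (t' ^ p - t ^ p - (t' - t) ^ p) / p := by
    rw [intervalIntegral.integral_sub (intervalIntegrable_rlKernel hp _ _ _)
      (intervalIntegrable_rlKernel hp _ _ _), integral_rlKernel hp, integral_rlKernel hp,
      sub_self, Real.zero_rpow hp.ne']
    simp only [sub_zero]
    ring
  have hd0 : 0 ≤ (t' - t) ^ p := Real.rpow_nonneg (by linarith) _
  -- the kernel is monotone in `t`, increasing or decreasing according to the sign of `p - 1`
  rcases le_total 1 p with h1 | h1
  · have : ∫ s in (0:ℝ)..t, |(t' - s) ^ (p - 1) - (t - s) ^ (p - 1)|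
        = ∫ s in (0:ℝ)..t, ((t' - s) ^ (p - 1) - (t - s) ^ (p - 1)) := by
      refine intervalIntegral.integral_congr fun s hs => ?_
      rw [uIcc_of_le ht] at hs
      refine abs_of_nonneg (sub_nonneg.mpr ?_)
      exact Real.rpow_le_rpow (by linarith [hs.2]) (by linarith) (by linarith)
    rw [this, hint]
    gcongr
    linarith [le_abs_self (t' ^ p - t ^ p)]
  · have : ∫ s in (0:ℝ)..t, |(t' - s) ^ (p - 1) - (t - s) ^ (p - 1)|
        = ∫ s in (0:ℝ)..t, -((t' - s) ^ (p - 1) - (t - s) ^ (p - 1)) := by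
      refine intervalIntegral.integral_congr_ae ?_
      have hne : ∀ᵐ s : ℝ ∂MeasureTheory.volume, s ≠ t := MeasureTheory.Measure.ae_ne _ t
      filter_upwards [hne] with s hst hs
      rw [uIoc_of_le ht] at hs
      refine abs_of_nonpos (sub_nonpos.mpr ?_)
      exact Real.rpow_le_rpow_of_nonpos (by linarith [lt_of_le_of_ne hs.2 hst]) (by linarith)
        (by linarith)
    rw [this, intervalIntegral.integral_neg, hint, ← neg_div]
    gcongr
    linarith [neg_abs_le (t' ^ p - t ^ p)]

theorem abs_rlInt_sub_le {p : ℝ} (hp : 0 < p) {g : ℝ → ℝ} (hg : Continuous g) {M t t' : ℝ}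
    (hM : ∀ s ∈ Icc (0:ℝ) 1, |g s| ≤ M) (ht : t ∈ Icc (0:ℝ) 1) (ht' : t' ∈ Icc (0:ℝ) 1) :
    |rlInt p g t' - rlInt p g t| ≤ M / p * rlMod p t t' := by
  wlog htt : t ≤ t' generalizing t t'
  · have := this ht' ht (le_of_not_ge htt)
    rw [abs_sub_comm, rlMod, abs_sub_comm (t' ^ p), abs_sub_comm t' t]
    exact this
  have hM0 : 0 ≤ M := (abs_nonneg _).trans (hM 0 ⟨le_rfl, zero_le_one⟩)
  have hsplit : rlInt p g t' - rlInt p g t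
      = (∫ s in (0:ℝ)..t, ((t' - s) ^ (p - 1) - (t - s) ^ (p - 1)) * g s)
        + ∫ s in t..t', (t' - s) ^ (p - 1) * g s := by
    simp_rw [sub_mul]
    rw [intervalIntegral.integral_sub (intervalIntegrable_rlKernel_mul hp hg _ _ _)
      (intervalIntegrable_rlKernel_mul hp hg _ _ _), rlInt, rlInt,
      ← intervalIntegral.integral_add_adjacent_intervals
        (intervalIntegrable_rlKernel_mul hp hg t' 0 t) (intervalIntegrable_rlKernel_mul hp hg t' t t')]
    ring
  have h1 : |∫ s in (0:ℝ)..t, ((t' - s) ^ (p - 1) - (t - s) ^ (p - 1)) * g s|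
      ≤ M * ((|t' ^ p - t ^ p| + (t' - t) ^ p) / p) := by
    have h := intervalIntegral.norm_integral_le_of_norm_le
      (f := fun s => ((t' - s) ^ (p - 1) - (t - s) ^ (p - 1)) * g s)
      (g := fun s => M * |(t' - s) ^ (p - 1) - (t - s) ^ (p - 1)|) (a := 0) (b := t)
      (μ := MeasureTheory.volume) ht.1
      (MeasureTheory.ae_of_all _ fun s hs => by
        rw [Real.norm_eq_abs, abs_mul, mul_comm]
        exact mul_le_mul_of_nonneg_right (hM s ⟨hs.1.le, hs.2.trans ht.2⟩) (abs_nonneg _))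
      ((((intervalIntegrable_rlKernel hp t' 0 t).sub
        (intervalIntegrable_rlKernel hp t 0 t)).abs).const_mul M)
    rw [intervalIntegral.integral_const_mul] at h
    exact h.trans (mul_le_mul_of_nonneg_left (integral_abs_rlKernel_sub_le hp ht.1 htt) hM0)
  have h2 := abs_integral_rlKernel_mul_le hp (g := g) (M := M) htt
    (fun s hs => hM s ⟨ht.1.trans hs.1, hs.2.trans ht'.2⟩)
  rw [hsplit]
  refine (abs_add_le _ _).trans ((add_le_add h1 h2).trans_eq ?_)
  rw [rlMod, abs_of_nonneg (sub_nonneg.mpr htt)]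
  ring

theorem rlInt_sub {p : ℝ} (hp : 0 < p) {g₁ g₂ : ℝ → ℝ} (h₁ : Continuous g₁) (h₂ : Continuous g₂)
    (t : ℝ) : rlInt p g₁ t - rlInt p g₂ t = rlInt p (fun s => g₁ s - g₂ s) t := by
  simp only [rlInt]
  rw [← intervalIntegral.integral_sub (intervalIntegrable_rlKernel_mul hp h₁ _ _ _)
    (intervalIntegrable_rlKernel_mul hp h₂ _ _ _)]
  simp_rw [mul_sub]

theorem tendsto_rlMod {p : ℝ} (hp : 0 < p) (t : ℝ) :
    Filter.Tendsto (fun t' => rlMod p t t') (nhds t) (nhds 0) := by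
  have hc : Continuous fun t' => rlMod p t t' := by
    have h := Real.continuous_rpow_const hp.le
    have h2 : Continuous fun t' : ℝ => |t' - t| ^ p := h.comp (by fun_prop)
    unfold rlMod
    fun_prop
  have h := hc.tendsto t
  simpa [rlMod, Real.zero_rpow hp.ne'] using h

theorem continuousOn_rlInt {p : ℝ} (hp : 0 < p) {g : ℝ → ℝ} (hg : Continuous g) :
    ContinuousOn (rlInt p g) (Icc 0 1) := by
  obtain ⟨M, hM⟩ := isCompact_Icc.exists_bound_of_continuousOn (hg.continuousOn (s := Icc (0:ℝ) 1))
  intro t ht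
  rw [ContinuousWithinAt, tendsto_iff_norm_sub_tendsto_zero]
  have h0 : Filter.Tendsto (fun t' => M / p * rlMod p t t') (nhdsWithin t (Icc 0 1)) (nhds 0) := by
    simpa using ((tendsto_rlMod hp t).mono_left nhdsWithin_le_nhds).const_mul (M / p)
  refine squeeze_zero' (Filter.Eventually.of_forall fun _ => norm_nonneg _) ?_ h0
  filter_upwards [self_mem_nhdsWithin] with t' ht'
  exact abs_rlInt_sub_le hp hg hM ht ht'

theorem rlInt_one (g : ℝ → ℝ) (t : ℝ) : rlInt 1 g t = ∫ s in (0:ℝ)..t, g s := by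
  simp [rlInt]

theorem hasDerivAt_rlInt_one {g : ℝ → ℝ} (hg : Continuous g) (t : ℝ) :
    HasDerivAt (rlInt 1 g) (g t) t := by
  have := hg.integral_hasStrictDerivAt 0 t
  rw [show rlInt 1 g = fun t => ∫ s in (0:ℝ)..t, g s from funext (rlInt_one g)]
  exact this.hasDerivAt

theorem continuous_rlInt_one {g : ℝ → ℝ} (hg : Continuous g) : Continuous (rlInt 1 g) :=
  continuous_iff_continuousAt.mpr fun t => (hasDerivAt_rlInt_one hg t).continuousAt

/-- Integration by parts: the integral of order `p + 1` of `g` in terms of its primitive. -/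
theorem rlInt_add_one {p : ℝ} (hp : 0 < p) {g : ℝ → ℝ} (hg : Continuous g) {t : ℝ} (ht : 0 ≤ t) :
    rlInt (p + 1) g t = p * rlInt p (rlInt 1 g) t := by
  have hY := continuous_rlInt_one hg
  have hi1 := intervalIntegrable_rlKernel_mul (p := p + 1) (by linarith) hg t 0 t
  have hi2 := (intervalIntegrable_rlKernel_mul hp hY t 0 t).const_mul p
  have h := intervalIntegral.integral_eq_sub_of_hasDerivAt_of_le
    (f := fun s => (t - s) ^ p * rlInt 1 g s)
    (f' := fun s => (t - s) ^ (p + 1 - 1) * g s - p * ((t - s) ^ (p - 1) * rlInt 1 g s)) ht ?_ ?_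
    (hi1.sub hi2)
  · rw [intervalIntegral.integral_sub hi1 hi2, intervalIntegral.integral_const_mul, sub_self,
      Real.zero_rpow hp.ne', rlInt_one g 0, intervalIntegral.integral_same] at h
    simp only [rlInt] at h ⊢
    linarith
  · refine Continuous.continuousOn (Continuous.mul ?_ hY)
    exact (Real.continuous_rpow_const hp.le).comp (by fun_prop)
  · intro s hs
    have h1 : HasDerivAt (fun s => (t - s) ^ p) (-1 * p * (t - s) ^ (p - 1)) s :=
      ((hasDerivAt_id s).const_sub t).rpow_const (Or.inl (by simpa using (sub_pos.mpr hs.2).ne'))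
    have h2 := h1.mul (hasDerivAt_rlInt_one hg s)
    refine h2.congr_deriv ?_
    rw [add_sub_cancel_right]
    ring

theorem rlInt_eq_integral_rpow_mul (p : ℝ) (g : ℝ → ℝ) (t : ℝ) :
    rlInt p g t = ∫ v in (0:ℝ)..t, v ^ (p - 1) * g (t - v) := by
  have h := intervalIntegral.integral_comp_sub_left (a := 0) (b := t)
    (fun v => v ^ (p - 1) * g (t - v)) t
  simpa [rlInt] using h

/-- Fubini on the triangle `0 ≤ v ≤ u ≤ t`: integration commutes with `rlInt p`. -/
theorem integral_rlInt {p : ℝ} (hp : 0 < p) {g : ℝ → ℝ} (hg : Continuous g) {t : ℝ} (ht : 0 ≤ t) :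
    ∫ u in (0:ℝ)..t, rlInt p g u = rlInt p (rlInt 1 g) t := by
  let b : ℝ → ℝ → ℝ := fun u v => {v | v ≤ u}.indicator (fun v => g (u - v)) v
  have h1 : ∫ u in (0:ℝ)..t, rlInt p g u
      = ∫ u in (0:ℝ)..t, ∫ v in (0:ℝ)..t, v ^ (p - 1) * b u v := by
    refine intervalIntegral.integral_congr fun u hu => ?_
    rw [uIcc_of_le ht] at hu
    simp only [rlInt_eq_integral_rpow_mul]
    rw [← intervalIntegral.integral_indicator hu]
    refine intervalIntegral.integral_congr fun v _ => ?_
    by_cases hv : v ≤ u <;> simp [b, Set.indicator, hv]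
  have hswap : ∫ u in (0:ℝ)..t, ∫ v in (0:ℝ)..t, v ^ (p - 1) * b u v
      = ∫ v in (0:ℝ)..t, ∫ u in (0:ℝ)..t, v ^ (p - 1) * b u v := by
    simp_rw [intervalIntegral.integral_of_le ht]
    refine MeasureTheory.integral_integral_swap ?_
    have hk : MeasureTheory.Integrable (fun v : ℝ => v ^ (p - 1))
        (MeasureTheory.volume.restrict (Ioc 0 t)) :=
      (intervalIntegrable_iff_integrableOn_Ioc_of_le ht).mp
        (intervalIntegrable_rpow' (by linarith))
    have hk2 := hk.comp_snd (MeasureTheory.volume.restrict (Ioc (0:ℝ) t))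
    obtain ⟨M, hM⟩ := isCompact_Icc.exists_bound_of_continuousOn
      (hg.continuousOn (s := Icc (0:ℝ) t))
    refine hk2.mul_bdd (c := M) ?_ ?_
    · have hm : Measurable (fun z : ℝ × ℝ => {z : ℝ × ℝ | z.2 ≤ z.1}.indicator
          (fun z => g (z.1 - z.2)) z) := by
        refine Measurable.indicator ?_ (measurableSet_le measurable_snd measurable_fst)
        exact (hg.comp (continuous_fst.sub continuous_snd)).measurable
      exact hm.aestronglyMeasurable
    · rw [MeasureTheory.Measure.prod_restrict]
      refine MeasureTheory.ae_restrict_of_forall_mem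
        (measurableSet_Ioc.prod measurableSet_Ioc) fun z hz => ?_
      have hM0 : 0 ≤ M := (norm_nonneg _).trans (hM 0 ⟨le_rfl, ht⟩)
      by_cases hv : z.2 ≤ z.1
      · simp only [b, Set.indicator, mem_ofPred_eq, hv, if_true]
        exact hM _ ⟨by linarith, by linarith [hz.1.2, hz.2.1]⟩
      · simpa [b, Set.indicator, hv] using hM0
  rw [h1, hswap, rlInt_eq_integral_rpow_mul]
  refine intervalIntegral.integral_congr fun v hv => ?_
  rw [uIcc_of_le ht] at hv
  simp only [intervalIntegral.integral_const_mul]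
  congr 1
  have e1 : EqOn (fun _ => (0:ℝ)) (fun u => b u v) (Ioo 0 v) := fun u hu => by
    simp [b, Set.indicator, hu.2]
  have e2 : EqOn (fun u => g (u - v)) (fun u => b u v) (Icc v t) := fun u hu => by
    simp [b, Set.indicator, hu.1]
  have i1 : IntervalIntegrable (fun u => b u v) MeasureTheory.volume 0 v :=
    IntervalIntegrable.congr_ae (f := fun _ => (0:ℝ)) (by simp) (by
      rw [uIoc_of_le hv.1, ← MeasureTheory.restrict_Ioo_eq_restrict_Ioc]
      exact (MeasureTheory.ae_restrict_iff' measurableSet_Ioo).mpr (MeasureTheory.ae_of_all _ e1))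
  have i2 : IntervalIntegrable (fun u => b u v) MeasureTheory.volume v t :=
    ((hg.comp (continuous_id.sub continuous_const)).intervalIntegrable v t).congr (by
      rw [uIoc_of_le hv.2]; exact e2.mono Ioc_subset_Icc_self)
  rw [← intervalIntegral.integral_add_adjacent_intervals i1 i2]
  have j1 : ∫ u in (0:ℝ)..v, b u v = 0 := by
    rw [intervalIntegral.integral_of_le hv.1, MeasureTheory.integral_Ioc_eq_integral_Ioo,
      ← MeasureTheory.setIntegral_congr_fun measurableSet_Ioo e1]
    simp
  have j2 : ∫ u in v..t, b u v = rlInt 1 g (t - v) := by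
    rw [rlInt_one, ← intervalIntegral.integral_congr (by rw [uIcc_of_le hv.2]; exact e2)]
    simp
  rw [j1, j2, zero_add]

/-- The truncated kernel, as it occurs in the Green functions. -/
theorem rlKernel_indicator {p : ℝ} (hp : 0 < p) {g : ℝ → ℝ} (hg : Continuous g) {t : ℝ}
    (ht : t ∈ Icc (0:ℝ) 1) :
    IntervalIntegrable (fun s => (if s ≤ t then (t - s) ^ (p - 1) else 0) * g s)
        MeasureTheory.volume 0 1 ∧
      ∫ s in (0:ℝ)..1, (if s ≤ t then (t - s) ^ (p - 1) else 0) * g s = rlInt p g t := by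
  have heq : (fun s => (if s ≤ t then (t - s) ^ (p - 1) else 0) * g s)
      = {s | s ≤ t}.indicator (fun s => (t - s) ^ (p - 1) * g s) := by
    funext s
    by_cases hs : s ≤ t <;> simp [hs]
  rw [heq]
  refine ⟨?_, intervalIntegral.integral_indicator ht⟩
  have h := intervalIntegrable_rlKernel_mul hp hg t 0 1
  rw [intervalIntegrable_iff] at h ⊢
  exact h.indicator measurableSet_Iic

/-- The kernel `(1 - s) ^ (α - 2)` is not integrable on `[0,1]`, but its product with a `C¹` function
vanishing at `1` is, and integration by parts applies. -/
theorem integral_singular_kernel {α : ℝ} (hα0 : 0 < α) (hα1 : α ≤ 1) {g : ℝ → ℝ}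
    (hg : Continuous g) (h1 : rlInt 1 g 1 = 0) :
    IntervalIntegrable (fun s => (α - 1) * ((1 - s) ^ (α - 2) * rlInt 1 g s))
        MeasureTheory.volume 0 1 ∧
      ∫ s in (0:ℝ)..1, (α - 1) * ((1 - s) ^ (α - 2) * rlInt 1 g s) = rlInt α g 1 := by
  rcases hα1.lt_or_eq with hα | rfl
  swap
  · simp [h1]
  have hY := continuous_rlInt_one hg
  obtain ⟨M, hM⟩ := isCompact_Icc.exists_bound_of_continuousOn (hg.continuousOn (s := Icc (0:ℝ) 1))
  have hM0 : 0 ≤ M := (norm_nonneg _).trans (hM 0 ⟨le_rfl, zero_le_one⟩)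
  have hYb : ∀ s ∈ Icc (0:ℝ) 1, |rlInt 1 g s| ≤ M * (1 - s) := by
    intro s hs
    have hsub : rlInt 1 g 1 - rlInt 1 g s = ∫ u in s..1, g u := by
      rw [rlInt_one, rlInt_one, intervalIntegral.integral_interval_sub_left
        (hg.intervalIntegrable _ _) (hg.intervalIntegrable _ _)]
    rw [h1, zero_sub] at hsub
    rw [← abs_neg, hsub]
    have := intervalIntegral.norm_integral_le_of_norm_le_const (f := g) (a := s) (b := 1) (C := M)
      (fun u hu => by
        rw [uIoc_of_le hs.2] at hu
        exact hM u ⟨hs.1.trans hu.1.le, hu.2⟩)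
    rwa [abs_of_nonneg (sub_nonneg.mpr hs.2)] at this
  have hi1 : IntervalIntegrable (fun s => (α - 1) * ((1 - s) ^ (α - 2) * rlInt 1 g s))
      MeasureTheory.volume 0 1 := by
    refine IntervalIntegrable.const_mul ?_ _
    refine ((intervalIntegrable_rlKernel hα0 1 0 1).const_mul M).mono_fun' ?_ ?_
    · refine Measurable.aestronglyMeasurable ?_
      have := hY.measurable
      fun_prop
    · rw [uIoc_of_le zero_le_one, ← MeasureTheory.restrict_Ioo_eq_restrict_Ioc]
      refine MeasureTheory.ae_restrict_of_forall_mem measurableSet_Ioo fun s hs => ?_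
      have hs1 : 0 < 1 - s := sub_pos.mpr hs.2
      have h0 : 0 ≤ (1 - s) ^ (α - 2) := Real.rpow_nonneg hs1.le _
      change ‖(1 - s) ^ (α - 2) * rlInt 1 g s‖ ≤ M * (1 - s) ^ (α - 1)
      rw [Real.norm_eq_abs, abs_mul, abs_of_nonneg h0,
        show α - 1 = (α - 2) + 1 by ring, Real.rpow_add_one hs1.ne']
      calc _ ≤ (1 - s) ^ (α - 2) * (M * (1 - s)) :=
            mul_le_mul_of_nonneg_left (hYb s ⟨hs.1.le, hs.2.le⟩) h0
        _ = _ := by ring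
  have hi2 := intervalIntegrable_rlKernel_mul hα0 hg 1 0 1
  refine ⟨hi1, ?_⟩
  have h := intervalIntegral.integral_eq_sub_of_hasDerivAt_of_le (a := 0) (b := 1)
    (f := fun s => -((1 - s) ^ (α - 1) * rlInt 1 g s))
    (f' := fun s => (α - 1) * ((1 - s) ^ (α - 2) * rlInt 1 g s) - (1 - s) ^ (α - 1) * g s)
    zero_le_one ?_ ?_ (hi1.sub hi2)
  · rw [intervalIntegral.integral_sub hi1 hi2, h1, rlInt_one g 0,
      intervalIntegral.integral_same] at h
    simp only [rlInt] at h ⊢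
    linarith
  · intro s hs
    rcases hs.2.lt_or_eq with hs1 | rfl
    · refine ContinuousAt.continuousWithinAt (ContinuousAt.neg (ContinuousAt.mul ?_ hY.continuousAt))
      exact ContinuousAt.rpow_const (by fun_prop) (Or.inl (sub_pos.mpr hs1).ne')
    · rw [ContinuousWithinAt, h1, mul_zero, neg_zero]
      have hlim : Filter.Tendsto (fun s : ℝ => M * (1 - s) ^ α) (nhdsWithin 1 (Icc 0 1))
          (nhds 0) := by
        have hc : Continuous fun s : ℝ => M * (1 - s) ^ α :=
          continuous_const.mul ((Real.continuous_rpow_const hα0.le).comp (by fun_prop))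
        have := (hc.tendsto 1).mono_left (nhdsWithin_le_nhds (s := Icc (0:ℝ) 1))
        simpa [Real.zero_rpow hα0.ne'] using this
      refine squeeze_zero_norm' ?_ hlim
      filter_upwards [self_mem_nhdsWithin] with s hs
      rcases hs.2.lt_or_eq with hs1 | rfl
      · have hs1' : 0 < 1 - s := sub_pos.mpr hs1
        have h0 : 0 ≤ (1 - s) ^ (α - 1) := Real.rpow_nonneg hs1'.le _
        rw [norm_neg, Real.norm_eq_abs, abs_mul, abs_of_nonneg h0]
        calc _ ≤ (1 - s) ^ (α - 1) * (M * (1 - s)) := mul_le_mul_of_nonneg_left (hYb s hs) h0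
          _ = M * ((1 - s) ^ (α - 1) * (1 - s)) := by ring
          _ = _ := by rw [← Real.rpow_add_one hs1'.ne', sub_add_cancel]
      · rw [h1]
        simp [Real.zero_rpow hα0.ne']
  · intro s hs
    have hd : HasDerivAt (fun s => (1 - s) ^ (α - 1)) (-1 * (α - 1) * (1 - s) ^ (α - 1 - 1)) s :=
      ((hasDerivAt_id s).const_sub 1).rpow_const (Or.inl (by simpa using (sub_pos.mpr hs.2).ne'))
    refine (hd.mul (hasDerivAt_rlInt_one hg s)).neg.congr_deriv ?_
    rw [show α - 1 - 1 = α - 2 by ring]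
    ring

/-! ### Compactness of fractional integration on `C([0,1])` -/

/-- `rlInt p` as an operator on `C([0,1])`, a function being extended to `ℝ` by its end values. -/
noncomputable def rlOp (p : ℝ) (hp : 0 < p) (F : C(Icc (0:ℝ) 1, ℝ)) : C(Icc (0:ℝ) 1, ℝ) :=
  ⟨fun t => rlInt p (IccExtend zero_le_one F) t,
    (continuousOn_rlInt hp F.continuous.Icc_extend').domRestrict⟩

theorem abs_IccExtend_le {F : C(Icc (0:ℝ) 1, ℝ)} {M : ℝ} (hM : ∀ s, |F s| ≤ M) (s : ℝ) :
    |IccExtend zero_le_one F s| ≤ M := hM _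

theorem continuous_rlOp (p : ℝ) (hp : 0 < p) : Continuous (rlOp p hp) := by
  refine (LipschitzWith.of_dist_le_mul (K := Real.toNNReal (1 / p)) fun F₁ F₂ => ?_).continuous
  rw [Real.coe_toNNReal _ (by positivity), ContinuousMap.dist_le (by positivity)]
  intro t
  change |rlInt p _ t - rlInt p _ t| ≤ _
  rw [rlInt_sub hp F₁.continuous.Icc_extend' F₂.continuous.Icc_extend', one_div_mul_eq_div]
  exact abs_rlInt_le hp t.2 fun s _ => ContinuousMap.dist_apply_le_dist (f := F₁) (g := F₂) _

/-- The functions on `[0,1]` bounded by `C` and with modulus of continuity `C * rlMod p`. -/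
def rlCompact (p C : ℝ) : Set C(Icc (0:ℝ) 1, ℝ) :=
  {u | (∀ t, |u t| ≤ C) ∧ ∀ t t' : Icc (0:ℝ) 1, |u t' - u t| ≤ C * rlMod p t t'}

theorem rlOp_mem_rlCompact {p : ℝ} (hp : 0 < p) {F : C(Icc (0:ℝ) 1, ℝ)} {M : ℝ}
    (hM : ∀ s, |F s| ≤ M) : rlOp p hp F ∈ rlCompact p (M / p) :=
  ⟨fun t => abs_rlInt_le hp t.2 fun s _ => abs_IccExtend_le hM s,
    fun t t' => abs_rlInt_sub_le hp F.continuous.Icc_extend'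
      (fun s _ => abs_IccExtend_le hM s) t.2 t'.2⟩

/-- Arzelà–Ascoli: the set is pointwise closed and bounded, and equicontinuous. -/
theorem isCompact_rlCompact {p : ℝ} (hp : 0 < p) (C : ℝ) : IsCompact (rlCompact p C) := by
  have htend : ∀ t : Icc (0:ℝ) 1,
      Filter.Tendsto (fun t' : Icc (0:ℝ) 1 => C * rlMod p t t') (nhds t) (nhds 0) := fun t => by
    simpa using ((tendsto_rlMod hp (t:ℝ)).comp (continuous_subtype_val.tendsto t)).const_mul C
  refine ArzelaAscoli.isCompact_of_equicontinuous _ ?_ ?_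
  · have himage : ContinuousMap.toFun '' rlCompact p C =
        {u : Icc (0:ℝ) 1 → ℝ | (∀ t, |u t| ≤ C) ∧ ∀ t t', |u t' - u t| ≤ C * rlMod p t t'} := by
      ext u
      constructor
      · rintro ⟨v, hv, rfl⟩
        exact hv
      · intro hu
        refine ⟨⟨u, continuous_iff_continuousAt.mpr fun t => ?_⟩, hu, rfl⟩
        rw [ContinuousAt, tendsto_iff_norm_sub_tendsto_zero]
        exact squeeze_zero (fun _ => norm_nonneg _) (fun t' => hu.2 t t') (htend t)
    rw [himage]
    refine IsCompact.of_isClosed_subset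
      (isCompact_univ_pi fun _ : Icc (0:ℝ) 1 => isCompact_Icc (a := -C) (b := C)) ?_
      fun u hu t _ => abs_le.mp (hu.1 t)
    simp only [ofPred_and, ofPred_forall]
    exact (isClosed_iInter fun t => isClosed_le (by fun_prop) continuous_const).inter
      (isClosed_iInter fun t => isClosed_iInter fun t' =>
        isClosed_le (by fun_prop) continuous_const)
  · intro t
    rw [Metric.equicontinuousAt_iff_right]
    intro ε hε
    filter_upwards [(htend t).eventually (gt_mem_nhds hε)] with t' ht' u
    rw [dist_comm]
    exact (u.2.2 t t').trans_lt ht'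

/-! ### The fixed point problem for the derivative -/

/-- The function `t ^ α - t ^ (α + 1)`, which up to the factor `(α + 1) * (α + 2)` is the derivative
of the coefficient `(α + 2) * t ^ (α + 1) - (α + 1) * t ^ (α + 2)` in the Green functions. -/
noncomputable def bdryFunA (α : ℝ) (hα : 0 < α) : C(Icc (0:ℝ) 1, ℝ) :=
  ⟨fun t => (t:ℝ) ^ α - (t:ℝ) ^ (α + 1), by
    have h1 := Real.continuous_rpow_const hα.le
    have h2 := Real.continuous_rpow_const (q := α + 1) (by linarith)
    exact (h1.sub h2).comp continuous_subtype_val⟩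

/-- The function `(α + 2) * t ^ (α + 1) - (α + 1) * t ^ α`, the derivative of the coefficient
`t ^ (α + 2) - t ^ (α + 1)` in the Green functions. -/
noncomputable def bdryFunB (α : ℝ) (hα : 0 < α) : C(Icc (0:ℝ) 1, ℝ) :=
  ⟨fun t => (α + 2) * (t:ℝ) ^ (α + 1) - (α + 1) * (t:ℝ) ^ α, by
    have h1 := Real.continuous_rpow_const hα.le
    have h2 := Real.continuous_rpow_const (q := α + 1) (by linarith)
    exact ((h2.const_mul _).sub (h1.const_mul _)).comp continuous_subtype_val⟩

theorem abs_bdryFunA_le {α : ℝ} (hα : 0 < α) (t : Icc (0:ℝ) 1) : |bdryFunA α hα t| ≤ 1 := by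
  have h1 := Real.rpow_nonneg t.2.1 α
  have h2 := Real.rpow_nonneg t.2.1 (α + 1)
  have h3 := Real.rpow_le_one t.2.1 t.2.2 hα.le
  have h4 := Real.rpow_le_one t.2.1 t.2.2 (z := α + 1) (by linarith)
  change |(t:ℝ) ^ α - (t:ℝ) ^ (α + 1)| ≤ 1
  rw [abs_le]
  constructor <;> linarith

theorem abs_bdryFunB_le {α : ℝ} (hα : 0 < α) (t : Icc (0:ℝ) 1) :
    |bdryFunB α hα t| ≤ 2 * α + 3 := by
  have h1 := Real.rpow_nonneg t.2.1 α
  have h2 := Real.rpow_nonneg t.2.1 (α + 1)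
  have h3 := Real.rpow_le_one t.2.1 t.2.2 hα.le
  have h4 := Real.rpow_le_one t.2.1 t.2.2 (z := α + 1) (by linarith)
  change |(α + 2) * (t:ℝ) ^ (α + 1) - (α + 1) * (t:ℝ) ^ α| ≤ 2 * α + 3
  rw [abs_le]
  constructor <;> nlinarith

/-- The derivative of the right-hand side of the integral equation, as a function of the
fractional integrals `u₁`, `u₂` of orders `q - 1`, `q` of the nonlinearity and `u₃`, `u₄` of
orders `α`, `α + 1` of the derivative of the unknown, where `q = α + β`. -/
noncomputable def langevinMap (α q γ : ℝ) (hα : 0 < α)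
    (u : C(Icc (0:ℝ) 1, ℝ) × C(Icc (0:ℝ) 1, ℝ) × C(Icc (0:ℝ) 1, ℝ) × C(Icc (0:ℝ) 1, ℝ)) :
    C(Icc (0:ℝ) 1, ℝ) :=
  (1 / Real.Gamma q) • ((q - 1) • (u.1 - u.1 1 • bdryFunB α hα)
      - ((α + 1) * (α + 2) * u.2.1 1) • bdryFunA α hα)
    + (γ / Real.Gamma α) • (-(u.2.2.1 - u.2.2.1 1 • bdryFunB α hα)
      + ((α + 1) * (α + 2) / α * u.2.2.2 1) • bdryFunA α hα)

theorem continuous_langevinMap (α q γ : ℝ) (hα : 0 < α) : Continuous (langevinMap α q γ hα) := by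
  have h1 : Continuous fun v : C(Icc (0:ℝ) 1, ℝ) => v 1 := continuous_eval_const 1
  unfold langevinMap
  fun_prop

theorem langevinMap_apply (α q γ : ℝ) (hα : 0 < α)
    (u : C(Icc (0:ℝ) 1, ℝ) × C(Icc (0:ℝ) 1, ℝ) × C(Icc (0:ℝ) 1, ℝ) × C(Icc (0:ℝ) 1, ℝ))
    (t : Icc (0:ℝ) 1) :
    langevinMap α q γ hα u t =
      1 / Real.Gamma q * ((q - 1) * (u.1 t - u.1 1 * bdryFunB α hα t)
        - (α + 1) * (α + 2) * u.2.1 1 * bdryFunA α hα t)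
      + γ / Real.Gamma α * (-(u.2.2.1 t - u.2.2.1 1 * bdryFunB α hα t)
        + (α + 1) * (α + 2) / α * u.2.2.2 1 * bdryFunA α hα t) := rfl

theorem abs_langevinMap_le {α q γ M r : ℝ} (hα : 0 < α) (hq : 1 < q)
    (u : C(Icc (0:ℝ) 1, ℝ) × C(Icc (0:ℝ) 1, ℝ) × C(Icc (0:ℝ) 1, ℝ) × C(Icc (0:ℝ) 1, ℝ))
    (h₁ : ∀ t, |u.1 t| ≤ M / (q - 1)) (h₂ : ∀ t, |u.2.1 t| ≤ M / q)
    (h₃ : ∀ t, |u.2.2.1 t| ≤ r / α) (h₄ : ∀ t, |u.2.2.2 t| ≤ r / (α + 1)) (t : Icc (0:ℝ) 1) :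
    |langevinMap α q γ hα u t| ≤
      ((2 * α + 4) / Real.Gamma q + (α + 1) * (α + 2) / Real.Gamma (q + 1)) * M
        + |γ| * (3 * α + 6) / Real.Gamma (α + 1) * r := by
  have hq1 : 0 < q - 1 := by linarith
  have hq0 : 0 < q := by linarith
  have hΓq := Real.Gamma_pos_of_pos hq0
  have hΓα := Real.Gamma_pos_of_pos hα
  have hA := abs_bdryFunA_le hα t
  have hB := abs_bdryFunB_le hα t
  have hM : 0 ≤ M / (q - 1) := (abs_nonneg _).trans (h₁ t)
  have hM2 : 0 ≤ M / q := (abs_nonneg _).trans (h₂ t)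
  have hr3 : 0 ≤ r / α := (abs_nonneg _).trans (h₃ t)
  have hr4 : 0 ≤ r / (α + 1) := (abs_nonneg _).trans (h₄ t)
  have key : ∀ (v : C(Icc (0:ℝ) 1, ℝ)) (C : ℝ), (∀ t, |v t| ≤ C) →
      |v t - v 1 * bdryFunB α hα t| ≤ (2 * α + 4) * C := fun v C hC => by
    have hC0 : 0 ≤ C := (abs_nonneg _).trans (hC t)
    calc _ ≤ |v t| + |v 1| * |bdryFunB α hα t| := by
          rw [← abs_mul]; exact abs_sub _ _
      _ ≤ C + C * (2 * α + 3) := by gcongr <;> apply hC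
      _ = _ := by ring
  have k1 : |1 / Real.Gamma q * ((q - 1) * (u.1 t - u.1 1 * bdryFunB α hα t)
        - (α + 1) * (α + 2) * u.2.1 1 * bdryFunA α hα t)| ≤
        1 / Real.Gamma q * ((q - 1) * ((2 * α + 4) * (M / (q - 1)))
          + (α + 1) * (α + 2) * (M / q) * 1) := by
    rw [abs_mul, abs_of_pos (one_div_pos.mpr hΓq)]
    gcongr
    refine (abs_sub _ _).trans ?_
    rw [abs_mul (q - 1), abs_of_pos hq1, abs_mul, abs_mul ((α + 1) * (α + 2)),
      abs_of_pos (by positivity : 0 < (α + 1) * (α + 2))]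
    gcongr
    · exact key _ _ h₁
    · exact h₂ 1
  have k2 : |γ / Real.Gamma α * (-(u.2.2.1 t - u.2.2.1 1 * bdryFunB α hα t)
        + (α + 1) * (α + 2) / α * u.2.2.2 1 * bdryFunA α hα t)| ≤
      |γ| / Real.Gamma α * ((2 * α + 4) * (r / α)
        + (α + 1) * (α + 2) / α * (r / (α + 1)) * 1) := by
    rw [abs_mul, abs_div, abs_of_pos hΓα]
    gcongr
    refine (abs_add_le _ _).trans ?_
    rw [abs_neg, abs_mul, abs_mul ((α + 1) * (α + 2) / α),
      abs_of_pos (by positivity : 0 < (α + 1) * (α + 2) / α)]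
    gcongr
    · exact key _ _ h₃
    · exact h₄ 1
  rw [langevinMap_apply]
  refine (abs_add_le _ _).trans ((add_le_add k1 k2).trans (le_of_eq ?_))
  rw [Real.Gamma_add_one hα.ne', Real.Gamma_add_one hq0.ne']
  field_simp
  ring

/-- The operator is evaluated at the truncation of `y` to `[-r, r]`, which gives an everywhere
defined map with relatively compact range. The a priori bound shows that its fixed point takes
values in `[-r, r]`, so the truncation is inactive there. -/
theorem exists_langevinMap_fixed_point {α q γ M r : ℝ} (hα : 0 < α) (hq1 : 0 < q - 1) (hq : 0 < q)
    (hα1 : 0 < α + 1) (hr : 0 < r) (φ : C(Icc (0:ℝ) 1 × ℝ × ℝ, ℝ))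
    (hφ : ∀ s x y, |x| ≤ r → |y| ≤ r → |φ (s, x, y)| ≤ M)
    (hbound : ((2 * α + 4) / Real.Gamma q + (α + 1) * (α + 2) / Real.Gamma (q + 1)) * M
        + |γ| * (3 * α + 6) / Real.Gamma (α + 1) * r ≤ r) :
    ∃ y F : C(Icc (0:ℝ) 1, ℝ),
      (∀ t : Icc (0:ℝ) 1, F t = φ (t, rlInt 1 (IccExtend zero_le_one y) t, y t)) ∧
      y = langevinMap α q γ hα
        (rlOp (q - 1) hq1 F, rlOp q hq F, rlOp α hα y, rlOp (α + 1) hα1 y) := by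
  let clip : C(ℝ, ℝ) := ⟨fun x => max (-r) (min r x), by fun_prop⟩
  let Z : C(Icc (0:ℝ) 1, ℝ) → C(Icc (0:ℝ) 1, ℝ) := fun y => clip.comp y
  let N : C(Icc (0:ℝ) 1, ℝ) → C(Icc (0:ℝ) 1, ℝ) := fun z =>
    φ.comp ((ContinuousMap.id _).prodMk ((rlOp 1 one_pos z).prodMk z))
  let S : C(Icc (0:ℝ) 1, ℝ) → C(Icc (0:ℝ) 1, ℝ) × C(Icc (0:ℝ) 1, ℝ) × C(Icc (0:ℝ) 1, ℝ) ×
      C(Icc (0:ℝ) 1, ℝ) := fun z =>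
    (rlOp (q - 1) hq1 (N z), rlOp q hq (N z), rlOp α hα z, rlOp (α + 1) hα1 z)
  have hZc : Continuous Z := ContinuousMap.continuous_postcomp clip
  have hNc : Continuous N := by
    refine ContinuousMap.continuous_of_continuous_uncurry _ ?_
    have h1 : Continuous fun w : C(Icc (0:ℝ) 1, ℝ) × Icc (0:ℝ) 1 => rlOp 1 one_pos w.1 w.2 :=
      continuous_eval.comp (((continuous_rlOp 1 one_pos).comp continuous_fst).prodMk continuous_snd)
    exact φ.continuous.comp (continuous_snd.prodMk (h1.prodMk continuous_eval))
  have hSc : Continuous S :=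
    ((continuous_rlOp _ _).comp hNc).prodMk <| ((continuous_rlOp _ _).comp hNc).prodMk <|
      (continuous_rlOp _ _).prodMk (continuous_rlOp _ _)
  have hclip : ∀ x, |clip x| ≤ r := fun x =>
    abs_le.mpr ⟨le_max_left _ _, max_le (by linarith) (min_le_left _ _)⟩
  have hN : ∀ y t, |N (Z y) t| ≤ M := fun y t => by
    refine hφ _ _ _ ?_ (hclip _)
    have := (rlOp_mem_rlCompact one_pos (F := Z y) (M := r) fun s => hclip _).1 t
    simpa using this
  have hS : ∀ y, S (Z y) ∈ rlCompact (q - 1) (M / (q - 1)) ×ˢ rlCompact q (M / q) ×ˢ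
      rlCompact α (r / α) ×ˢ rlCompact (α + 1) (r / (α + 1)) := fun y =>
    ⟨rlOp_mem_rlCompact hq1 (hN y), rlOp_mem_rlCompact hq (hN y),
      rlOp_mem_rlCompact hα fun s => hclip _, rlOp_mem_rlCompact hα1 fun s => hclip _⟩
  obtain ⟨y, hy⟩ := schauder_fixed_point (fun y => langevinMap α q γ hα (S (Z y)))
    ((continuous_langevinMap α q γ hα).comp (hSc.comp hZc)) _
    (((isCompact_rlCompact hq1 _).prod ((isCompact_rlCompact hq _).prod
      ((isCompact_rlCompact hα _).prod (isCompact_rlCompact hα1 _)))).image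
        (continuous_langevinMap α q γ hα)) fun y => ⟨_, hS y, rfl⟩
  have hyr : ∀ t, |y t| ≤ r := fun t => by
    obtain ⟨h1, h2, h3, h4⟩ := hS y
    rw [← hy]
    exact (abs_langevinMap_le hα (by linarith) _ h1.1 h2.1 h3.1 h4.1 t).trans hbound
  have hZy : Z y = y := by
    ext t
    have := abs_le.mp (hyr t)
    change max (-r) (min r (y t)) = y t
    rw [min_eq_right this.2, max_eq_right this.1]
  refine ⟨y, N y, fun t => rfl, ?_⟩
  rw [hZy] at hy
  exact hy.symm

/-! ### Return to the integral equation -/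

/-- The fixed point equation integrated from `0` to `t`, where integration commutes with fractional
integrals and raises their order by one. The right-hand side is that of the integral equation, with
the singular term of `GreenH` already integrated by parts. -/
theorem rlInt_one_fixed_point {α q γ : ℝ} (hα : 0 < α) (hq1 : 0 < q - 1) (hq : 0 < q)
    (hα1 : 0 < α + 1) {y F : C(Icc (0:ℝ) 1, ℝ)} {g h : ℝ → ℝ} (hg : g = IccExtend zero_le_one y)
    (hh : h = IccExtend zero_le_one F)
    (hy : y = langevinMap α q γ hα
        (rlOp (q - 1) hq1 F, rlOp q hq F, rlOp α hα y, rlOp (α + 1) hα1 y))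
    {t : ℝ} (ht : t ∈ Icc (0:ℝ) 1) :
    rlInt 1 g t = 1 / Real.Gamma q * (rlInt q h t
        - (q - 1) * (t ^ (α + 2) - t ^ (α + 1)) * rlInt (q - 1) h 1
        - ((α + 2) * t ^ (α + 1) - (α + 1) * t ^ (α + 2)) * rlInt q h 1)
      + γ / Real.Gamma α * (-rlInt α (rlInt 1 g) t
        + (t ^ (α + 2) - t ^ (α + 1)) * rlInt α g 1
        + ((α + 2) * t ^ (α + 1) - (α + 1) * t ^ (α + 2)) * rlInt α (rlInt 1 g) 1) := by
  have hgc : Continuous g := hg ▸ y.continuous.Icc_extend'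
  have hhc : Continuous h := hh ▸ F.continuous.Icc_extend'
  set c := 1 / Real.Gamma q with hc
  set d := γ / Real.Gamma α with hd
  have hparts : rlInt (α + 1) g 1 = α * rlInt α (rlInt 1 g) 1 := rlInt_add_one hα hgc zero_le_one
  have hpt : ∀ s ∈ Icc (0:ℝ) 1, g s = c * (q - 1) * rlInt (q - 1) h s
      + (-d) * rlInt α g s
      + ((α + 2) * (-c * (q - 1) * rlInt (q - 1) h 1 + d * rlInt α g 1)
          - (α + 1) * (α + 2) * (-c * rlInt q h 1 + d * rlInt α (rlInt 1 g) 1)) * s ^ (α + 1)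
      + (-(α + 1) * (-c * (q - 1) * rlInt (q - 1) h 1 + d * rlInt α g 1)
          + (α + 1) * (α + 2) * (-c * rlInt q h 1 + d * rlInt α (rlInt 1 g) 1)) * s ^ α := by
    intro s hs
    have h1 : g s = y ⟨s, hs⟩ := by rw [hg, IccExtend_of_mem _ _ hs]
    have h2 := congrArg (fun v : C(Icc (0:ℝ) 1, ℝ) => v ⟨s, hs⟩) hy
    simp only [langevinMap_apply] at h2
    rw [h1, h2]
    simp only [rlOp, ContinuousMap.coe_mk, ← hg, ← hh, bdryFunA, bdryFunB, Icc.coe_one, hparts,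
      ← hc, ← hd]
    field_simp
    ring
  have hsub : ∀ s ∈ uIcc 0 t, s ∈ Icc (0:ℝ) 1 := fun s hs => by
    rw [uIcc_of_le ht.1] at hs
    exact ⟨hs.1, hs.2.trans ht.2⟩
  have i1 : IntervalIntegrable (rlInt (q - 1) h) MeasureTheory.volume 0 t :=
    ((continuousOn_rlInt hq1 hhc).mono hsub).intervalIntegrable
  have i2 : IntervalIntegrable (rlInt α g) MeasureTheory.volume 0 t :=
    ((continuousOn_rlInt hα hgc).mono hsub).intervalIntegrable
  have i3 : IntervalIntegrable (fun s : ℝ => s ^ (α + 1)) MeasureTheory.volume 0 t :=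
    intervalIntegrable_rpow' (by linarith)
  have i4 : IntervalIntegrable (fun s : ℝ => s ^ α) MeasureTheory.volume 0 t :=
    intervalIntegrable_rpow' (by linarith)
  have e1 : ∫ s in (0:ℝ)..t, rlInt (q - 1) h s = rlInt q h t / (q - 1) := by
    have := rlInt_add_one hq1 hhc ht.1
    rw [sub_add_cancel] at this
    rw [integral_rlInt hq1 hhc ht.1, this]
    field_simp
  have e3 : ∫ s in (0:ℝ)..t, s ^ (α + 1) = t ^ (α + 2) / (α + 2) := by
    rw [integral_rpow (Or.inl (by linarith)), Real.zero_rpow (by linarith),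
      show α + 1 + 1 = α + 2 by ring, sub_zero]
  have e4 : ∫ s in (0:ℝ)..t, s ^ α = t ^ (α + 1) / (α + 1) := by
    rw [integral_rpow (Or.inl (by linarith)), Real.zero_rpow (by linarith), sub_zero]
  rw [rlInt_one, intervalIntegral.integral_congr fun s hs => hpt s (hsub s hs),
    intervalIntegral.integral_add (((i1.const_mul _).add (i2.const_mul _)).add (i3.const_mul _))
      (i4.const_mul _),
    intervalIntegral.integral_add ((i1.const_mul _).add (i2.const_mul _)) (i3.const_mul _),
    intervalIntegral.integral_add (i1.const_mul _) (i2.const_mul _)]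
  simp only [intervalIntegral.integral_const_mul]
  rw [e1, e3, e4, integral_rlInt hα hgc ht.1]
  have hα2 : α + 2 ≠ 0 := by linarith
  field_simp
  ring

theorem integral_GreenG {α β : ℝ} (hq1 : 0 < α + β - 1) {h : ℝ → ℝ} (hh : Continuous h) {t : ℝ}
    (ht : t ∈ Icc (0:ℝ) 1) :
    ∫ s in (0:ℝ)..1, GreenG α β t s * h s = 1 / Real.Gamma (α + β) * (rlInt (α + β) h t
        - (α + β - 1) * (t ^ (α + 2) - t ^ (α + 1)) * rlInt (α + β - 1) h 1
        - ((α + 2) * t ^ (α + 1) - (α + 1) * t ^ (α + 2)) * rlInt (α + β) h 1) := by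
  have hq : 0 < α + β := by linarith
  obtain ⟨i1, e1⟩ := rlKernel_indicator hq hh ht
  have i2 := intervalIntegrable_rlKernel_mul hq hh 1 0 1
  have i3 := intervalIntegrable_rlKernel_mul hq1 hh 1 0 1
  have hpt : ∀ s, GreenG α β t s * h s = 1 / Real.Gamma (α + β) *
      ((if s ≤ t then (t - s) ^ (α + β - 1) else 0) * h s
        + ((α + 1) * t ^ (α + 2) - (α + 2) * t ^ (α + 1)) * ((1 - s) ^ (α + β - 1) * h s)
        + (α + β - 1) * (t ^ (α + 1) - t ^ (α + 2)) * ((1 - s) ^ (α + β - 1 - 1) * h s)) := by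
    intro s
    rw [GreenG, show α + β - 1 - 1 = α + β - 2 by ring]
    ring
  simp_rw [hpt]
  rw [intervalIntegral.integral_const_mul,
    intervalIntegral.integral_add (i1.add (i2.const_mul _)) (i3.const_mul _),
    intervalIntegral.integral_add i1 (i2.const_mul _), e1, intervalIntegral.integral_const_mul,
    intervalIntegral.integral_const_mul]
  simp only [rlInt]
  ring

/-- The hypothesis `h1` makes the term with `(1 - s) ^ (α - 2)` integrable; by parts it becomes
the fractional integral of `g` at `1`. -/
theorem integral_GreenH {α γ : ℝ} (hα : 0 < α) (hα1 : α ≤ 1) {g : ℝ → ℝ} (hg : Continuous g)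
    (h1 : rlInt 1 g 1 = 0) {t : ℝ} (ht : t ∈ Icc (0:ℝ) 1) :
    ∫ s in (0:ℝ)..1, GreenH α γ t s * rlInt 1 g s = γ / Real.Gamma α * (-rlInt α (rlInt 1 g) t
        + (t ^ (α + 2) - t ^ (α + 1)) * rlInt α g 1
        + ((α + 2) * t ^ (α + 1) - (α + 1) * t ^ (α + 2)) * rlInt α (rlInt 1 g) 1) := by
  have hx := continuous_rlInt_one hg
  obtain ⟨i1, e1⟩ := rlKernel_indicator hα hx ht
  have i2 := intervalIntegrable_rlKernel_mul hα hx 1 0 1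
  obtain ⟨i3, e3⟩ := integral_singular_kernel hα hα1 hg h1
  have hpt : ∀ s, GreenH α γ t s * rlInt 1 g s = γ / Real.Gamma α *
      ((-1) * ((if s ≤ t then (t - s) ^ (α - 1) else 0) * rlInt 1 g s)
        + ((α + 2) * t ^ (α + 1) - (α + 1) * t ^ (α + 2)) * ((1 - s) ^ (α - 1) * rlInt 1 g s)
        + (t ^ (α + 2) - t ^ (α + 1)) * ((α - 1) * ((1 - s) ^ (α - 2) * rlInt 1 g s))) := by
    intro s
    rw [GreenH]
    ring
  simp_rw [hpt]
  rw [intervalIntegral.integral_const_mul,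
    intervalIntegral.integral_add ((i1.const_mul _).add (i2.const_mul _)) (i3.const_mul _),
    intervalIntegral.integral_add (i1.const_mul _) (i2.const_mul _),
    intervalIntegral.integral_const_mul, intervalIntegral.integral_const_mul,
    intervalIntegral.integral_const_mul (t ^ (α + 2) - t ^ (α + 1)), e1, e3]
  simp only [rlInt]
  ring

/-- A sublinear term is at most `r / 4` once `r` exceeds the threshold
`(4 * a * K) ^ (1 / (1 - τ))`. -/
theorem mul_rpow_le_of_rpow_le {K a τ r : ℝ} (hK : 0 ≤ K) (ha : 0 ≤ a) (hτ : τ < 1) (hr : 0 < r)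
    (h : (4 * a * K) ^ (1 / (1 - τ)) ≤ r) : K * (a * r ^ τ) ≤ r / 4 := by
  have hτ' : 0 < 1 - τ := by linarith
  have h0 : 0 ≤ 4 * a * K := by positivity
  have h1 : 4 * a * K ≤ r ^ (1 - τ) := by
    have := Real.rpow_le_rpow (Real.rpow_nonneg h0 _) h hτ'.le
    rwa [← Real.rpow_mul h0, one_div_mul_cancel hτ'.ne', Real.rpow_one] at this
  have h2 : r ^ (1 - τ) * r ^ τ = r := by
    rw [← Real.rpow_add hr, sub_add_cancel, Real.rpow_one]
  have h3 := mul_le_mul_of_nonneg_right h1 (Real.rpow_nonneg hr.le τ)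
  rw [h2] at h3
  linarith

theorem langevin_existence (α β γ : ℝ) (hα0 : 0 < α) (hα1 : α ≤ 1)
    (hβ2 : 2 < β) (hβ3 : β ≤ 3) (f : ℝ → ℝ → ℝ → ℝ)
    (hf : ContinuousOn (fun p : ℝ × ℝ × ℝ => f p.1 p.2.1 p.2.2)
      (Set.Icc 0 1 ×ˢ (Set.univ : Set (ℝ × ℝ))))
    (σ : ℝ → ℝ) (hσc : ContinuousOn σ (Set.Icc 0 1))
    (hσ0 : ∀ t ∈ Set.Icc (0:ℝ) 1, 0 ≤ σ t)
    (a₁ a₂ : ℝ) (ha₁ : 0 ≤ a₁) (ha₂ : 0 ≤ a₂)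
    (τ₁ τ₂ : ℝ) (hτ₁ : τ₁ ∈ Set.Ioo (0:ℝ) 1) (hτ₂ : τ₂ ∈ Set.Ioo (0:ℝ) 1)
    (hgrowth : ∀ t ∈ Set.Icc (0:ℝ) 1, ∀ u v : ℝ,
      |f t u v| ≤ σ t + a₁ * |u| ^ τ₁ + a₂ * |v| ^ τ₂)
    (σnorm K L : ℝ)
    (hσnorm : σnorm = ⨆ t : Set.Icc (0:ℝ) 1, σ t)
    (hK : K = (4 * (α + 1) + 2 * β) / Real.Gamma (α + β + 1)
      + ((2 * α + 4) / Real.Gamma (α + β)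
          + 2 * (α + 1) * (α + 2) / Real.Gamma (α + β + 1)))
    (hL : L = 4 * |γ| * (α + 1) / Real.Gamma (α + 1)
      + (|γ| * (2 * α + 4) / Real.Gamma α
          + 2 * |γ| * (α + 1) * (α + 2) / Real.Gamma (α + 1)))
    (r : ℝ) (hr : 0 < r)
    (hr1 : 4 * K * σnorm ≤ r)
    (hr2 : (4 * a₁ * K) ^ (1 / (1 - τ₁)) ≤ r)
    (hr3 : (4 * a₂ * K) ^ (1 / (1 - τ₂)) ≤ r)
    (hL4 : 4 * L ≤ 1) :
    ∃ x x' : ℝ → ℝ,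
      (∀ t ∈ Set.Icc (0:ℝ) 1, HasDerivWithinAt x (x' t) (Set.Icc (0:ℝ) 1) t) ∧
      ContinuousOn x' (Set.Icc 0 1) ∧
      x 0 = 0 ∧ x 1 = 0 ∧ x' 0 = 0 ∧ x' 1 = 0 ∧
      ∀ t ∈ Set.Icc (0:ℝ) 1,
        x t = (∫ s in (0:ℝ)..1, GreenG α β t s * f s (x s) (x' s))
            + ∫ s in (0:ℝ)..1, GreenH α γ t s * x s := by
  have hq0 : 0 < α + β := by linarith
  have hq1 : 0 < α + β - 1 := by linarith
  have hα1' : 0 < α + 1 := by linarith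
  have hΓα := Real.Gamma_pos_of_pos hα0
  have hΓα1 := Real.Gamma_pos_of_pos hα1'
  have hΓq := Real.Gamma_pos_of_pos hq0
  have hΓq1 := Real.Gamma_pos_of_pos (show 0 < α + β + 1 by linarith)
  have hσle : ∀ t ∈ Icc (0:ℝ) 1, σ t ≤ σnorm := fun t ht => by
    rw [hσnorm]
    refine le_ciSup (f := fun t : Icc (0:ℝ) 1 => σ t) ?_ ⟨t, ht⟩
    obtain ⟨B, hB⟩ := isCompact_Icc.exists_bound_of_continuousOn hσc
    exact ⟨B, by rintro _ ⟨s, rfl⟩; exact (le_abs_self _).trans (hB s s.2)⟩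
  have hσn0 : 0 ≤ σnorm := (hσ0 0 ⟨le_rfl, zero_le_one⟩).trans (hσle 0 ⟨le_rfl, zero_le_one⟩)
  have hK0 : 0 ≤ K := by rw [hK]; positivity
  have hKle : (2 * α + 4) / Real.Gamma (α + β) + (α + 1) * (α + 2) / Real.Gamma (α + β + 1) ≤ K := by
    have h1 : 0 ≤ (4 * (α + 1) + 2 * β) / Real.Gamma (α + β + 1) := by positivity
    have h2 : 0 ≤ (α + 1) * (α + 2) / Real.Gamma (α + β + 1) := by positivity
    have h3 : 2 * (α + 1) * (α + 2) / Real.Gamma (α + β + 1)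
        = 2 * ((α + 1) * (α + 2) / Real.Gamma (α + β + 1)) := by ring
    rw [hK]
    linarith
  have hLle : |γ| * (3 * α + 6) / Real.Gamma (α + 1) ≤ L := by
    have h1 : 0 ≤ |γ| * (2 * α + 4) / Real.Gamma α := by positivity
    have h2 : |γ| * (3 * α + 6) / Real.Gamma (α + 1)
        ≤ (4 * |γ| * (α + 1) + 2 * |γ| * (α + 1) * (α + 2)) / Real.Gamma (α + 1) := by
      gcongr
      nlinarith [abs_nonneg γ, mul_nonneg (abs_nonneg γ) hα0.le,
        mul_nonneg (abs_nonneg γ) (sq_nonneg α)]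
    rw [add_div] at h2
    rw [hL]
    linarith
  have hM0 : 0 ≤ σnorm + a₁ * r ^ τ₁ + a₂ * r ^ τ₂ := by positivity
  let φ : C(Icc (0:ℝ) 1 × ℝ × ℝ, ℝ) := ⟨fun p => f p.1 p.2.1 p.2.2,
    hf.comp_continuous (f := fun p : Icc (0:ℝ) 1 × ℝ × ℝ => ((p.1 : ℝ), p.2)) (by fun_prop)
      fun p => ⟨p.1.2, mem_univ _⟩⟩
  obtain ⟨y, F, hF, hy⟩ := exists_langevinMap_fixed_point (γ := γ)
    (M := σnorm + a₁ * r ^ τ₁ + a₂ * r ^ τ₂) hα0 hq1 hq0 hα1' hr φ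
    (fun s u v hu hv => by
      refine (hgrowth s s.2 u v).trans ?_
      have := hτ₁.1
      have := hτ₂.1
      gcongr
      exact hσle s s.2)
    (by
      have h1 := mul_rpow_le_of_rpow_le hK0 ha₁ hτ₁.2 hr hr2
      have h2 := mul_rpow_le_of_rpow_le hK0 ha₂ hτ₂.2 hr hr3
      have h3 := mul_le_mul_of_nonneg_right hKle hM0
      have h4 := mul_le_mul_of_nonneg_right hLle hr.le
      have h5 : L * r ≤ r / 4 := by nlinarith
      have h6 : K * (σnorm + a₁ * r ^ τ₁ + a₂ * r ^ τ₂)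
          = 4 * K * σnorm / 4 + K * (a₁ * r ^ τ₁) + K * (a₂ * r ^ τ₂) := by ring
      linarith)
  obtain ⟨g, hg⟩ : ∃ g, g = IccExtend zero_le_one y := ⟨_, rfl⟩
  obtain ⟨h, hh⟩ : ∃ h, h = IccExtend zero_le_one F := ⟨_, rfl⟩
  have hgc : Continuous g := hg ▸ y.continuous.Icc_extend'
  have hhc : Continuous h := hh ▸ F.continuous.Icc_extend'
  have hgy : ∀ t : Icc (0:ℝ) 1, g t = y t := fun t => by rw [hg, IccExtend_val]
  have hint := fun {t : ℝ} (ht : t ∈ Icc (0:ℝ) 1) =>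
    rlInt_one_fixed_point hα0 hq1 hq0 hα1' hg hh hy ht
  have hx0 : rlInt 1 g 0 = 0 := by simp [rlInt]
  have hx1 : rlInt 1 g 1 = 0 := by
    rw [hint ⟨zero_le_one, le_rfl⟩]
    simp only [Real.one_rpow]
    ring
  have hhf : ∀ s ∈ Icc (0:ℝ) 1, h s = f s (rlInt 1 g s) (g s) := fun s hs => by
    have h1 := hF ⟨s, hs⟩
    rw [← hg, ← hgy] at h1
    rw [hh, IccExtend_of_mem _ _ hs]
    exact h1
  refine ⟨rlInt 1 g, g, fun t _ => (hasDerivAt_rlInt_one hgc t).hasDerivWithinAt,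
    hgc.continuousOn, hx0, hx1, ?_, ?_, fun t ht => ?_⟩
  · rw [show g 0 = y 0 from hgy 0, hy, langevinMap_apply]
    simp [rlOp, rlInt, bdryFunA, bdryFunB, Real.zero_rpow hα0.ne', Real.zero_rpow hα1'.ne']
  · rw [show g 1 = y 1 from hgy 1, hy, langevinMap_apply]
    simp only [bdryFunA, bdryFunB, ContinuousMap.coe_mk, Icc.coe_one, Real.one_rpow]
    ring
  · have hG : ∫ s in (0:ℝ)..1, GreenG α β t s * f s (rlInt 1 g s) (g s)
        = ∫ s in (0:ℝ)..1, GreenG α β t s * h s :=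
      intervalIntegral.integral_congr fun s hs => by
        rw [uIcc_of_le zero_le_one] at hs
        simp only [hhf s hs]
    rw [hG, integral_GreenG hq1 hhc ht, integral_GreenH hα0 hα1 hgc hx1 ht]
    exact hint ht
end

section
/- Assume f satisfies the Lipschitz condition (A₂) with constant w > 0, f is continuous, and ψ = ψ₁ + ψ₂ < 1. Then there is exactly one continuously differentiable function x : [0,1] → ℝ with x(0) = x(1) = 0 satisfying x(t) = ∫₀¹ G(t,s)·f(s, x(s), x'(s)) ds + ∫₀¹ H(t,s)·x(s) ds for every t ∈ [0,1]. -/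
/-!
The solution is found through its derivative. Write `x(t) = ∫₀ᵗ v` for continuous `v` on `[0,1]`.
The kernels are combinations of causal convolutions with powers and of boundary integrals. The one
dangerous term, `(α-1) ∫ (1-s)^(α-2) x(s) ds`, equals `∫ (1-s)^(α-1) v(s) ds` by parts when
`x(0) = x(1) = 0` (`singular_by_parts`), and this second form makes sense for every continuous `v`.
With it the right-hand side of the integral equation becomes `opS` (`green_eq_opS`), which
vanishes at `0` and `1` whatever `v` is, and is continuously differentiable with derivative `opD`:
since `x(0) = 0`, differentiating `∫₀ᵗ s^(α-1) x(t-s) ds` just replaces `x` by `v`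
(`conv_hasDerivAt`).

Hence `C¹` solutions correspond to fixed points in `C([0,1])` of `Φ v = opD(v)`: a fixed point
satisfies `x = opS(v)` by integration, so `x(1) = 0` comes for free. By `opD_sub_bound`, `Φ` is
Lipschitz in the sup norm with constant `36 w / Γ(α+β+1) + 9 |γ| / Γ(α+1) ≤ ψ < 1`, and the Banach
fixed-point theorem gives both existence and uniqueness.
-/

open Set intervalIntegral

open MeasureTheory Filter Topology

/-! ### Causal convolutions -/

/-- The causal convolution `t ↦ ∫₀ᵗ g(s) v(t-s) ds`, written as an integral over the fixed
interval `[0,1]` so that differentiation under the integral sign applies; it is only used for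
`t ∈ [0,1]`. -/
noncomputable def conv (g v : ℝ → ℝ) (t : ℝ) : ℝ :=
  ∫ s in (0:ℝ)..1, g s * (if s < t then v (t - s) else 0)

/-- The primitive of `v` vanishing at `0`. -/
noncomputable def prim (v : ℝ → ℝ) (t : ℝ) : ℝ := ∫ s in (0:ℝ)..t, v s

lemma prim_hasDerivAt {v : ℝ → ℝ} (hv : Continuous v) (t : ℝ) : HasDerivAt (prim v) (v t) t :=
  integral_hasDerivAt_right (hv.intervalIntegrable _ _)
    hv.stronglyMeasurable.stronglyMeasurableAtFilter hv.continuousAt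

lemma prim_continuous {v : ℝ → ℝ} (hv : Continuous v) : Continuous (prim v) :=
  continuous_iff_continuousAt.2 fun t => (prim_hasDerivAt hv t).continuousAt

lemma prim_zero (v : ℝ → ℝ) : prim v 0 = 0 := by simp [prim]

lemma prim_sub {v : ℝ → ℝ} (hv : Continuous v) (a b : ℝ) :
    prim v b - prim v a = ∫ s in a..b, v s :=
  integral_interval_sub_left (hv.intervalIntegrable _ _) (hv.intervalIntegrable _ _)

lemma ite_prim (v : ℝ → ℝ) (u : ℝ) (s : ℝ) :
    (if s < u then prim v (u - s) else 0) = prim v (max (u - s) 0) := by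
  split_ifs with h
  · rw [max_eq_left (by linarith)]
  · rw [max_eq_right (by linarith), prim_zero]

lemma measurable_ite {v : ℝ → ℝ} (hv : Continuous v) (t : ℝ) :
    Measurable (fun s => if s < t then v (t - s) else 0) :=
  Measurable.ite measurableSet_Iio (hv.measurable.comp (by fun_prop)) measurable_const

lemma exists_bound {v : ℝ → ℝ} (hv : Continuous v) :
    ∃ M : ℝ, 0 ≤ M ∧ ∀ u ∈ Icc (0:ℝ) 2, |v u| ≤ M := by
  obtain ⟨M, hM⟩ := isCompact_Icc.exists_bound_of_continuousOn (hv.continuousOn (s := Icc (0:ℝ) 2))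
  exact ⟨M, le_trans (norm_nonneg _) (hM 0 (by norm_num)), hM⟩

lemma ite_bound {v : ℝ → ℝ} {M : ℝ} (hM0 : 0 ≤ M) (hM : ∀ u ∈ Icc (0:ℝ) 2, |v u| ≤ M)
    {t s : ℝ} (ht : t ≤ 2) (hs : 0 ≤ s) : |if s < t then v (t - s) else 0| ≤ M := by
  split_ifs with h
  · exact hM _ ⟨by linarith, by linarith⟩
  · simpa using hM0

lemma conv_integrable {g v : ℝ → ℝ} (hg : IntervalIntegrable g volume 0 1) (hv : Continuous v)
    {t : ℝ} (ht : t ≤ 2) :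
    IntervalIntegrable (fun s => g s * (if s < t then v (t - s) else 0)) volume 0 1 := by
  obtain ⟨M, hM0, hM⟩ := exists_bound hv
  refine (hg.abs.mul_const M).mono_fun'
    (hg.def'.aestronglyMeasurable.mul (measurable_ite hv t).aestronglyMeasurable) ?_
  refine ae_restrict_of_forall_mem measurableSet_uIoc fun s hs => ?_
  rw [uIoc_of_le zero_le_one] at hs
  beta_reduce
  rw [Real.norm_eq_abs, abs_mul]
  gcongr
  exact ite_bound hM0 hM ht hs.1.le

lemma conv_continuousAt {g v : ℝ → ℝ} (hg : IntervalIntegrable g volume 0 1) (hv : Continuous v)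
    {t : ℝ} (ht : t ≤ 1) : ContinuousAt (conv g v) t := by
  obtain ⟨M, hM0, hM⟩ := exists_bound hv
  refine continuousAt_of_dominated_interval (bound := fun s => |g s| * M) ?_ ?_
    (hg.abs.mul_const M) ?_
  · exact Eventually.of_forall fun u =>
      hg.def'.aestronglyMeasurable.mul (measurable_ite hv u).aestronglyMeasurable
  · filter_upwards [Iio_mem_nhds (show t < 2 by linarith)] with u hu
    refine Eventually.of_forall fun s hs => ?_
    rw [uIoc_of_le zero_le_one] at hs
    rw [Real.norm_eq_abs, abs_mul]
    gcongr
    exact ite_bound hM0 hM (le_of_lt hu) hs.1.le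
  · filter_upwards [Measure.ae_ne volume t] with s hst _
    refine continuousAt_const.mul ?_
    rcases lt_or_gt_of_ne hst with h | h
    · refine ContinuousAt.congr (f := fun u => v (u - s)) (by fun_prop) ?_
      filter_upwards [Ioi_mem_nhds h] with u hu
      rw [if_pos (mem_Ioi.1 hu)]
    · refine ContinuousAt.congr (f := fun _ => (0:ℝ)) (by fun_prop) ?_
      filter_upwards [Iio_mem_nhds h] with u hu
      rw [if_neg (not_lt.2 (le_of_lt hu))]

/-- A causal convolution is differentiated by differentiating its second factor, provided that
factor vanishes at `0`. The integrand is Lipschitz in the parameter, and differentiable in it off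
the null set `s = t`, so `g` is allowed an integrable singularity. -/
lemma conv_hasDerivAt {g v : ℝ → ℝ} (hg : IntervalIntegrable g volume 0 1) (hv : Continuous v)
    {t : ℝ} (ht : t ≤ 1) : HasDerivAt (conv g (prim v)) (conv g v t) t := by
  obtain ⟨M, hM0, hM⟩ := exists_bound hv
  refine (intervalIntegral.hasDerivAt_integral_of_dominated_loc_of_lip (bound := fun s => |g s| * M)
    (Iio_mem_nhds (show t < 2 by linarith)) ?_ (conv_integrable hg (prim_continuous hv)
      (by linarith)) (hg.def'.aestronglyMeasurable.mul (measurable_ite hv t).aestronglyMeasurable)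
      ?_ (hg.abs.mul_const M) ?_).2
  · exact Eventually.of_forall fun u => hg.def'.aestronglyMeasurable.mul
      (measurable_ite (prim_continuous hv) u).aestronglyMeasurable
  · refine Eventually.of_forall fun s hs => ?_
    rw [uIoc_of_le zero_le_one] at hs
    refine LipschitzOnWith.of_dist_le_mul fun a ha b hb => ?_
    simp only [ite_prim]
    rw [Real.dist_eq, Real.dist_eq, ← mul_sub, prim_sub hv, abs_mul, Real.coe_nnabs,
      abs_of_nonneg (show 0 ≤ |g s| * M by positivity), mul_assoc]
    gcongr
    have key : ∀ u ∈ uIoc (max (b - s) 0) (max (a - s) 0), ‖v u‖ ≤ M := by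
      intro u hu
      refine hM u ?_
      have ha' : max (a - s) 0 ≤ 2 := max_le (by linarith [mem_Iio.1 ha, hs.1]) (by norm_num)
      have hb' : max (b - s) 0 ≤ 2 := max_le (by linarith [mem_Iio.1 hb, hs.1]) (by norm_num)
      have := uIoc_subset_uIcc hu
      exact (uIcc_subset_Icc ⟨le_max_right _ _, hb'⟩ ⟨le_max_right _ _, ha'⟩) this
    refine (norm_integral_le_of_norm_le_const key).trans ?_
    refine mul_le_mul_of_nonneg_left ?_ hM0
    refine (abs_max_sub_max_le_abs (a - s) (b - s) 0).trans (le_of_eq ?_)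
    congr 1; ring
  · filter_upwards [Measure.ae_ne volume t] with s hst _
    refine HasDerivAt.const_mul _ ?_
    beta_reduce
    rcases lt_or_gt_of_ne hst with h | h
    · rw [if_pos h]
      have h1 : HasDerivAt (fun u => prim v (u - s)) (v (t - s)) t :=
        (prim_hasDerivAt hv (t - s)).comp_sub_const t s
      refine h1.congr_of_eventuallyEq ?_
      filter_upwards [Ioi_mem_nhds h] with u hu
      rw [if_pos (mem_Ioi.1 hu)]
    · rw [if_neg (not_lt.2 (le_of_lt h))]
      refine (hasDerivAt_const t (0:ℝ)).congr_of_eventuallyEq ?_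
      filter_upwards [Iio_mem_nhds h] with u hu
      rw [if_neg (not_lt.2 (le_of_lt hu))]

lemma conv_eq {g v : ℝ → ℝ} {t : ℝ} (ht : t ∈ Icc (0:ℝ) 1) :
    conv g v t = ∫ s in (0:ℝ)..t, g s * v (t - s) := by
  rw [← integral_indicator ht]
  refine integral_congr_ae ?_
  filter_upwards [Measure.ae_ne volume t] with s hst _
  rcases lt_or_gt_of_ne hst with h | h
  · simp [h, h.le]
  · simp [h.le, h]

lemma conv_comm {g v : ℝ → ℝ} {t : ℝ} (ht : t ∈ Icc (0:ℝ) 1) : conv g v t = conv v g t := by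
  rw [conv_eq ht, conv_eq ht]
  have := integral_comp_sub_left (a := 0) (b := t) (fun s => g s * v (t - s)) t
  simp only [sub_self, sub_zero, sub_sub_cancel] at this
  rw [← this]
  simp only [mul_comm]

lemma conv_integrable' {g v : ℝ → ℝ} (hg : IntervalIntegrable g volume 0 1) (hv : Continuous v)
    {t : ℝ} (ht : t ∈ Icc (0:ℝ) 1) :
    IntervalIntegrable (fun s => v s * (if s < t then g (t - s) else 0)) volume 0 1 := by
  have hg' : IntervalIntegrable g volume 0 t := hg.mono_set (by
    rw [uIcc_of_le ht.1, uIcc_of_le zero_le_one]; exact Icc_subset_Icc_right ht.2)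
  have h1 : IntervalIntegrable (fun s => v s * g (t - s)) volume 0 t := by
    have := (hg'.comp_sub_left t).symm
    simp only [sub_self, sub_zero] at this
    exact this.continuousOn_mul hv.continuousOn
  refine IntervalIntegrable.trans (b := t) (h1.congr_uIoo ?_)
    ((intervalIntegrable_const (c := (0:ℝ))).congr ?_)
  · intro s hs
    rw [uIoo_of_le ht.1] at hs
    simp [hs.2]
  · intro s hs
    rw [uIoc_of_le ht.2] at hs
    simp [hs.1.le]

lemma rpow_integrable {r : ℝ} (hr : 0 < r) :
    IntervalIntegrable (fun s : ℝ => s ^ (r - 1)) volume 0 1 :=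
  intervalIntegrable_rpow' (by linarith)

lemma rpow_continuous {r : ℝ} (hr : 0 ≤ r) : Continuous (fun s : ℝ => s ^ r) :=
  Real.continuous_rpow_const hr

lemma conv_sub_bound {r : ℝ} (hr : 0 < r) {h₁ h₂ : ℝ → ℝ} (c₁ : Continuous h₁)
    (c₂ : Continuous h₂) {M : ℝ} (hM : ∀ s ∈ Icc (0:ℝ) 1, |h₁ s - h₂ s| ≤ M) {t : ℝ}
    (ht : t ∈ Icc (0:ℝ) 1) :
    |conv (fun s => s ^ (r - 1)) h₁ t - conv (fun s => s ^ (r - 1)) h₂ t| ≤ M / r := by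
  have hM0 : 0 ≤ M := (abs_nonneg _).trans (hM 0 (by norm_num))
  have hi : ∫ s in (0:ℝ)..1, s ^ (r - 1) * M = M / r := by
    rw [intervalIntegral.integral_mul_const, integral_rpow (Or.inl (by linarith))]
    simp [Real.zero_rpow hr.ne']
    ring
  rw [conv, conv, ← intervalIntegral.integral_sub (conv_integrable (rpow_integrable hr) c₁
    (by linarith [ht.2])) (conv_integrable (rpow_integrable hr) c₂ (by linarith [ht.2])), ← hi,
    ← Real.norm_eq_abs]
  refine norm_integral_le_of_norm_le zero_le_one (Eventually.of_forall fun s hs => ?_)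
    ((rpow_integrable hr).mul_const M)
  rw [← mul_sub, Real.norm_eq_abs, abs_mul, abs_of_nonneg (Real.rpow_nonneg hs.1.le _)]
  have := hs.1.le
  gcongr
  split_ifs with h
  · exact hM _ ⟨by linarith, by linarith [ht.2]⟩
  · simpa using hM0

lemma conv_sub_bound' {r : ℝ} (hr : 0 < r) {h₁ h₂ : ℝ → ℝ} (c₁ : Continuous h₁)
    (c₂ : Continuous h₂) {M : ℝ} (hM : ∀ s ∈ Icc (0:ℝ) 1, |h₁ s - h₂ s| ≤ M) {t : ℝ}
    (ht : t ∈ Icc (0:ℝ) 1) :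
    |conv h₁ (fun s => s ^ (r - 1)) t - conv h₂ (fun s => s ^ (r - 1)) t| ≤ M / r := by
  rw [conv_comm ht, conv_comm (g := h₂) ht]
  exact conv_sub_bound hr c₁ c₂ hM ht

lemma conv_rpow_hasDerivAt {g : ℝ → ℝ} (hg : Continuous g) {q : ℝ} (hq : 1 < q) {t : ℝ}
    (ht : t ≤ 1) : HasDerivAt (conv g (fun s => s ^ q)) (q * conv g (fun s => s ^ (q - 1)) t) t := by
  have h := (conv_hasDerivAt (hg.intervalIntegrable 0 1)
    (rpow_continuous (show 0 ≤ q - 1 by linarith)) ht).const_mul q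
  have e : (fun u => q * conv g (prim fun s => s ^ (q - 1)) u) = conv g (fun s => s ^ q) := by
    funext u
    rw [conv, conv, ← intervalIntegral.integral_const_mul]
    refine intervalIntegral.integral_congr fun s _ => ?_
    have hp : prim (fun s => s ^ (q - 1)) (u - s) = (u - s) ^ q / q := by
      rw [prim, integral_rpow (Or.inl (by linarith))]
      simp [Real.zero_rpow (show q ≠ 0 by linarith)]
    simp only [hp]
    split_ifs
    · field_simp
    · simp
  rwa [e] at h

/-! ### The integral operator and its derivative -/

/-- The singular boundary integral converges, and integrating by parts trades
`(1-s)^(α-2)` against a function vanishing at both ends for `(1-s)^(α-1)` against its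
derivative. For `α = 1` both sides vanish. -/
lemma singular_by_parts {α : ℝ} (hα0 : 0 < α) {v : ℝ → ℝ} (hv : Continuous v)
    (h1 : prim v 1 = 0) :
    IntervalIntegrable (fun s => (α - 1) * (1 - s) ^ (α - 2) * prim v s) volume 0 1 ∧
      ∫ s in (0:ℝ)..1, (α - 1) * (1 - s) ^ (α - 2) * prim v s
        = conv (fun s => s ^ (α - 1)) v 1 := by
  obtain ⟨M, hM0, hM⟩ := exists_bound hv
  have hx : ∀ s ∈ Icc (0:ℝ) 1, |prim v s| ≤ M * (1 - s) := by
    intro s hs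
    have e : prim v s = -∫ u in s..1, v u := by rw [← prim_sub hv, h1]; ring
    rw [e, abs_neg]
    refine (intervalIntegral.norm_integral_le_of_norm_le_const (E := ℝ) (C := M) fun u hu => ?_).trans (le_of_eq ?_)
    · rw [uIoc_of_le hs.2] at hu
      exact hM u ⟨by linarith [hs.1, hu.1], by linarith [hu.2]⟩
    · rw [abs_of_nonneg (by linarith [hs.2])]
  have hpow : IntervalIntegrable (fun s : ℝ => (1 - s) ^ (α - 1)) volume 0 1 := by
    simpa using ((rpow_integrable hα0).comp_sub_left 1).symm
  have hint : IntervalIntegrable (fun s => (α - 1) * (1 - s) ^ (α - 2) * prim v s)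
      volume 0 1 := by
    refine (hpow.const_mul (|α - 1| * M)).mono_fun' ?_ ?_
    · have := (prim_continuous hv).measurable
      exact Measurable.aestronglyMeasurable (by fun_prop)
    · rw [uIoc_of_le zero_le_one, ← restrict_Ioo_eq_restrict_Ioc]
      refine ae_restrict_of_forall_mem measurableSet_Ioo fun s hs => ?_
      have hs1 : 0 < 1 - s := by linarith [hs.2]
      beta_reduce
      rw [Real.norm_eq_abs, abs_mul, abs_mul, abs_of_pos (Real.rpow_pos_of_pos hs1 (α - 2))]
      calc |α - 1| * (1 - s) ^ (α - 2) * |prim v s|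
          ≤ |α - 1| * (1 - s) ^ (α - 2) * (M * (1 - s)) := by
            gcongr; exact hx s ⟨hs.1.le, hs.2.le⟩
        _ = |α - 1| * M * ((1 - s) ^ (α - 2) * (1 - s)) := by ring
        _ = |α - 1| * M * (1 - s) ^ (α - 1) := by
            rw [← Real.rpow_add_one hs1.ne']; congr 2; ring
  refine ⟨hint, ?_⟩
  have hint2 : IntervalIntegrable (fun s => v s * (1 - s) ^ (α - 1)) volume 0 1 :=
    hpow.continuousOn_mul hv.continuousOn
  have hcont : ContinuousOn (fun s => (1 - s) ^ (α - 1) * prim v s) (Icc 0 1) := by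
    intro s hs
    rcases hs.2.lt_or_eq with h | h
    · refine ContinuousAt.continuousWithinAt (ContinuousAt.mul ?_ (prim_continuous hv).continuousAt)
      exact ContinuousAt.rpow_const (by fun_prop) (Or.inl (by linarith))
    · subst h
      have hz : (1 - (1:ℝ)) ^ (α - 1) * prim v 1 = 0 := by rw [h1, mul_zero]
      rw [ContinuousWithinAt, hz]
      have hlim : Tendsto (fun s : ℝ => M * (1 - s) ^ α) (𝓝[Icc 0 1] 1) (𝓝 0) := by
        have : Continuous (fun s : ℝ => M * (1 - s) ^ α) :=
          continuous_const.mul ((rpow_continuous hα0.le).comp (by fun_prop))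
        have h := this.tendsto 1
        simp only [sub_self, Real.zero_rpow hα0.ne', mul_zero] at h
        exact h.mono_left nhdsWithin_le_nhds
      refine squeeze_zero_norm' ?_ hlim
      filter_upwards [self_mem_nhdsWithin] with s hs'
      rcases hs'.2.lt_or_eq with h | h
      · have hs1 : 0 < 1 - s := by linarith
        rw [Real.norm_eq_abs, abs_mul, abs_of_pos (Real.rpow_pos_of_pos hs1 _)]
        calc (1 - s) ^ (α - 1) * |prim v s| ≤ (1 - s) ^ (α - 1) * (M * (1 - s)) := by
              gcongr; exact hx s hs'
          _ = M * ((1 - s) ^ (α - 1) * (1 - s)) := by ring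
          _ = M * (1 - s) ^ α := by rw [← Real.rpow_add_one hs1.ne']; congr 2; ring
      · subst h
        rw [hz, norm_zero]
        exact mul_nonneg hM0 (Real.rpow_nonneg (by norm_num) _)
  have hftc := integral_eq_sub_of_hasDerivAt_of_le zero_le_one hcont
    (f' := fun s => v s * (1 - s) ^ (α - 1) - (α - 1) * (1 - s) ^ (α - 2) * prim v s)
    (fun s hs => by
      have hd : HasDerivAt (fun s : ℝ => 1 - s) (-1) s := by
        simpa using (hasDerivAt_id s).const_sub 1
      have := (hd.rpow_const (p := α - 1) (Or.inl (by linarith [hs.2]))).mul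
        (prim_hasDerivAt hv s)
      refine this.congr_deriv ?_
      rw [show α - 1 - 1 = α - 2 by ring]
      ring) (hint2.sub hint)
  rw [intervalIntegral.integral_sub hint2 hint, h1, prim_zero] at hftc
  rw [conv_comm (by norm_num), conv_eq (by norm_num)]
  linarith

/-- The integral operator `∫ G F + ∫ H x` expressed through causal convolutions, with the
singular integral of `x` replaced by a boundary integral of its derivative `v`. -/
noncomputable def opS (α β γ : ℝ) (F x v : ℝ → ℝ) (t : ℝ) : ℝ :=
  (1 / Real.Gamma (α + β)) *
    (conv F (fun s => s ^ (α + β - 1)) t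
      + ((α + 1) * t ^ (α + 2) - (α + 2) * t ^ (α + 1)) * conv F (fun s => s ^ (α + β - 1)) 1
      + (α + β - 1) * (t ^ (α + 1) - t ^ (α + 2)) * conv F (fun s => s ^ (α + β - 2)) 1)
  + (γ / Real.Gamma α) *
    (-conv (fun s => s ^ (α - 1)) x t
      + ((α + 2) * t ^ (α + 1) - (α + 1) * t ^ (α + 2)) * conv (fun s => s ^ (α - 1)) x 1
      + (t ^ (α + 2) - t ^ (α + 1)) * conv (fun s => s ^ (α - 1)) v 1)

/-- The derivative in `t` of `opS α β γ F (prim v) v`. -/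
noncomputable def opD (α β γ : ℝ) (F v : ℝ → ℝ) (t : ℝ) : ℝ :=
  (1 / Real.Gamma (α + β)) *
    ((α + β - 1) * conv F (fun s => s ^ (α + β - 2)) t
      + ((α + 1) * (α + 2) * (t ^ (α + 1) - t ^ α)) * conv F (fun s => s ^ (α + β - 1)) 1
      + (α + β - 1) * ((α + 1) * t ^ α - (α + 2) * t ^ (α + 1))
        * conv F (fun s => s ^ (α + β - 2)) 1)
  + (γ / Real.Gamma α) *
    (-conv (fun s => s ^ (α - 1)) v t
      + ((α + 1) * (α + 2) * (t ^ α - t ^ (α + 1))) * conv (fun s => s ^ (α - 1)) (prim v) 1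
      + ((α + 2) * t ^ (α + 1) - (α + 1) * t ^ α) * conv (fun s => s ^ (α - 1)) v 1)

lemma opS_hasDerivAt {α β γ : ℝ} (hα0 : 0 < α) (hβ2 : 2 < β) {F v : ℝ → ℝ}
    (hF : Continuous F) (hv : Continuous v) {t : ℝ} (ht : t ≤ 1) :
    HasDerivAt (opS α β γ F (prim v) v) (opD α β γ F v t) t := by
  have d1 : HasDerivAt (fun t : ℝ => t ^ (α + 1)) ((α + 1) * t ^ α) t := by
    have := Real.hasDerivAt_rpow_const (x := t) (p := α + 1) (Or.inr (by linarith))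
    rwa [show α + 1 - 1 = α by ring] at this
  have d2 : HasDerivAt (fun t : ℝ => t ^ (α + 2)) ((α + 2) * t ^ (α + 1)) t := by
    have := Real.hasDerivAt_rpow_const (x := t) (p := α + 2) (Or.inr (by linarith))
    rwa [show α + 2 - 1 = α + 1 by ring] at this
  have c1 := conv_rpow_hasDerivAt hF (show 1 < α + β - 1 by linarith) ht
  rw [show α + β - 1 - 1 = α + β - 2 by ring] at c1
  have c2 := conv_hasDerivAt (rpow_integrable hα0) hv ht
  have := (((c1.add (((d2.const_mul (α + 1)).sub (d1.const_mul (α + 2))).mul_const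
      (conv F (fun s => s ^ (α + β - 1)) 1))).add (((d1.sub d2).const_mul (α + β - 1)).mul_const
      (conv F (fun s => s ^ (α + β - 2)) 1))).const_mul (1 / Real.Gamma (α + β))).add
    (((c2.neg.add (((d1.const_mul (α + 2)).sub (d2.const_mul (α + 1))).mul_const
      (conv (fun s => s ^ (α - 1)) (prim v) 1))).add ((d2.sub d1).mul_const
      (conv (fun s => s ^ (α - 1)) v 1))).const_mul (γ / Real.Gamma α))
  refine this.congr_deriv ?_
  rw [opD]
  ring

lemma opD_continuousOn {α β γ : ℝ} (hα0 : 0 < α) (hβ2 : 2 < β) {F v : ℝ → ℝ}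
    (hF : Continuous F) (hv : Continuous v) : ContinuousOn (opD α β γ F v) (Icc 0 1) := by
  have c1 : ContinuousOn (conv F (fun s => s ^ (α + β - 2))) (Icc 0 1) := fun t ht =>
    (conv_continuousAt (hF.intervalIntegrable 0 1) (rpow_continuous (by linarith))
      ht.2).continuousWithinAt
  have c2 : ContinuousOn (conv (fun s => s ^ (α - 1)) v) (Icc 0 1) := fun t ht =>
    (conv_continuousAt (rpow_integrable hα0) hv ht.2).continuousWithinAt
  have p0 : Continuous (fun t : ℝ => t ^ α) := rpow_continuous hα0.le
  have p1 : Continuous (fun t : ℝ => t ^ (α + 1)) := rpow_continuous (by linarith)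
  unfold opD
  fun_prop

lemma conv_zero (g v : ℝ → ℝ) : conv g v 0 = 0 := by
  rw [conv_eq (by norm_num), integral_same]

lemma opS_zero {α : ℝ} (hα0 : 0 < α) (β γ : ℝ) (F x v : ℝ → ℝ) : opS α β γ F x v 0 = 0 := by
  simp [opS, conv_zero, Real.zero_rpow (show α + 1 ≠ 0 by linarith),
    Real.zero_rpow (show α + 2 ≠ 0 by linarith)]

lemma opS_one (α β γ : ℝ) (F x v : ℝ → ℝ) : opS α β γ F x v 1 = 0 := by
  simp only [opS, Real.one_rpow]
  ring

lemma integral_G {α β : ℝ} (hα0 : 0 < α) (hβ2 : 2 < β) {F : ℝ → ℝ} (hF : Continuous F)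
    {t : ℝ} (ht : t ∈ Icc (0:ℝ) 1) :
    ∫ s in (0:ℝ)..1, GreenG α β t s * F s = (1 / Real.Gamma (α + β)) *
    (conv F (fun s => s ^ (α + β - 1)) t
      + ((α + 1) * t ^ (α + 2) - (α + 2) * t ^ (α + 1)) * conv F (fun s => s ^ (α + β - 1)) 1
      + (α + β - 1) * (t ^ (α + 1) - t ^ (α + 2)) * conv F (fun s => s ^ (α + β - 2)) 1) := by
  have hi := hF.intervalIntegrable (μ := volume) 0 1
  have i1 := conv_integrable hi (rpow_continuous (show 0 ≤ α + β - 1 by linarith))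
    (show t ≤ 2 by linarith [ht.2])
  have i2 := conv_integrable hi (rpow_continuous (show 0 ≤ α + β - 1 by linarith))
    (show (1:ℝ) ≤ 2 by norm_num)
  have i3 := conv_integrable hi (rpow_continuous (show 0 ≤ α + β - 2 by linarith))
    (show (1:ℝ) ≤ 2 by norm_num)
  simp only [conv]
  rw [← intervalIntegral.integral_const_mul, ← intervalIntegral.integral_const_mul,
    ← intervalIntegral.integral_add i1 (i2.const_mul _),
    ← intervalIntegral.integral_add (i1.add (i2.const_mul _)) (i3.const_mul _),
    ← intervalIntegral.integral_const_mul]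
  refine integral_congr_ae ?_
  filter_upwards [Measure.ae_ne volume t, Measure.ae_ne volume (1:ℝ)] with s hst hs1 hs
  rw [uIoc_of_le zero_le_one] at hs
  have h1 : s < 1 := lt_of_le_of_ne hs.2 hs1
  have e : (s ≤ t) = (s < t) := propext ⟨fun h => lt_of_le_of_ne h hst, le_of_lt⟩
  simp only [GreenG, e, if_pos h1]
  ring

lemma integral_H {α : ℝ} (hα0 : 0 < α) (γ : ℝ) {v : ℝ → ℝ} (hv : Continuous v)
    (h1 : prim v 1 = 0) {t : ℝ} (ht : t ∈ Icc (0:ℝ) 1) :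
    ∫ s in (0:ℝ)..1, GreenH α γ t s * prim v s = (γ / Real.Gamma α) *
    (-conv (fun s => s ^ (α - 1)) (prim v) t
      + ((α + 2) * t ^ (α + 1) - (α + 1) * t ^ (α + 2))
        * conv (fun s => s ^ (α - 1)) (prim v) 1
      + (t ^ (α + 2) - t ^ (α + 1)) * conv (fun s => s ^ (α - 1)) v 1) := by
  obtain ⟨i3, e3⟩ := singular_by_parts hα0 hv h1
  have h01 : (1:ℝ) ∈ Icc (0:ℝ) 1 := by norm_num
  have i1 := conv_integrable' (rpow_integrable hα0) (prim_continuous hv) ht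
  have i2 := conv_integrable' (rpow_integrable hα0) (prim_continuous hv) h01
  have i1n : IntervalIntegrable
      (fun s => -(prim v s * (if s < t then (t - s) ^ (α - 1) else 0))) volume 0 1 := i1.neg
  rw [← e3, conv_comm ht, conv_comm h01, conv, conv]
  rw [← intervalIntegral.integral_const_mul, ← intervalIntegral.integral_const_mul,
    ← intervalIntegral.integral_neg,
    ← intervalIntegral.integral_add i1n (i2.const_mul _),
    ← intervalIntegral.integral_add (i1n.add (i2.const_mul _)) (i3.const_mul _),
    ← intervalIntegral.integral_const_mul]
  refine integral_congr_ae ?_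
  filter_upwards [Measure.ae_ne volume t, Measure.ae_ne volume (1:ℝ)] with s hst hs1 hs
  rw [uIoc_of_le zero_le_one] at hs
  have h1 : s < 1 := lt_of_le_of_ne hs.2 hs1
  have e : (s ≤ t) = (s < t) := propext ⟨fun h => lt_of_le_of_ne h hst, le_of_lt⟩
  simp only [GreenH, e, if_pos h1]
  ring

lemma green_eq_opS {α β : ℝ} (hα0 : 0 < α) (hβ2 : 2 < β) (γ : ℝ) {F v : ℝ → ℝ}
    (hF : Continuous F) (hv : Continuous v) (h1 : prim v 1 = 0) {t : ℝ}
    (ht : t ∈ Icc (0:ℝ) 1) :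
    (∫ s in (0:ℝ)..1, GreenG α β t s * F s) + ∫ s in (0:ℝ)..1, GreenH α γ t s * prim v s
      = opS α β γ F (prim v) v t := by
  rw [integral_G hα0 hβ2 hF ht, integral_H hα0 γ hv h1 ht, opS]


/-! ### The Lipschitz estimate and the fixed-point setting -/

/-- The Lipschitz estimate behind the contraction: the coefficients `t^(α+1) - t^α` and
`(α+1) t^α - (α+2) t^(α+1)` are at most `1` and `2` in absolute value, and every convolution
with `s^(r-1)` costs a factor `1/r`. -/
lemma opD_sub_bound {α β γ w M t : ℝ} (hα0 : 0 < α) (hα1 : α ≤ 1) (hβ2 : 2 < β) (hβ3 : β ≤ 3)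
    (hw : 0 < w) {F₁ F₂ v₁ v₂ : ℝ → ℝ} (hF₁ : Continuous F₁) (hF₂ : Continuous F₂)
    (hv₁ : Continuous v₁) (hv₂ : Continuous v₂)
    (hF : ∀ s ∈ Icc (0:ℝ) 1, |F₁ s - F₂ s| ≤ 2 * w * M)
    (hv : ∀ s ∈ Icc (0:ℝ) 1, |v₁ s - v₂ s| ≤ M)
    (hx : ∀ s ∈ Icc (0:ℝ) 1, |prim v₁ s - prim v₂ s| ≤ M) (ht : t ∈ Icc (0:ℝ) 1) :
    |opD α β γ F₁ v₁ t - opD α β γ F₂ v₂ t|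
      ≤ (36 * w / Real.Gamma (α + β + 1) + 9 * |γ| / Real.Gamma (α + 1)) * M := by
  have h01 : (1:ℝ) ∈ Icc (0:ℝ) 1 := by norm_num
  have hM0 : 0 ≤ M := (abs_nonneg _).trans (hv 0 (by norm_num))
  have hp : 0 < α + β := by linarith
  have hp1 : 0 < α + β - 1 := by linarith
  have a1 := conv_sub_bound' hp1 hF₁ hF₂ hF ht
  have a3 := conv_sub_bound' hp1 hF₁ hF₂ hF h01
  have a2 := conv_sub_bound' hp hF₁ hF₂ hF h01
  rw [show α + β - 1 - 1 = α + β - 2 by ring] at a1 a3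
  have b1 := conv_sub_bound hα0 hv₁ hv₂ hv ht
  have b2 := conv_sub_bound hα0 (prim_continuous hv₁) (prim_continuous hv₂) hx h01
  have b3 := conv_sub_bound hα0 hv₁ hv₂ hv h01
  have hT0 : 0 ≤ t ^ α := Real.rpow_nonneg ht.1 _
  have hT1 : t ^ α ≤ 1 := Real.rpow_le_one ht.1 ht.2 hα0.le
  have hTt : t ^ (α + 1) = t ^ α * t := Real.rpow_add_one' ht.1 (by linarith)
  have k1 : |(α + 1) * (α + 2) * (t ^ (α + 1) - t ^ α)| ≤ 6 := by
    have : |t ^ (α + 1) - t ^ α| ≤ 1 := by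
      rw [hTt, abs_le]
      constructor <;> nlinarith [ht.1, ht.2, mul_nonneg hT0 ht.1]
    rw [abs_mul, abs_of_pos (by positivity)]
    calc (α + 1) * (α + 2) * |t ^ (α + 1) - t ^ α| ≤ (1 + 1) * (1 + 2) * 1 := by gcongr
      _ = 6 := by norm_num
  have k1' : |(α + 1) * (α + 2) * (t ^ α - t ^ (α + 1))| ≤ 6 := by
    rw [← abs_neg]; convert k1 using 2; ring
  have k2 : |(α + 1) * t ^ α - (α + 2) * t ^ (α + 1)| ≤ 2 := by
    have e : (α + 1) * t ^ α - (α + 2) * t ^ (α + 1) = t ^ α * (α + 1 - (α + 2) * t) := by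
      rw [hTt]; ring
    have : |α + 1 - (α + 2) * t| ≤ 2 := by
      rw [abs_le]
      constructor <;> nlinarith [ht.1, ht.2]
    rw [e, abs_mul, abs_of_nonneg hT0]
    calc t ^ α * |α + 1 - (α + 2) * t| ≤ 1 * 2 := by gcongr
      _ = 2 := by norm_num
  have k2' : |(α + 2) * t ^ (α + 1) - (α + 1) * t ^ α| ≤ 2 := by rwa [abs_sub_comm]
  have hΓp := Real.Gamma_pos_of_pos hp
  have hΓα := Real.Gamma_pos_of_pos hα0
  rw [Real.Gamma_add_one hp.ne', Real.Gamma_add_one hα0.ne']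
  unfold opD
  set A₁ := conv F₁ (fun s => s ^ (α + β - 2)) t
  set A₁' := conv F₂ (fun s => s ^ (α + β - 2)) t
  set A₂ := conv F₁ (fun s => s ^ (α + β - 1)) 1
  set A₂' := conv F₂ (fun s => s ^ (α + β - 1)) 1
  set A₃ := conv F₁ (fun s => s ^ (α + β - 2)) 1
  set A₃' := conv F₂ (fun s => s ^ (α + β - 2)) 1
  set B₁ := conv (fun s => s ^ (α - 1)) v₁ t
  set B₁' := conv (fun s => s ^ (α - 1)) v₂ t
  set B₂ := conv (fun s => s ^ (α - 1)) (prim v₁) 1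
  set B₂' := conv (fun s => s ^ (α - 1)) (prim v₂) 1
  set B₃ := conv (fun s => s ^ (α - 1)) v₁ 1
  set B₃' := conv (fun s => s ^ (α - 1)) v₂ 1
  set c₁ := (α + 1) * (α + 2) * (t ^ (α + 1) - t ^ α)
  set c₁' := (α + 1) * (α + 2) * (t ^ α - t ^ (α + 1))
  set c₂ := (α + 1) * t ^ α - (α + 2) * t ^ (α + 1)
  set c₂' := (α + 2) * t ^ (α + 1) - (α + 1) * t ^ α
  have hG : |(α + β - 1) * (A₁ - A₁') + c₁ * (A₂ - A₂') + (α + β - 1) * c₂ * (A₃ - A₃')|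
      ≤ 36 * w * M / (α + β) := by
    have e1 : |(α + β - 1) * (A₁ - A₁')| ≤ 2 * w * M := by
      rw [abs_mul, abs_of_pos hp1, mul_comm]
      exact (le_div_iff₀ hp1).1 a1
    have e2 : |c₁ * (A₂ - A₂')| ≤ 6 * (2 * w * M / (α + β)) := by
      rw [abs_mul]; gcongr
    have e3 : |(α + β - 1) * c₂ * (A₃ - A₃')| ≤ 2 * (2 * w * M) := by
      have h3 : |(α + β - 1) * (A₃ - A₃')| ≤ 2 * w * M := by
        rw [abs_mul, abs_of_pos hp1, mul_comm]
        exact (le_div_iff₀ hp1).1 a3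
      rw [show (α + β - 1) * c₂ * (A₃ - A₃') = c₂ * ((α + β - 1) * (A₃ - A₃')) by ring, abs_mul]
      gcongr
    refine (abs_add_three _ _ _).trans ((add_le_add (add_le_add e1 e2) e3).trans ?_)
    rw [le_div_iff₀ hp]
    have hwM : 0 ≤ w * M := by positivity
    have : (2 * w * M + 6 * (2 * w * M / (α + β)) + 2 * (2 * w * M)) * (α + β)
        = 6 * (w * M) * (α + β) + 12 * (w * M) := by
      field_simp
      ring
    rw [this]
    nlinarith
  have hH : |-(B₁ - B₁') + c₁' * (B₂ - B₂') + c₂' * (B₃ - B₃')| ≤ 9 * M / α := by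
    have e1 : |-(B₁ - B₁')| ≤ M / α := by rwa [abs_neg]
    have e2 : |c₁' * (B₂ - B₂')| ≤ 6 * (M / α) := by rw [abs_mul]; gcongr
    have e3 : |c₂' * (B₃ - B₃')| ≤ 2 * (M / α) := by rw [abs_mul]; gcongr
    refine (abs_add_three _ _ _).trans ((add_le_add (add_le_add e1 e2) e3).trans (le_of_eq ?_))
    ring
  calc _ = |1 / Real.Gamma (α + β) *
          ((α + β - 1) * (A₁ - A₁') + c₁ * (A₂ - A₂') + (α + β - 1) * c₂ * (A₃ - A₃'))
        + γ / Real.Gamma α * (-(B₁ - B₁') + c₁' * (B₂ - B₂') + c₂' * (B₃ - B₃'))| := by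
        congr 1; ring
    _ ≤ 1 / Real.Gamma (α + β) * (36 * w * M / (α + β))
        + |γ| / Real.Gamma α * (9 * M / α) := by
        refine (abs_add_le _ _).trans (add_le_add ?_ ?_)
        · rw [abs_mul, abs_of_pos (by positivity : 0 < 1 / Real.Gamma (α + β))]
          gcongr
        · rw [abs_mul, abs_div, abs_of_pos hΓα]
          gcongr
    _ = _ := by field_simp

/-- The continuous extension of `v` to `ℝ`, constant outside `[0,1]`. -/
noncomputable def ext (v : C(Icc (0:ℝ) 1, ℝ)) : ℝ → ℝ := IccExtend zero_le_one v

lemma ext_continuous (v : C(Icc (0:ℝ) 1, ℝ)) : Continuous (ext v) := v.continuous.Icc_extend'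

lemma ext_of_mem (v : C(Icc (0:ℝ) 1, ℝ)) {t : ℝ} (ht : t ∈ Icc (0:ℝ) 1) : ext v t = v ⟨t, ht⟩ :=
  IccExtend_of_mem _ _ ht

/-- The nonlinearity `s ↦ f(s, x(s), x'(s))` along the primitive `x` of `v`, with `s` clamped to
`[0,1]` so that it is continuous on all of `ℝ`. -/
noncomputable def nonlin (f : ℝ → ℝ → ℝ → ℝ) (v : C(Icc (0:ℝ) 1, ℝ)) (s : ℝ) : ℝ :=
  f (projIcc 0 1 zero_le_one s) (prim (ext v) s) (ext v s)

lemma nonlin_of_mem (f : ℝ → ℝ → ℝ → ℝ) (v : C(Icc (0:ℝ) 1, ℝ)) {s : ℝ}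
    (hs : s ∈ Icc (0:ℝ) 1) : nonlin f v s = f s (prim (ext v) s) (ext v s) := by
  rw [nonlin, projIcc_of_mem _ hs]

lemma nonlin_continuous {f : ℝ → ℝ → ℝ → ℝ}
    (hf : ContinuousOn (fun p : ℝ × ℝ × ℝ => f p.1 p.2.1 p.2.2)
      (Set.Icc 0 1 ×ˢ (Set.univ : Set (ℝ × ℝ)))) (v : C(Icc (0:ℝ) 1, ℝ)) :
    Continuous (nonlin f v) := by
  have h1 := ext_continuous v
  have h2 := prim_continuous h1
  have h3 : Continuous (fun s : ℝ => ((projIcc 0 1 zero_le_one s : Icc (0:ℝ) 1) : ℝ)) :=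
    continuous_subtype_val.comp continuous_projIcc
  exact hf.comp_continuous (f := fun s : ℝ =>
    (((projIcc 0 1 zero_le_one s : Icc (0:ℝ) 1) : ℝ), prim (ext v) s, ext v s))
    (by fun_prop) fun s => ⟨(projIcc 0 1 zero_le_one s).2, mem_univ _⟩

lemma ext_sub_bound (v₁ v₂ : C(Icc (0:ℝ) 1, ℝ)) {s : ℝ} (hs : s ∈ Icc (0:ℝ) 1) :
    |ext v₁ s - ext v₂ s| ≤ dist v₁ v₂ := by
  rw [ext_of_mem _ hs, ext_of_mem _ hs, ← Real.dist_eq]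
  exact ContinuousMap.dist_apply_le_dist _

lemma prim_sub_bound (v₁ v₂ : C(Icc (0:ℝ) 1, ℝ)) {s : ℝ} (hs : s ∈ Icc (0:ℝ) 1) :
    |prim (ext v₁) s - prim (ext v₂) s| ≤ dist v₁ v₂ := by
  rw [prim, prim, ← intervalIntegral.integral_sub ((ext_continuous v₁).intervalIntegrable _ _)
    ((ext_continuous v₂).intervalIntegrable _ _)]
  refine (intervalIntegral.norm_integral_le_of_norm_le_const (E := ℝ) (C := dist v₁ v₂)
    fun u hu => ?_).trans ?_
  · rw [uIoc_of_le hs.1] at hu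
    exact ext_sub_bound v₁ v₂ ⟨hu.1.le, hu.2.trans hs.2⟩
  · rw [sub_zero, abs_of_nonneg hs.1]
    exact mul_le_of_le_one_right dist_nonneg hs.2

theorem langevin_uniqueness (α β γ : ℝ) (hα0 : 0 < α) (hα1 : α ≤ 1)
    (hβ2 : 2 < β) (hβ3 : β ≤ 3) (f : ℝ → ℝ → ℝ → ℝ)
    (hf : ContinuousOn (fun p : ℝ × ℝ × ℝ => f p.1 p.2.1 p.2.2)
      (Set.Icc 0 1 ×ˢ (Set.univ : Set (ℝ × ℝ))))
    (w : ℝ) (hw : 0 < w)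
    (hlip : ∀ t ∈ Set.Icc (0:ℝ) 1, ∀ x y u v : ℝ,
      |f t x y - f t u v| ≤ w * (|x - u| + |y - v|))
    (ψ : ℝ)
    (hψ : ψ = (14 * w / Real.Gamma (α + β + 1) + 8 * |γ| / Real.Gamma (α + 1))
      + (36 * w / Real.Gamma (α + β + 1) + 18 * |γ| / Real.Gamma (α + 1)))
    (hψ1 : ψ < 1) :
    ∃ x x' : ℝ → ℝ,
      ((∀ t ∈ Set.Icc (0:ℝ) 1, HasDerivWithinAt x (x' t) (Set.Icc (0:ℝ) 1) t) ∧
        ContinuousOn x' (Set.Icc 0 1) ∧ x 0 = 0 ∧ x 1 = 0 ∧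
        ∀ t ∈ Set.Icc (0:ℝ) 1,
          x t = (∫ s in (0:ℝ)..1, GreenG α β t s * f s (x s) (x' s))
              + ∫ s in (0:ℝ)..1, GreenH α γ t s * x s) ∧
      ∀ y y' : ℝ → ℝ,
        ((∀ t ∈ Set.Icc (0:ℝ) 1, HasDerivWithinAt y (y' t) (Set.Icc (0:ℝ) 1) t) ∧
          ContinuousOn y' (Set.Icc 0 1) ∧ y 0 = 0 ∧ y 1 = 0 ∧
          ∀ t ∈ Set.Icc (0:ℝ) 1,
            y t = (∫ s in (0:ℝ)..1, GreenG α β t s * f s (y s) (y' s))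
                + ∫ s in (0:ℝ)..1, GreenH α γ t s * y s) →
        Set.EqOn x y (Set.Icc (0:ℝ) 1) := by
  have hΓp := Real.Gamma_pos_of_pos (show 0 < α + β + 1 by linarith)
  have hΓα := Real.Gamma_pos_of_pos (show 0 < α + 1 by linarith)
  have hψ0 : 0 ≤ ψ := by rw [hψ]; positivity
  have hcF := nonlin_continuous hf
  -- The fixed-point map acts on derivatives: `Φ v` is the derivative of the integral operator
  -- applied to the primitive of `v`.
  let Φ : C(Icc (0:ℝ) 1, ℝ) → C(Icc (0:ℝ) 1, ℝ) := fun v =>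
    ⟨fun t => opD α β γ (nonlin f v) (ext v) t, continuousOn_iff_continuous_domRestrict.1
      (opD_continuousOn hα0 hβ2 (hcF v) (ext_continuous v))⟩
  have hΦ : ContractingWith ⟨ψ, hψ0⟩ Φ := by
    refine ⟨by exact_mod_cast hψ1, LipschitzWith.of_dist_le_mul fun v₁ v₂ => ?_⟩
    refine (ContinuousMap.dist_le (by positivity)).2 fun t => ?_
    rw [Real.dist_eq]
    refine (opD_sub_bound hα0 hα1 hβ2 hβ3 hw (hcF v₁) (hcF v₂) (ext_continuous v₁)
      (ext_continuous v₂) (M := dist v₁ v₂) ?_ (fun s hs => ext_sub_bound v₁ v₂ hs)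
      (fun s hs => prim_sub_bound v₁ v₂ hs) t.2).trans ?_
    · intro s hs
      rw [nonlin_of_mem _ _ hs, nonlin_of_mem _ _ hs]
      refine (hlip s hs _ _ _ _).trans ?_
      have h1 := prim_sub_bound v₁ v₂ hs
      have h2 := ext_sub_bound v₁ v₂ hs
      calc _ ≤ w * (dist v₁ v₂ + dist v₁ v₂) := by gcongr
        _ = _ := by ring
    · refine mul_le_mul_of_nonneg_right ?_ dist_nonneg
      change _ ≤ ψ
      have e1 : 0 ≤ w / Real.Gamma (α + β + 1) := by positivity
      have e2 : 0 ≤ |γ| / Real.Gamma (α + 1) := by positivity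
      rw [hψ]
      simp only [mul_div_assoc]
      linarith
  obtain ⟨v, hv⟩ : ∃ v, Φ v = v := ⟨_, hΦ.fixedPoint_isFixedPt⟩
  have hvD : ∀ t ∈ Icc (0:ℝ) 1, ext v t = opD α β γ (nonlin f v) (ext v) t := by
    intro t ht
    rw [ext_of_mem v ht]
    exact (DFunLike.congr_fun hv ⟨t, ht⟩).symm
  have hprim : ∀ t ∈ Icc (0:ℝ) 1,
      prim (ext v) t = opS α β γ (nonlin f v) (prim (ext v)) (ext v) t := by
    intro t ht
    have h := integral_eq_sub_of_hasDerivAt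
      (f := opS α β γ (nonlin f v) (prim (ext v)) (ext v)) (f' := ext v) (a := 0) (b := t)
      (fun s hs => by
        rw [uIcc_of_le ht.1] at hs
        have hs' : s ∈ Icc (0:ℝ) 1 := ⟨hs.1, hs.2.trans ht.2⟩
        rw [hvD s hs']
        exact opS_hasDerivAt hα0 hβ2 (hcF v) (ext_continuous v) hs'.2)
      ((ext_continuous v).intervalIntegrable _ _)
    rw [opS_zero hα0, sub_zero] at h
    exact h
  have h1 : prim (ext v) 1 = 0 := by rw [hprim 1 (by norm_num), opS_one]
  -- On `[0,1]` the integrands with `f` and with its clamped version agree.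
  have hcongr : ∀ (u : C(Icc (0:ℝ) 1, ℝ)) (t : ℝ),
      ∫ s in (0:ℝ)..1, GreenG α β t s * f s (prim (ext u) s) (ext u s)
        = ∫ s in (0:ℝ)..1, GreenG α β t s * nonlin f u s := by
    intro u t
    refine intervalIntegral.integral_congr fun s hs => ?_
    rw [uIcc_of_le zero_le_one] at hs
    simp only [nonlin_of_mem f u hs]
  refine ⟨prim (ext v), ext v, ⟨fun t _ => (prim_hasDerivAt (ext_continuous v) t).hasDerivWithinAt,
    (ext_continuous v).continuousOn, prim_zero _, h1, fun t ht => ?_⟩, ?_⟩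
  · rw [hcongr, green_eq_opS hα0 hβ2 γ (hcF v) (ext_continuous v) h1 ht]
    exact hprim t ht
  · rintro y y' ⟨hy, hy', hy0, hy1, hyeq⟩
    let u : C(Icc (0:ℝ) 1, ℝ) := ⟨_, continuousOn_iff_continuous_domRestrict.1 hy'⟩
    have hu : ∀ t ∈ Icc (0:ℝ) 1, ext u t = y' t := fun t ht => ext_of_mem u ht
    have hyu : ∀ t ∈ Icc (0:ℝ) 1, y t = prim (ext u) t := by
      intro t ht
      have h := integral_eq_sub_of_hasDerivAt_of_le ht.1 (f := y) (f' := ext u)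
        (fun s hs => ((hy s ⟨hs.1, hs.2.trans ht.2⟩).continuousWithinAt).mono
          (Icc_subset_Icc_right ht.2))
        (fun s hs => by
          have hs' : s ∈ Ioo (0:ℝ) 1 := ⟨hs.1, hs.2.trans_le ht.2⟩
          rw [hu s (Ioo_subset_Icc_self hs')]
          exact (hy s (Ioo_subset_Icc_self hs')).hasDerivAt (Icc_mem_nhds hs'.1 hs'.2))
        ((ext_continuous u).intervalIntegrable _ _)
      rw [hy0, sub_zero] at h
      exact h.symm
    have hu1 : prim (ext u) 1 = 0 := by rw [← hyu 1 (by norm_num), hy1]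
    have hyS : ∀ t ∈ Icc (0:ℝ) 1,
        y t = opS α β γ (nonlin f u) (prim (ext u)) (ext u) t := by
      intro t ht
      rw [hyeq t ht, ← green_eq_opS hα0 hβ2 γ (hcF u) (ext_continuous u) hu1 ht, ← hcongr]
      congr 1
      · refine intervalIntegral.integral_congr fun s hs => ?_
        rw [uIcc_of_le zero_le_one] at hs
        simp only [hyu s hs, hu s hs]
      · refine intervalIntegral.integral_congr fun s hs => ?_
        rw [uIcc_of_le zero_le_one] at hs
        simp only [hyu s hs]
    have hfix : Φ u = u := by
      ext ⟨t, ht⟩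
      have d1 := (opS_hasDerivAt (γ := γ) hα0 hβ2 (hcF u) (ext_continuous u)
        ht.2).hasDerivWithinAt (s := Icc (0:ℝ) 1)
      have d2 := d1.congr hyS (hyS t ht)
      exact (uniqueDiffOn_Icc_zero_one t ht).eq_deriv _ d2 (hy t ht)
    have huv : v = u := hΦ.fixedPoint_unique' hv hfix
    intro t ht
    rw [hyu t ht, huv]
end

section
/- Assume f satisfies the growth condition (A₃). Let r > 0 and let x : [0,1] → ℝ be continuously differentiable with x(0) = x(1) = 0 and ‖x‖ ≤ r. Then for every t ∈ [0,1], |∫₀¹ G(t,s)·f(s, x(s), x'(s)) ds + ∫₀¹ H(t,s)·x(s) ds| ≤ (‖σ‖ + a₁·r^{τ₁} + a₂·r^{τ₂})·K₁ + r·L₁. -/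
/-!
The two integrals are estimated separately, by integrating explicit pointwise majorants of the
kernels; `trunc_power` supplies the integrals of the truncated powers that occur in them.

For `0 ≤ t ≤ 1` the polynomial coefficients satisfy `|(α+1)t^{α+2} - (α+2)t^{α+1}| ≤ α+2` and
`0 ≤ t^{α+1} - t^{α+2} ≤ 1`, and the growth condition bounds `|f(s, x(s), x'(s))|` by
`M = ‖σ‖ + a₁ r^{τ₁} + a₂ r^{τ₂}`. This gives `M (2α+β+3)/Γ(α+β+1)` for the `G`-integral, which is
at most `M K₁`.

The kernel `H` contains `(1-s)^{α-2}`, which is not integrable near `s = 1`. There the boundary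
condition `x(1) = 0` and the mean value inequality give `|x(s)| ≤ r (1-s)`, so the singular term is
dominated by `r (1-s)^{α-1}`. This gives `4|γ|r/Γ(α+1)` for the `H`-integral, which is at most `r L₁`.
-/

open Set intervalIntegral

/-- The integral of the Riemann–Liouville kernel `(t-s)^q` cut off at `s = t`; integrability
is recorded as well since the exponent `q` may be negative. -/
lemma trunc_power {q t : ℝ} (hq : -1 < q) (ht0 : 0 ≤ t) (ht1 : t ≤ 1) :
    IntervalIntegrable (fun s : ℝ => if s ≤ t then (t - s) ^ q else 0) MeasureTheory.volume 0 1 ∧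
      ∫ s in (0:ℝ)..1, (if s ≤ t then (t - s) ^ q else 0) = t ^ (q + 1) / (q + 1) := by
  have hE1 : EqOn (fun s : ℝ => (t - s) ^ q)
      (fun s : ℝ => if s ≤ t then (t - s) ^ q else 0) (Set.uIoc 0 t) := by
    intro s hs
    rw [Set.uIoc_of_le ht0] at hs
    simp [hs.2]
  have hE2 : EqOn (fun _ : ℝ => (0:ℝ))
      (fun s : ℝ => if s ≤ t then (t - s) ^ q else 0) (Set.uIoc t 1) := by
    intro s hs
    rw [Set.uIoc_of_le ht1] at hs
    simp [not_le.mpr hs.1]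
  have hI0 : IntervalIntegrable (fun s : ℝ => (t - s) ^ q) MeasureTheory.volume 0 t := by
    have h := (intervalIntegrable_rpow' (a := 0) (b := t) hq).comp_sub_left t
    simpa using h.symm
  have hI1 := hI0.congr hE1
  have hI2 : IntervalIntegrable (fun s : ℝ => if s ≤ t then (t - s) ^ q else 0)
      MeasureTheory.volume t 1 :=
    (intervalIntegrable_const (c := (0:ℝ))).congr hE2
  refine ⟨hI1.trans hI2, ?_⟩
  rw [← integral_add_adjacent_intervals hI1 hI2,
    ← integral_congr_ae (Filter.Eventually.of_forall fun s hs => hE1 hs),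
    ← integral_congr_ae (Filter.Eventually.of_forall fun s hs => hE2 hs),
    integral_comp_sub_left (fun s : ℝ => s ^ q) t, integral_rpow (Or.inl hq)]
  have : q + 1 ≠ 0 := by linarith
  simp [Real.zero_rpow this]

/-- The integral over `[0,1]` of the shape of majorant that serves for both kernels. -/
lemma majorant {p q t A B C : ℝ} (hp : -1 < p) (hq : -1 < q) (ht0 : 0 ≤ t) (ht1 : t ≤ 1) :
    IntervalIntegrable (fun s : ℝ => C * ((if s ≤ t then (t - s) ^ p else 0)
        + A * (1 - s) ^ p + B * (1 - s) ^ q)) MeasureTheory.volume 0 1 ∧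
      ∫ s in (0:ℝ)..1, C * ((if s ≤ t then (t - s) ^ p else 0)
        + A * (1 - s) ^ p + B * (1 - s) ^ q)
        = C * (t ^ (p + 1) / (p + 1) + A / (p + 1) + B / (q + 1)) := by
  have h1 := trunc_power hp ht0 ht1
  have key : ∀ u : ℝ, -1 < u →
      IntervalIntegrable (fun s : ℝ => (1 - s) ^ u) MeasureTheory.volume 0 1 ∧
      ∫ s in (0:ℝ)..1, (1 - s) ^ u = 1 / (u + 1) := by
    intro u hu
    have h := trunc_power hu zero_le_one le_rfl
    have hE : EqOn (fun s : ℝ => if s ≤ 1 then (1 - s) ^ u else 0)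
        (fun s : ℝ => (1 - s) ^ u) (Set.uIoc 0 1) := by
      intro s hs
      rw [Set.uIoc_of_le zero_le_one] at hs
      simp [hs.2]
    refine ⟨h.1.congr hE, ?_⟩
    rw [← integral_congr_ae (Filter.Eventually.of_forall fun s hs => hE hs), h.2, Real.one_rpow]
  have h2 := key p hp
  have h3 := key q hq
  refine ⟨((h1.1.add (h2.1.const_mul A)).add (h3.1.const_mul B)).const_mul C, ?_⟩
  rw [integral_const_mul, integral_add (h1.1.add (h2.1.const_mul A)) (h3.1.const_mul B),
    integral_add h1.1 (h2.1.const_mul A), integral_const_mul, integral_const_mul, h1.2, h2.2, h3.2]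
  ring

lemma greenG_bound {α β t s : ℝ} (hα0 : 0 < α) (hβ2 : 2 < β)
    (ht : t ∈ Set.Icc (0:ℝ) 1) (hs1 : s ≤ 1) :
    |GreenG α β t s| ≤ 1 / Real.Gamma (α + β) * ((if s ≤ t then (t - s) ^ (α + β - 1) else 0)
        + (α + 2) * (1 - s) ^ (α + β - 1) + (α + β - 1) * (1 - s) ^ (α + β - 2)) := by
  obtain ⟨ht0, ht1⟩ := ht
  have hΓ : 0 < Real.Gamma (α + β) := Real.Gamma_pos_of_pos (by linarith)
  have h1s : 0 ≤ 1 - s := by linarith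
  have hu0 : 0 ≤ t ^ (α + 1) := by positivity
  have hu1 : t ^ (α + 1) ≤ 1 := Real.rpow_le_one ht0 ht1 (by linarith)
  have hv : t ^ (α + 2) = t ^ (α + 1) * t := by
    rw [← Real.rpow_add_one' ht0 (by linarith)]; ring_nf
  have hI : 0 ≤ (if s ≤ t then (t - s) ^ (α + β - 1) else 0) := by
    split_ifs with h
    · exact Real.rpow_nonneg (by linarith) _
    · exact le_rfl
  have hP : 0 ≤ (1 - s) ^ (α + β - 1) := by positivity
  have hQ : 0 ≤ (1 - s) ^ (α + β - 2) := by positivity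
  have hc1 : |(α + 1) * t ^ (α + 2) - (α + 2) * t ^ (α + 1)| ≤ α + 2 := by
    rw [hv, abs_le]
    constructor
    · nlinarith [mul_nonneg hu0 ht0]
    · nlinarith [mul_nonneg hu0 (sub_nonneg.2 ht1)]
  have hc2 : |t ^ (α + 1) - t ^ (α + 2)| ≤ 1 := by
    rw [hv, abs_le]
    constructor <;> nlinarith [mul_nonneg hu0 ht0, mul_nonneg hu0 (sub_nonneg.2 ht1)]
  unfold GreenG
  rw [abs_mul, abs_of_pos (by positivity : 0 < 1 / Real.Gamma (α + β))]
  refine mul_le_mul_of_nonneg_left ?_ (by positivity)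
  refine (abs_add_three _ _ _).trans ?_
  rw [abs_of_nonneg hI, abs_mul, abs_mul, abs_mul, abs_of_nonneg hP, abs_of_nonneg hQ,
    abs_of_pos (by linarith : 0 < α + β - 1)]
  gcongr
  exact mul_le_of_le_one_right (by linarith) hc2

/-- The factor `1 - s` coming from `y` absorbs one power of the singularity of `GreenH` at
`s = 1`. -/
lemma greenH_bound {α γ t s y r : ℝ} (hα0 : 0 < α) (hα1 : α ≤ 1)
    (ht : t ∈ Set.Icc (0:ℝ) 1) (hs1 : s ≤ 1) (hr : 0 ≤ r) (hy : |y| ≤ r)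
    (hys : |y| ≤ r * (1 - s)) :
    |GreenH α γ t s * y| ≤ |γ| / Real.Gamma α * r *
      ((if s ≤ t then (t - s) ^ (α - 1) else 0)
        + (α + 2) * (1 - s) ^ (α - 1) + (1 - α) * (1 - s) ^ (α - 1)) := by
  obtain ⟨ht0, ht1⟩ := ht
  have hΓ : 0 < Real.Gamma α := Real.Gamma_pos_of_pos hα0
  have h1s : 0 ≤ 1 - s := by linarith
  have hu0 : 0 ≤ t ^ (α + 1) := by positivity
  have hu1 : t ^ (α + 1) ≤ 1 := Real.rpow_le_one ht0 ht1 (by linarith)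
  have hv : t ^ (α + 2) = t ^ (α + 1) * t := by
    rw [← Real.rpow_add_one' ht0 (by linarith)]; ring_nf
  have hI : 0 ≤ (if s ≤ t then (t - s) ^ (α - 1) else 0) := by
    split_ifs with h
    · exact Real.rpow_nonneg (by linarith) _
    · exact le_rfl
  have hP : 0 ≤ (1 - s) ^ (α - 1) := by positivity
  have hQ : 0 ≤ (1 - s) ^ (α - 2) := by positivity
  have hc1 : |(α + 2) * t ^ (α + 1) - (α + 1) * t ^ (α + 2)| ≤ α + 2 := by
    rw [hv, abs_le]
    constructor
    · nlinarith [mul_nonneg hu0 (sub_nonneg.2 ht1)]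
    · nlinarith [mul_nonneg hu0 ht0]
  have hc2 : |t ^ (α + 2) - t ^ (α + 1)| ≤ 1 := by
    rw [hv, abs_le]
    constructor <;> nlinarith [mul_nonneg hu0 ht0, mul_nonneg hu0 (sub_nonneg.2 ht1)]
  have hQy : (1 - s) ^ (α - 2) * |y| ≤ r * (1 - s) ^ (α - 1) := by
    rcases h1s.eq_or_lt with h | h
    · have hy0 : |y| ≤ 0 := by rw [← h] at hys; simpa using hys
      have : |y| = 0 := le_antisymm hy0 (abs_nonneg y)
      rw [this, mul_zero]; positivity
    · calc (1 - s) ^ (α - 2) * |y| ≤ (1 - s) ^ (α - 2) * (r * (1 - s)) := by gcongr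
        _ = r * ((1 - s) ^ (α - 2) * (1 - s)) := by ring
        _ = r * (1 - s) ^ (α - 1) := by
          rw [← Real.rpow_add_one h.ne']; ring_nf
  unfold GreenH
  rw [mul_assoc, abs_mul, abs_div, abs_of_pos hΓ, mul_assoc (|γ| / Real.Gamma α)]
  refine mul_le_mul_of_nonneg_left ?_ (by positivity)
  rw [abs_mul]
  refine (mul_le_mul_of_nonneg_right (abs_add_three _ _ _) (abs_nonneg y)).trans ?_
  rw [abs_neg, abs_of_nonneg hI, abs_mul, abs_mul, abs_mul, abs_of_nonneg hP, abs_of_nonneg hQ,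
    abs_of_nonpos (by linarith : α - 1 ≤ 0)]
  set I := (if s ≤ t then (t - s) ^ (α - 1) else 0)
  have e1 : I * |y| ≤ I * r := by gcongr
  have e2 : |(α + 2) * t ^ (α + 1) - (α + 1) * t ^ (α + 2)| * (1 - s) ^ (α - 1) * |y|
      ≤ (α + 2) * (1 - s) ^ (α - 1) * r := by gcongr
  have e3 : (1 - α) * |t ^ (α + 2) - t ^ (α + 1)| * ((1 - s) ^ (α - 2) * |y|)
      ≤ (1 - α) * 1 * (r * (1 - s) ^ (α - 1)) := by
    have : 0 ≤ 1 - α := by linarith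
    gcongr
  nlinarith [e1, e2, e3]

theorem sup_norm_estimate (α β γ : ℝ) (hα0 : 0 < α) (hα1 : α ≤ 1)
    (hβ2 : 2 < β) (hβ3 : β ≤ 3) (f : ℝ → ℝ → ℝ → ℝ)
    (hf : ContinuousOn (fun p : ℝ × ℝ × ℝ => f p.1 p.2.1 p.2.2)
      (Set.Icc 0 1 ×ˢ (Set.univ : Set (ℝ × ℝ))))
    (σ : ℝ → ℝ) (hσc : ContinuousOn σ (Set.Icc 0 1))
    (hσ0 : ∀ t ∈ Set.Icc (0:ℝ) 1, 0 ≤ σ t)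
    (a₁ a₂ : ℝ) (ha₁ : 0 ≤ a₁) (ha₂ : 0 ≤ a₂)
    (τ₁ τ₂ : ℝ) (hτ₁ : τ₁ ∈ Set.Ioo (0:ℝ) 1) (hτ₂ : τ₂ ∈ Set.Ioo (0:ℝ) 1)
    (hgrowth : ∀ t ∈ Set.Icc (0:ℝ) 1, ∀ u v : ℝ,
      |f t u v| ≤ σ t + a₁ * |u| ^ τ₁ + a₂ * |v| ^ τ₂)
    (σnorm K₁ L₁ : ℝ)
    (hσnorm : σnorm = ⨆ t : Set.Icc (0:ℝ) 1, σ t)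
    (hK₁ : K₁ = (4 * (α + 1) + 2 * β) / Real.Gamma (α + β + 1))
    (hL₁ : L₁ = 4 * |γ| * (α + 1) / Real.Gamma (α + 1))
    (r : ℝ) (hr : 0 < r) (x x' : ℝ → ℝ)
    (hx : ∀ t ∈ Set.Icc (0:ℝ) 1, HasDerivWithinAt x (x' t) (Set.Icc (0:ℝ) 1) t)
    (hx'c : ContinuousOn x' (Set.Icc 0 1)) (hx0 : x 0 = 0) (hx1 : x 1 = 0)
    (hxr : (⨆ t : Set.Icc (0:ℝ) 1, |x t|) + (⨆ t : Set.Icc (0:ℝ) 1, |x' t|) ≤ r) :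
    ∀ t ∈ Set.Icc (0:ℝ) 1,
      |(∫ s in (0:ℝ)..1, GreenG α β t s * f s (x s) (x' s))
          + ∫ s in (0:ℝ)..1, GreenH α γ t s * x s|
        ≤ (σnorm + a₁ * r ^ τ₁ + a₂ * r ^ τ₂) * K₁ + r * L₁ := by
  intro t ht
  have le_sup : ∀ g : ℝ → ℝ, ContinuousOn g (Set.Icc 0 1) → ∀ s ∈ Set.Icc (0:ℝ) 1,
      g s ≤ ⨆ t : Set.Icc (0:ℝ) 1, g t := by
    intro g hg s hs
    have hb : BddAbove (Set.range fun t : Set.Icc (0:ℝ) 1 => g t) := by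
      have := isCompact_Icc.bddAbove_image hg
      rwa [Set.image_eq_range] at this
    exact le_ciSup hb ⟨s, hs⟩
  have hxc : ContinuousOn x (Set.Icc 0 1) := fun s hs => (hx s hs).continuousWithinAt
  have h0mem : (0:ℝ) ∈ Set.Icc (0:ℝ) 1 := ⟨le_rfl, zero_le_one⟩
  have h1mem : (1:ℝ) ∈ Set.Icc (0:ℝ) 1 := ⟨zero_le_one, le_rfl⟩
  have hsx := le_sup (fun s => |x s|) hxc.abs
  have hsx' := le_sup (fun s => |x' s|) hx'c.abs
  have hxb : ∀ s ∈ Set.Icc (0:ℝ) 1, |x s| ≤ r := fun s hs => by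
    linarith [hsx s hs, hsx' s hs, abs_nonneg (x' s)]
  have hx'b : ∀ s ∈ Set.Icc (0:ℝ) 1, |x' s| ≤ r := fun s hs => by
    linarith [hsx s hs, hsx' s hs, abs_nonneg (x s)]
  have hxs : ∀ s ∈ Set.Icc (0:ℝ) 1, |x s| ≤ r * (1 - s) := by
    intro s hs
    have h := (convex_Icc (0:ℝ) 1).norm_image_sub_le_of_norm_hasDerivWithin_le hx hx'b hs h1mem
    rwa [hx1, zero_sub, norm_neg, Real.norm_eq_abs, Real.norm_eq_abs,
      abs_of_nonneg (by linarith [hs.2] : 0 ≤ 1 - s)] at h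
  set M := σnorm + a₁ * r ^ τ₁ + a₂ * r ^ τ₂ with hM
  have hfb : ∀ s ∈ Set.Icc (0:ℝ) 1, |f s (x s) (x' s)| ≤ M := by
    intro s hs
    have h1 : σ s ≤ σnorm := hσnorm ▸ le_sup σ hσc s hs
    have h2 := Real.rpow_le_rpow (abs_nonneg _) (hxb s hs) hτ₁.1.le
    have h3 := Real.rpow_le_rpow (abs_nonneg _) (hx'b s hs) hτ₂.1.le
    refine (hgrowth s hs _ _).trans ?_
    rw [hM]
    gcongr
  have hM0 : 0 ≤ M := (abs_nonneg _).trans (hfb 0 h0mem)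
  have hab : 0 < α + β := by linarith
  have hΓ : 0 < Real.Gamma (α + β) := Real.Gamma_pos_of_pos hab
  have hΓα : 0 < Real.Gamma α := Real.Gamma_pos_of_pos hα0
  have hG : |∫ s in (0:ℝ)..1, GreenG α β t s * f s (x s) (x' s)| ≤ M * K₁ := by
    obtain ⟨hint, hval⟩ := majorant (p := α + β - 1) (q := α + β - 2) (A := α + 2)
      (B := α + β - 1) (C := 1 / Real.Gamma (α + β) * M) (by linarith) (by linarith) ht.1 ht.2
    have h := norm_integral_le_of_norm_le zero_le_one (f := fun s => GreenG α β t s * f s (x s) (x' s))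
      (Filter.Eventually.of_forall fun s hs => ?_) hint
    · rw [hval, Real.norm_eq_abs] at h
      refine h.trans ?_
      have hpow : t ^ (α + β) ≤ 1 := Real.rpow_le_one ht.1 ht.2 hab.le
      have hne : α + β - 1 ≠ 0 := by linarith
      rw [hK₁, Real.Gamma_add_one hab.ne', show α + β - 1 + 1 = α + β by ring,
        show α + β - 2 + 1 = α + β - 1 by ring, div_self hne]
      have e : 1 / Real.Gamma (α + β) * M * (t ^ (α + β) / (α + β) + (α + 2) / (α + β) + 1)
          = M * ((t ^ (α + β) + (α + 2) + (α + β)) / ((α + β) * Real.Gamma (α + β))) := by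
        field_simp
      rw [e]
      refine mul_le_mul_of_nonneg_left ?_ hM0
      refine div_le_div_of_nonneg_right ?_ (by positivity)
      linarith
    · have hs' : s ∈ Set.Icc (0:ℝ) 1 := ⟨hs.1.le, hs.2⟩
      have hb := greenG_bound hα0 hβ2 ht hs.2
      rw [Real.norm_eq_abs, abs_mul, mul_right_comm]
      exact mul_le_mul hb (hfb s hs') (abs_nonneg _) ((abs_nonneg _).trans hb)
  have hH : |∫ s in (0:ℝ)..1, GreenH α γ t s * x s| ≤ r * L₁ := by
    obtain ⟨hint, hval⟩ := majorant (p := α - 1) (q := α - 1) (A := α + 2)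
      (B := 1 - α) (C := |γ| / Real.Gamma α * r) (by linarith) (by linarith) ht.1 ht.2
    have h := norm_integral_le_of_norm_le zero_le_one (f := fun s => GreenH α γ t s * x s)
      (Filter.Eventually.of_forall fun s hs => ?_) hint
    · rw [hval, Real.norm_eq_abs] at h
      refine h.trans ?_
      have hpow : t ^ α ≤ 1 := Real.rpow_le_one ht.1 ht.2 hα0.le
      rw [hL₁, Real.Gamma_add_one hα0.ne', sub_add_cancel]
      have e : |γ| / Real.Gamma α * r * (t ^ α / α + (α + 2) / α + (1 - α) / α)
          = r * (|γ| * (t ^ α + 3) / (α * Real.Gamma α)) := by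
        field_simp
        ring
      rw [e]
      refine mul_le_mul_of_nonneg_left ?_ hr.le
      refine div_le_div_of_nonneg_right ?_ (by positivity)
      rw [mul_comm 4 |γ|, mul_assoc]
      refine mul_le_mul_of_nonneg_left ?_ (abs_nonneg γ)
      linarith
    · have hs' : s ∈ Set.Icc (0:ℝ) 1 := ⟨hs.1.le, hs.2⟩
      exact greenH_bound hα0 hα1 ht hs.2 hr.le (hxb s hs') (hxs s hs')
  exact (abs_add_le _ _).trans (add_le_add hG hH)
end
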